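/- arXiv:1006.0590 — 2 statements merged into one kernel-verified Lean document; each statement's English description precedes it below -/
import Mathlib

section
/- For all integers k ≥ 2, every (undirected) graph on n ≥ 11k − 3 vertices with minimum degree at least ⌈n/2⌉ + ⌊k/2⌋ − 1 is k-ordered Hamiltonian: for every sequence s₁, …, s_k of distinct vertices there is a Hamilton cycle which encounters s₁, …, s_k in this cyclic order. -/
open scoped Classical in
theorem List.countP_dropLast_add_countP_tail_le {α : Type*} {p q : α → Prop} {l : List α}
    (h : l.IsChain fun x y => ¬(p x ∧ q y)) :
    l.dropLast.countP (p ·) + l.tail.countP (q ·) ≤ l.length - 1 := by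
  induction l with
  | nil => simp
  | cons x t ih =>
    cases t with
    | nil => simp
    | cons y t =>
      rw [List.isChain_cons_cons] at h
      have := ih h.2
      have h1 := h.1
      simp only [List.dropLast_cons_cons, List.tail_cons, List.countP_cons, decide_eq_true_eq,
        List.length_cons, Nat.add_sub_cancel] at this ⊢
      by_cases hp : p x
      · rw [if_pos hp, if_neg fun hq => h1 ⟨hp, hq⟩]
        omega
      · rw [if_neg hp]
        split_ifs <;> omega

open scoped Classical in
theorem List.countP_mul_le_of_gap {α : Type*} {p : α → Prop} {g : ℕ} (l : List α)
    (h : ∀ A x M y B, l = A ++ x :: (M ++ y :: B) → p x → p y → g ≤ M.length) :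
    l.countP (p ·) * (g + 1) ≤ l.length + g := by
  induction hn : l.length using Nat.strong_induction_on generalizing l with
  | _ n ih =>
    cases l with
    | nil => simp
    | cons x t =>
      rw [List.length_cons] at hn
      by_cases hx : p x
      · have h0 : (t.take g).countP (p ·) = 0 := by
          rw [List.countP_eq_zero]
          intro y hy hpy
          obtain ⟨M, B, e⟩ := List.append_of_mem hy
          have e' : t = M ++ y :: (B ++ t.drop g) := by
            conv_lhs => rw [← List.take_append_drop g t, e]
            simp
          have h1 := h [] x M y (B ++ t.drop g) (by rw [List.nil_append, ← e']) hx
            (by simpa using hpy)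
          have h2 := congrArg List.length e
          simp only [List.length_take, List.length_append, List.length_cons] at h2
          omega
        have h1 := ih (t.drop g).length (by simp; omega) (t.drop g) (fun A x' M y B e =>
          h (x :: t.take g ++ A) x' M y B (by simp [← e])) rfl
        have h2 : (x :: t).countP (p ·) = (t.drop g).countP (p ·) + 1 := by
          rw [List.countP_cons, if_pos (by simpa using hx)]
          conv_lhs => rw [← List.take_append_drop g t, List.countP_append, h0, zero_add]
        rw [h2, add_mul]
        rw [List.length_drop] at h1
        rcases le_total g t.length with h3 | h3
        · omega
        · rw [List.drop_eq_nil_of_le h3, List.countP_nil]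
          omega
      · have := ih t.length (by omega) t (fun A x' M y B e => h (x :: A) x' M y B (by simp [e])) rfl
        rw [List.countP_cons, if_neg (by simpa using hx), add_zero]
        omega

open scoped Classical in
theorem List.card_filter_eq_countP {α : Type*} {p : α → Prop} {H : Finset α} {l : List α}
    (hl : l.Nodup) (hm : ∀ x, x ∈ l ↔ x ∈ H) : (H.filter p).card = l.countP (p ·) := by
  rw [List.countP_eq_length_filter, ← List.toFinset_card_of_nodup (hl.filter _)]
  congr 1
  ext x
  simp [hm]

theorem List.Nodup.length_le_one_of_head?_of_getLast? {α : Type*} {l : List α} {a : α}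
    (hl : l.Nodup) (h : l.head? = some a) (h' : l.getLast? = some a) : l.length ≤ 1 := by
  obtain ⟨l, rfl⟩ := List.getLast?_eq_some_iff.1 h'
  cases l with
  | nil => simp
  | cons c l =>
    rw [List.cons_append, List.head?_cons, Option.some_inj] at h
    simp [h] at hl

namespace SimpleGraph

variable {V : Type*}

theorem isChain_adj_of_sup_edge {G : SimpleGraph V} {a b : V} {l : List V}
    (h : l.IsChain (G ⊔ edge a b).Adj) (hl : a ∉ l ∨ b ∉ l) : l.IsChain G.Adj := by
  refine List.IsChain.imp_of_mem_imp (fun x y hx hy hxy => ?_) h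
  simp only [sup_adj, edge_adj] at hxy
  rcases hxy with hxy | ⟨⟨rfl, rfl⟩ | ⟨rfl, rfl⟩, -⟩
  · exact hxy
  · tauto
  · tauto

theorem exists_split_of_not_isChain {G : SimpleGraph V} {x y : V} {l : List V}
    (hl : l.Nodup) (h : l.IsChain (G ⊔ edge x y).Adj) (h' : ¬ l.IsChain G.Adj) :
    ∃ L₁ a b L₂, l = L₁ ++ a :: b :: L₂ ∧ edge x y = edge a b ∧ ¬ G.Adj a b ∧
      (L₁ ++ [a]).IsChain G.Adj ∧ (b :: L₂).IsChain G.Adj := by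
  rw [List.isChain_iff_forall_rel_of_append_cons_cons] at h'
  push Not at h'
  obtain ⟨a, b, L₁, L₂, e, hab⟩ := h'
  have e' : l = (L₁ ++ [a]) ++ (b :: L₂) := by simp [e]
  have hab' : (G ⊔ edge x y).Adj a b :=
    List.isChain_iff_forall_rel_of_append_cons_cons.1 h e
  have hxy : edge x y = edge a b := by
    simp only [sup_adj, hab, edge_adj, false_or] at hab'
    rcases hab'.1 with ⟨rfl, rfl⟩ | ⟨rfl, rfl⟩
    · rfl
    · exact edge_comm _ _
  rw [hxy] at h
  rw [e'] at h hl
  refine ⟨L₁, a, b, L₂, e, hxy, hab, isChain_adj_of_sup_edge h.left_of_append (.inr fun hb => ?_),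
    isChain_adj_of_sup_edge h.right_of_append (.inl fun ha => ?_)⟩
  · exact (List.disjoint_of_nodup_append hl) hb (by simp)
  · exact (List.disjoint_of_nodup_append hl) (by simp) ha

open scoped Classical in
theorem countP_adj_add_countP_adj_le {G : SimpleGraph V} {a b : V} {L : List V}
    (h : L.IsChain fun p q => ¬(G.Adj a p ∧ G.Adj b q))
      (hab : L.getLast? = some a ∨ L.head? = some b) :
    L.countP (G.Adj a ·) + L.countP (G.Adj b ·) ≤ L.length := by
  have h1 := List.countP_dropLast_add_countP_tail_le h
  have hne : L ≠ [] := by rintro rfl; simp at hab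
  have hpos := List.length_pos_of_ne_nil hne
  have ha : L.countP (G.Adj a ·) = L.dropLast.countP (G.Adj a ·) +
      if G.Adj a (L.getLast hne) then 1 else 0 := by
    conv_lhs => rw [← List.dropLast_append_getLast hne]
    simp [List.countP_append]
  have hb : L.countP (G.Adj b ·) = L.tail.countP (G.Adj b ·) +
      if G.Adj b (L.head hne) then 1 else 0 := by
    conv_lhs => rw [← List.cons_head_tail hne, List.countP_cons]
    simp only [decide_eq_true_eq]
  rcases hab with hab | hab
  · rw [List.getLast?_eq_getLast_of_ne_nil hne, Option.some_inj] at hab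
    rw [hab, if_neg (G.irrefl)] at ha
    split_ifs at hb <;> omega
  · rw [List.head?_eq_some_head hne, Option.some_inj] at hab
    rw [hab, if_neg (G.irrefl)] at hb
    split_ifs at ha <;> omega

theorem exists_isChain_of_split {G : SimpleGraph V} {a b u v : V} {L₁ L₂ : List V}
    (h₁ : (L₁ ++ [a]).IsChain G.Adj) (h₂ : (b :: L₂).IsChain G.Adj)
    (hu : (L₁ ++ a :: b :: L₂).head? = some u) (hv : (L₁ ++ a :: b :: L₂).getLast? = some v)
    (h : ¬ ((L₁ ++ [a]).IsChain (fun p q => ¬(G.Adj a p ∧ G.Adj b q)) ∧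
      (b :: L₂).IsChain fun p q => ¬(G.Adj a p ∧ G.Adj b q))) :
    ∃ R : List V, R.Perm (L₁ ++ a :: b :: L₂) ∧ R.IsChain G.Adj ∧
      R.head? = some u ∧ R.getLast? = some v := by
  rw [not_and_or] at h
  rcases h with h | h
  · rw [List.isChain_iff_forall_rel_of_append_cons_cons] at h
    push Not at h
    obtain ⟨p, q, A, B, e, hp, hq⟩ := h
    have hlast : (q :: B).getLast? = some a := by
      have := congrArg List.getLast? e
      simpa [List.getLast?_append, List.getLast?_cons] using this.symm
    have e' : L₁ ++ a :: b :: L₂ = A ++ p :: q :: B ++ b :: L₂ := by simp [← e]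
    rw [e] at h₁
    rw [e'] at hu hv ⊢
    refine ⟨(A ++ [p]) ++ ((q :: B).reverse ++ b :: L₂), ?_, ?_, ?_, ?_⟩
    · rw [List.append_assoc, List.append_assoc, List.singleton_append, List.cons_append]
      exact ((List.reverse_perm (q :: B)).append_right _).cons p |>.append_left A
    · have hhead : ((q :: B).reverse ++ b :: L₂).head? = some a := by
        rw [List.head?_append, List.head?_reverse, hlast, Option.some_or]
      have h₁' : ((A ++ [p]) ++ (q :: B)).IsChain G.Adj := by simpa using h₁
      refine h₁'.left_of_append.append
        ((List.isChain_reverse.2 (h₁'.right_of_append.imp fun _ _ h => h.symm)).append h₂ ?_) ?_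
      · simpa using hq.symm
      · rw [hhead]
        simpa using hp.symm
    · cases A <;> simpa using hu
    · simpa [List.getLast?_append, List.getLast?_cons] using hv
  · rw [List.isChain_iff_forall_rel_of_append_cons_cons] at h
    push Not at h
    obtain ⟨p, q, A, B, e, hp, hq⟩ := h
    have hhead : (A ++ [p]).head? = some b := by
      have := congrArg List.head? e
      cases A <;> simpa using this.symm
    have e' : L₁ ++ a :: b :: L₂ = (L₁ ++ [a]) ++ (A ++ p :: q :: B) := by simp [← e]
    rw [e] at h₂
    rw [e'] at hu hv ⊢
    refine ⟨(L₁ ++ [a]) ++ ((A ++ [p]).reverse ++ q :: B), ?_, ?_, ?_, ?_⟩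
    · have e2 : A ++ p :: q :: B = (A ++ [p]) ++ q :: B := by simp
      rw [e2]
      exact ((List.reverse_perm (A ++ [p])).append_right _).append_left _
    · have hlast : (A ++ [p]).reverse.getLast? = some b := by
        rw [List.getLast?_reverse, hhead]
      have h₂' : ((A ++ [p]) ++ (q :: B)).IsChain G.Adj := by simpa using h₂
      refine h₁.append
        ((List.isChain_reverse.2 (h₂'.left_of_append.imp fun _ _ h => h.symm)).append
          h₂'.right_of_append ?_) ?_
      · rw [hlast]
        simpa using hq
      · simpa using hp
    · cases L₁ <;> simpa using hu
    · simpa [List.getLast?_append, List.getLast?_cons] using hv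

open scoped Classical in
theorem exists_spanning_isChain [Finite V] (G : SimpleGraph V) (H : Finset V) {u v : V}
    (hu : u ∈ H) (hv : v ∈ H) (huv : u ≠ v) (hH : ∀ x ∈ H, ∀ y ∈ H, x ≠ y → ¬ G.Adj x y →
      H.card + 1 ≤ (H.filter (G.Adj x)).card + (H.filter (G.Adj y)).card) :
    ∃ R : List V, R.Nodup ∧ (∀ x, x ∈ R ↔ x ∈ H) ∧ R.IsChain G.Adj ∧
      R.head? = some u ∧ R.getLast? = some v := by
  induction G using WellFoundedGT.induction with
  | ind G ih =>
  by_cases hc : ∃ x ∈ H, ∃ y ∈ H, x ≠ y ∧ ¬ G.Adj x y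
  · obtain ⟨x, hx, y, hy, hxy, hadj⟩ := hc
    have hlt : G < G ⊔ edge x y := by
      refine lt_of_le_of_ne le_sup_left fun h => hadj ?_
      rw [h]
      simp [edge_adj, hxy]
    obtain ⟨R, hnd, hmem, hch, hu', hv'⟩ := ih _ hlt fun z hz w hw hzw hn =>
      (hH z hz w hw hzw fun h => hn (.inl h)).trans <| by
        gcongr <;> exact .inl
    by_cases hG : R.IsChain G.Adj
    · exact ⟨R, hnd, hmem, hG, hu', hv'⟩
    obtain ⟨L₁, a, b, L₂, rfl, -, hab, h₁, h₂⟩ := exists_split_of_not_isChain hnd hch hG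
    by_cases h : ((L₁ ++ [a]).IsChain (fun p q => ¬(G.Adj a p ∧ G.Adj b q)) ∧
      (b :: L₂).IsChain fun p q => ¬(G.Adj a p ∧ G.Adj b q))
    · exfalso
      have c1 := countP_adj_add_countP_adj_le h.1 (by simp)
      have c2 := countP_adj_add_countP_adj_le h.2 (by simp)
      have hne : a ≠ b := by rintro rfl; simp [List.nodup_append] at hnd
      have := hH a ((hmem a).1 (by simp)) b ((hmem b).1 (by simp)) hne hab
      rw [List.card_filter_eq_countP hnd hmem, List.card_filter_eq_countP hnd hmem] at this
      have hcard : H.card = (L₁ ++ a :: b :: L₂).length := by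
        rw [← List.toFinset_card_of_nodup hnd]
        congr 1
        ext x
        rw [List.mem_toFinset, hmem]
      have e : L₁ ++ a :: b :: L₂ = (L₁ ++ [a]) ++ b :: L₂ := by simp
      simp only [hcard, e, List.countP_append (l₂ := b :: L₂), List.length_append
        (bs := b :: L₂)] at this
      omega
    · obtain ⟨R, hp, h1, h2, h3⟩ := exists_isChain_of_split h₁ h₂ hu' hv' h
      exact ⟨R, hp.nodup_iff.2 hnd, fun x => hp.mem_iff.trans (hmem x), h1, h2, h3⟩
  · push Not at hc
    have hmem : ∀ x, x ∈ u :: ((H.erase u).erase v).toList ++ [v] ↔ x ∈ H := by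
      intro x
      simp
      grind
    have hnd : (u :: ((H.erase u).erase v).toList ++ [v]).Nodup := by
      simp [List.nodup_append, Finset.nodup_toList, huv]
      grind
    refine ⟨_, hnd, hmem, ?_, by simp, List.getLast?_concat⟩
    exact List.IsChain.imp_of_mem_imp (fun x y hx hy hxy =>
      hc x ((hmem x).1 hx) y ((hmem y).1 hy) hxy) (List.Pairwise.isChain hnd)

open scoped Classical in
theorem exists_hamiltonian_isChain [Fintype V] (G : SimpleGraph V) (h3 : 3 ≤ Fintype.card V)
    (hG : ∀ x y, x ≠ y → ¬ G.Adj x y →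
      Fintype.card V ≤ (Finset.univ.filter (G.Adj x)).card + (Finset.univ.filter (G.Adj y)).card) :
    ∃ R : List V, R.Nodup ∧ (∀ x, x ∈ R) ∧ R.IsChain G.Adj ∧
      ∀ a ∈ R.getLast?, ∀ b ∈ R.head?, G.Adj a b := by
  have hlen : ∀ {R : List V}, R.Nodup → (∀ x, x ∈ R) → R.length = Fintype.card V := by
    intro R hnd hmem
    rw [← List.toFinset_card_of_nodup hnd, ← Finset.card_univ]
    congr 1
    ext x
    simp [hmem]
  induction G using WellFoundedGT.induction with
  | ind G ih =>
  by_cases hc : ∃ x y, x ≠ y ∧ ¬ G.Adj x y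
  · obtain ⟨x, y, hxy, hadj⟩ := hc
    have hlt : G < G ⊔ edge x y := by
      refine lt_of_le_of_ne le_sup_left fun h => hadj ?_
      rw [h]
      simp [edge_adj, hxy]
    obtain ⟨R, hnd, hmem, hch, hcl⟩ := ih _ hlt fun z w hzw hn =>
      (hG z w hzw fun h => hn (.inl h)).trans <| by
        gcongr <;> exact .inl
    obtain ⟨R, a, b, hnd, hmem, hR, ha, hb⟩ : ∃ (R : List V) (a b : V), R.Nodup ∧ (∀ x, x ∈ R) ∧
        R.IsChain G.Adj ∧ R.head? = some a ∧ R.getLast? = some b := by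
      by_cases hGR : R.IsChain G.Adj
      · have hne := List.ne_nil_of_mem (hmem x)
        exact ⟨R, _, _, hnd, hmem, hGR, List.head?_eq_some_head hne,
          List.getLast?_eq_getLast_of_ne_nil hne⟩
      · obtain ⟨L₁, a, b, L₂, rfl, he, hab, h₁, h₂⟩ := exists_split_of_not_isChain hnd hch hGR
        have hp : (b :: L₂ ++ (L₁ ++ [a])).Perm (L₁ ++ a :: b :: L₂) := by
          rw [show L₁ ++ a :: b :: L₂ = (L₁ ++ [a]) ++ b :: L₂ by simp]
          exact List.perm_append_comm
        have hnd' := hp.nodup_iff.2 hnd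
        refine ⟨b :: L₂ ++ (L₁ ++ [a]), b, a, hnd', fun x => hp.mem_iff.2 (hmem x),
          h₂.append h₁ ?_, by simp, by rw [← List.append_assoc, List.getLast?_concat]⟩
        intro p hp' q hq
        have h1 := hcl p (by simpa [List.getLast?_append, List.getLast?_cons] using hp') q
          (by cases L₁ <;> simpa using hq)
        rw [he, sup_adj, edge_adj] at h1
        rcases h1 with h1 | ⟨⟨rfl, rfl⟩ | ⟨rfl, rfl⟩, -⟩
        · exact h1
        · exfalso
          have := List.disjoint_of_nodup_append hnd' (List.mem_of_getLast? hp')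
          simp at this
        · exfalso
          have e1 := (List.nodup_append.1 hnd').1.length_le_one_of_head?_of_getLast? (by simp) hp'
          have e2 := (List.nodup_append.1 hnd').2.1.length_le_one_of_head?_of_getLast? hq (by simp)
          have := hlen hnd' fun x => hp.mem_iff.2 (hmem x)
          simp only [List.length_append] at this e2
          omega
    have hab : a ≠ b := by
      rintro rfl
      have := hnd.length_le_one_of_head?_of_getLast? ha hb
      have := hlen hnd hmem
      omega
    by_cases hba : G.Adj b a
    · exact ⟨R, hnd, hmem, hR, by simpa [ha, hb] using hba⟩
    by_cases h : R.IsChain fun p q => ¬ (G.Adj b p ∧ G.Adj a q)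
    · exfalso
      have h1 := List.countP_dropLast_add_countP_tail_le h
      have h2 := hG b a hab.symm hba
      rw [List.card_filter_eq_countP hnd (by simpa using hmem),
        List.card_filter_eq_countP hnd (by simpa using hmem)] at h2
      have e1 : R.countP (G.Adj b ·) = R.dropLast.countP (G.Adj b ·) := by
        obtain ⟨R, rfl⟩ := List.getLast?_eq_some_iff.1 hb
        simp
      have e2 : R.countP (G.Adj a ·) = R.tail.countP (G.Adj a ·) := by
        obtain ⟨R, rfl⟩ := List.head?_eq_some_iff.1 ha
        simp
      have := hlen hnd hmem
      omega
    · rw [List.isChain_iff_forall_rel_of_append_cons_cons] at h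
      push Not at h
      obtain ⟨p, q, A, B, rfl, hp, hq⟩ := h
      have hR' : (A ++ [p] ++ q :: B).IsChain G.Adj := by simpa using hR
      have hb' : (q :: B).getLast? = some b := by
        simpa [List.getLast?_append, List.getLast?_cons] using hb
      have ha' : (A ++ [p]).head? = some a := by cases A <;> simpa using ha
      have hperm : (A ++ [p] ++ (q :: B).reverse).Perm (A ++ p :: q :: B) := by
        rw [show A ++ p :: q :: B = A ++ [p] ++ q :: B by simp]
        exact (List.reverse_perm _).append_left _
      refine ⟨A ++ [p] ++ (q :: B).reverse, hperm.nodup_iff.2 hnd,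
        fun x => hperm.mem_iff.2 (hmem x), hR'.left_of_append.append
          (List.isChain_reverse.2 (hR'.right_of_append.imp fun _ _ h => h.symm)) ?_, ?_⟩
      · rw [List.head?_reverse, hb']
        simpa using hp.symm
      · rw [List.getLast?_append, List.getLast?_reverse, List.head?_append, ha']
        simpa using hq.symm
  · push Not at hc
    refine ⟨Finset.univ.toList, Finset.nodup_toList _, by simp, ?_, fun a ha b hb => ?_⟩
    · exact (List.Pairwise.isChain (Finset.nodup_toList _)).imp fun x y h => hc x y h
    · refine hc a b ?_
      rintro rfl
      have := (Finset.nodup_toList Finset.univ).length_le_one_of_head?_of_getLast? hb ha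
      have := hlen (Finset.nodup_toList Finset.univ) (by simp)
      omega

end SimpleGraph

theorem Nat.sum_le_twelve {y₁ y₂ y₃ y₄ t₁ t₂ t₃ t₄ : ℕ} (hy₁ : y₁ ≤ 2) (hy₂ : y₂ ≤ 2)
    (hy₃ : y₃ ≤ 2) (hy₄ : y₄ ≤ 2) (ht₁ : t₁ ≤ 1) (ht₂ : t₂ ≤ 1) (ht₃ : t₃ ≤ 1) (ht₄ : t₄ ≤ 1)
    (h1 : y₁ + t₂ + t₃ ≤ 3) (h2 : y₁ + t₂ + t₄ ≤ 3) (h3 : y₂ + t₁ + t₃ ≤ 3)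
    (h4 : y₂ + t₁ + t₄ ≤ 3) (h5 : y₃ + t₁ + t₄ ≤ 3) (h6 : y₃ + t₂ + t₄ ≤ 3)
    (h7 : y₄ + t₁ + t₃ ≤ 3) (h8 : y₄ + t₂ + t₃ ≤ 3) :
    y₁ + y₂ + y₃ + y₄ + 2 * (t₁ + t₂ + t₃ + t₄) ≤ 12 ∧
    (y₁ + y₂ + y₃ + y₄ + 2 * (t₁ + t₂ + t₃ + t₄) = 12 →
      y₁ = y₂ ∧ y₁ = y₃ ∧ y₁ = y₄ ∧ 1 ≤ y₁) := by
  rcases Nat.le_one_iff_eq_zero_or_eq_one.1 ht₁ with rfl | rfl <;>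
  rcases Nat.le_one_iff_eq_zero_or_eq_one.1 ht₂ with rfl | rfl <;>
  rcases Nat.le_one_iff_eq_zero_or_eq_one.1 ht₃ with rfl | rfl <;>
  rcases Nat.le_one_iff_eq_zero_or_eq_one.1 ht₄ with rfl | rfl <;>
  exact ⟨by omega, fun _ => by omega⟩

set_option maxHeartbeats 1000000 in
theorem Nat.add_sum_le_of_window {q : ℕ} (hq : q ≤ 3) {a b c d : ℕ → ℕ}
    (ha : ∀ p, a p ≤ 1) (hb : ∀ p, b p ≤ 1) (hc : ∀ p, c p ≤ 1) (hd : ∀ p, d p ≤ 1)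
    (wa : ∀ p, p + 3 ≤ q + 1 → a p + a (p + 3) ≤ 1) (wb : ∀ p, p + 3 ≤ q + 1 → b p + b (p + 3) ≤ 1)
    (wc : ∀ p, p + 3 ≤ q + 1 → c p + c (p + 3) ≤ 1) (wd : ∀ p, p + 3 ≤ q + 1 → d p + d (p + 3) ≤ 1)
    (h1 : ∀ p < q, a p + a (p + 2) + b (p + 1) + c (p + 1) ≤ 3)
    (h2 : ∀ p < q, a p + a (p + 2) + b (p + 1) + d (p + 1) ≤ 3)
    (h3 : ∀ p < q, b p + b (p + 2) + a (p + 1) + c (p + 1) ≤ 3)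
    (h4 : ∀ p < q, b p + b (p + 2) + a (p + 1) + d (p + 1) ≤ 3)
    (h5 : ∀ p < q, c p + c (p + 2) + a (p + 1) + d (p + 1) ≤ 3)
    (h6 : ∀ p < q, c p + c (p + 2) + b (p + 1) + d (p + 1) ≤ 3)
    (h7 : ∀ p < q, d p + d (p + 2) + a (p + 1) + c (p + 1) ≤ 3)
    (h8 : ∀ p < q, d p + d (p + 2) + b (p + 1) + c (p + 1) ≤ 3) :
    ∑ p ∈ Finset.range (q + 1), (a p + a (p + 1) + b p + b (p + 1) + c p + c (p + 1) +
      d p + d (p + 1)) ≤ 4 * (q + 1) + 4 ∧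
    (∑ p ∈ Finset.range (q + 1), (a p + a (p + 1) + b p + b (p + 1) + c p + c (p + 1) +
      d p + d (p + 1)) = 4 * (q + 1) + 4 →
      a (q + 1) = 1 → b (q + 1) = 1 → c (q + 1) = 0 → d (q + 1) = 0 →
        a 0 = 0 ∧ b 0 = 0 ∧ c 0 = 1 ∧ d 0 = 1) := by
  have := ha 0; have := hb 0; have := hc 0; have := hd 0
  have := ha 1; have := hb 1; have := hc 1; have := hd 1
  obtain rfl | rfl | rfl | rfl : q = 0 ∨ q = 1 ∨ q = 2 ∨ q = 3 := by omega
  · simp only [Finset.sum_range_succ, Finset.sum_range_zero, Nat.zero_add]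
    omega
  · replace h1 := h1 0 (by simp); replace h2 := h2 0 (by simp); replace h3 := h3 0 (by simp)
    replace h4 := h4 0 (by simp); replace h5 := h5 0 (by simp); replace h6 := h6 0 (by simp)
    replace h7 := h7 0 (by simp); replace h8 := h8 0 (by simp)
    have := ha 2; have := hb 2; have := hc 2; have := hd 2
    simp only [Finset.sum_range_succ, Finset.sum_range_zero, Nat.zero_add, Nat.reduceAdd] at *
    clear ha hb hc hd
    omega
  · have h1' := h1 0 (by simp); have h2' := h2 0 (by simp); have h3' := h3 0 (by simp)
    have h4' := h4 0 (by simp); have h5' := h5 0 (by simp); have h6' := h6 0 (by simp)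
    have h7' := h7 0 (by simp); have h8' := h8 0 (by simp)
    replace h1 := h1 1 (by simp); replace h2 := h2 1 (by simp); replace h3 := h3 1 (by simp)
    replace h4 := h4 1 (by simp); replace h5 := h5 1 (by simp); replace h6 := h6 1 (by simp)
    replace h7 := h7 1 (by simp); replace h8 := h8 1 (by simp)
    have := ha 2; have := hb 2; have := hc 2; have := hd 2
    have := ha 3; have := hb 3; have := hc 3; have := hd 3
    replace wa := wa 0 (by simp); replace wb := wb 0 (by simp)
    replace wc := wc 0 (by simp); replace wd := wd 0 (by simp)
    simp only [Finset.sum_range_succ, Finset.sum_range_zero, Nat.zero_add, Nat.reduceAdd] at *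
    clear ha hb hc hd
    omega
  · have := ha 3; have := hb 3; have := hc 3; have := hd 3
    have := wa 0 (by simp); have := wb 0 (by simp); have := wc 0 (by simp); have := wd 0 (by simp)
    have := wa 1 (by simp); have := wb 1 (by simp); have := wc 1 (by simp); have := wd 1 (by simp)
    obtain ⟨k1, k2⟩ := Nat.sum_le_twelve (y₁ := a 1 + a 3) (y₂ := b 1 + b 3) (y₃ := c 1 + c 3)
      (y₄ := d 1 + d 3) (by omega) (by omega) (by omega) (by omega) (ha 2) (hb 2) (hc 2) (hd 2)
      (h1 1 (by simp)) (h2 1 (by simp)) (h3 1 (by simp)) (h4 1 (by simp)) (h5 1 (by simp))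
      (h6 1 (by simp)) (h7 1 (by simp)) (h8 1 (by simp))
    simp only [Finset.sum_range_succ, Finset.sum_range_zero, Nat.zero_add, Nat.reduceAdd] at *
    clear h1 h2 h3 h4 h5 h6 h7 h8 ha hb hc hd wa wb wc wd
    refine ⟨by omega, fun h _ _ _ _ => ?_⟩
    obtain ⟨e1, e2, e3, e4⟩ := k2 (by omega)
    have h1 : a 0 + a 3 = 1 := by omega
    have h2 : b 0 + b 3 = 1 := by omega
    have h3 : c 0 + c 3 = 1 := by omega
    have h4 : d 0 + d 3 = 1 := by omega
    have h5 : c 1 + c 4 = 1 := by omega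
    have h6 : d 1 + d 4 = 1 := by omega
    clear k1 k2 h
    have ha1 : a 1 = 0 := by omega
    have ha3 : a 3 = 1 := by omega
    have hc1 : c 1 = 1 := by omega
    have hd1 : d 1 = 1 := by omega
    have hc3 : c 3 = 0 := by omega
    have hd3 : d 3 = 0 := by omega
    have hb1 : b 1 = 0 := by omega
    refine ⟨by omega, by omega, by omega, by omega⟩

open scoped Classical in
theorem List.countP_eq_sum_range {α : Type*} (p : α → Prop) (z : α) (l : List α) :
    l.countP (p ·) = ∑ i ∈ Finset.range l.length, if p (l.getD i z) then 1 else 0 := by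
  induction l with
  | nil => simp
  | cons x t ih =>
    rw [List.countP_cons, List.length_cons, Finset.sum_range_succ', ih]
    simp

theorem List.exists_eq_append_cons_append_cons {α : Type*} {l : List α} {p m : ℕ} (z : α)
    (h : p + m + 1 < l.length) : ∃ A M B, A.length = p ∧ M.length = m ∧
      l = A ++ l.getD p z :: (M ++ l.getD (p + m + 1) z :: B) := by
  refine ⟨l.take p, (l.drop (p + 1)).take m, l.drop (p + m + 2), by simp; omega,
    by simp; omega, ?_⟩
  conv_lhs => rw [← List.take_append_drop p l]
  congr 1
  rw [List.drop_eq_getElem_cons (by omega), List.getD_eq_getElem _ _ (by omega)]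
  congr 1
  conv_lhs => rw [← List.take_append_drop m (l.drop (p + 1))]
  congr 1
  rw [List.drop_drop, List.drop_eq_getElem_cons (by omega), List.getD_eq_getElem _ _ h]
  congr 2 <;> omega

/-- Replacing the stretch between two entries of the list `s :: P ++ [t]` keeps both ends. -/
theorem List.exists_splice {α : Type*} {s t x y : α} {P A M B : List α}
    (h : s :: P ++ [t] = A ++ x :: (M ++ y :: B)) :
    ∃ A' B', P = A' ++ M ++ B' ∧
      ∀ N, s :: (A' ++ N ++ B') ++ [t] = A ++ x :: (N ++ y :: B) := by
  obtain ⟨A', hA⟩ : ∃ A', ∀ N, A ++ x :: N = s :: (A' ++ N) := by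
    cases A with
    | nil => exact ⟨[], by simpa using (List.cons_eq_cons.1 h).1.symm⟩
    | cons a A => exact ⟨A ++ [x], by simpa using (List.cons_eq_cons.1 h).1.symm⟩
  obtain ⟨B', hB⟩ : ∃ B', y :: B = B' ++ [t] := by
    rcases List.eq_nil_or_concat B with rfl | ⟨B, b, rfl⟩
    · have := congrArg List.getLast? h
      refine ⟨[], ?_⟩
      simpa [List.getLast?_append, List.getLast?_cons] using this.symm
    · have := congrArg List.getLast? h
      refine ⟨y :: B, ?_⟩
      simpa [List.getLast?_append, List.getLast?_cons] using this.symm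
  refine ⟨A', B', ?_, fun N => ?_⟩
  · rw [hA, hB] at h
    exact List.append_cancel_right (bs := [t]) (by simpa using h)
  · rw [hA, hB]
    simp

open scoped Classical in
theorem SimpleGraph.countP_adj_le_of_window {V : Type*} {G : SimpleGraph V} {x y a b c d : V}
    {P : List V} (hP : P.length ≤ 3)
    (hw : ∀ v ∈ [a, b, c, d], ∀ p, p + 3 ≤ P.length + 1 →
      ¬(G.Adj v ((x :: P ++ [y]).getD p x) ∧ G.Adj v ((x :: P ++ [y]).getD (p + 3) x)))
    (hr : ∀ v u w, (v, u, w) ∈ [(a, b, c), (a, b, d), (b, a, c), (b, a, d), (c, a, d), (c, b, d),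
        (d, a, c), (d, b, c)] → ∀ p < P.length,
      ¬(G.Adj v ((x :: P ++ [y]).getD p x) ∧ G.Adj v ((x :: P ++ [y]).getD (p + 2) x) ∧
        G.Adj u ((x :: P ++ [y]).getD (p + 1) x) ∧ G.Adj w ((x :: P ++ [y]).getD (p + 1) x))) :
    (x :: P).countP (G.Adj a ·) + (P ++ [y]).countP (G.Adj a ·) +
      ((x :: P).countP (G.Adj b ·) + (P ++ [y]).countP (G.Adj b ·)) +
      ((x :: P).countP (G.Adj c ·) + (P ++ [y]).countP (G.Adj c ·)) +
      ((x :: P).countP (G.Adj d ·) + (P ++ [y]).countP (G.Adj d ·)) ≤ 4 * (P.length + 1) + 4 ∧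
    ((x :: P).countP (G.Adj a ·) + (P ++ [y]).countP (G.Adj a ·) +
      ((x :: P).countP (G.Adj b ·) + (P ++ [y]).countP (G.Adj b ·)) +
      ((x :: P).countP (G.Adj c ·) + (P ++ [y]).countP (G.Adj c ·)) +
      ((x :: P).countP (G.Adj d ·) + (P ++ [y]).countP (G.Adj d ·)) = 4 * (P.length + 1) + 4 →
      G.Adj a y → G.Adj b y → ¬ G.Adj c y → ¬ G.Adj d y →
        ¬ G.Adj a x ∧ ¬ G.Adj b x ∧ G.Adj c x ∧ G.Adj d x) := by
  set f : V → ℕ → ℕ := fun v p => if G.Adj v ((x :: P ++ [y]).getD p x) then 1 else 0 with hf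
  have hf1 : ∀ v p, f v p ≤ 1 := fun v p => by simp only [hf]; split_ifs <;> simp
  have hW : ∀ v, (x :: P).countP (G.Adj v ·) + (P ++ [y]).countP (G.Adj v ·) =
      ∑ p ∈ Finset.range (P.length + 1), (f v p + f v (p + 1)) := by
    intro v
    rw [Finset.sum_add_distrib, List.countP_eq_sum_range _ x, List.countP_eq_sum_range _ x,
      List.length_append, List.length_cons, List.length_singleton]
    congr 1
    refine Finset.sum_congr rfl fun p hp => ?_
    rw [Finset.mem_range] at hp
    simp only [hf]
    rw [List.getD_append _ _ _ _ (by simpa using hp)]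
  have hwin : ∀ v ∈ [a, b, c, d], ∀ p, p + 3 ≤ P.length + 1 → f v p + f v (p + 3) ≤ 1 := by
    intro v hv p hp
    have := hw v hv p hp
    simp only [hf]
    split_ifs <;> first | omega | tauto
  have hrr : ∀ v u w, (v, u, w) ∈ [(a, b, c), (a, b, d), (b, a, c), (b, a, d), (c, a, d), (c, b, d),
        (d, a, c), (d, b, c)] → ∀ p < P.length,
        f v p + f v (p + 2) + f u (p + 1) + f w (p + 1) ≤ 3 := by
    intro v u w h p hp
    have := hr v u w h p hp
    simp only [hf]
    split_ifs <;> first | omega | tauto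
  have key := Nat.add_sum_le_of_window hP (hf1 a) (hf1 b) (hf1 c) (hf1 d) (hwin a (by simp))
    (hwin b (by simp)) (hwin c (by simp)) (hwin d (by simp))
    (hrr a b c (by simp)) (hrr a b d (by simp)) (hrr b a c (by simp)) (hrr b a d (by simp))
    (hrr c a d (by simp)) (hrr c b d (by simp)) (hrr d a c (by simp)) (hrr d b c (by simp))
  have hsum : ∑ p ∈ Finset.range (P.length + 1), (f a p + f a (p + 1) + f b p + f b (p + 1) +
      f c p + f c (p + 1) + f d p + f d (p + 1)) =
      ∑ p ∈ Finset.range (P.length + 1), (f a p + f a (p + 1)) +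
      ∑ p ∈ Finset.range (P.length + 1), (f b p + f b (p + 1)) +
      ∑ p ∈ Finset.range (P.length + 1), (f c p + f c (p + 1)) +
      ∑ p ∈ Finset.range (P.length + 1), (f d p + f d (p + 1)) := by
    simp only [← Finset.sum_add_distrib, add_assoc]
  rw [hsum, ← hW, ← hW, ← hW, ← hW] at key
  have hy : ∀ v, f v (P.length + 1) = if G.Adj v y then 1 else 0 := fun v => by simp [hf]
  have hx : ∀ v, f v 0 = if G.Adj v x then 1 else 0 := fun v => by simp [hf]
  simp only [hy, hx] at key
  refine ⟨key.1, fun h h1 h2 h3 h4 => ?_⟩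
  have := key.2 h (if_pos h1) (if_pos h2) (if_neg h3) (if_neg h4)
  simpa using this

/-- Pairwise disjoint duplicate-free lists `P i` avoiding the terminals `s j`. The list `P i` is
meant to be the interior of a path starting at `s i`. -/
structure IsPathSystem {ι V : Type*} (s : ι → V) (P : ι → List V) : Prop where
  nodup : ∀ i, (P i).Nodup
  disjoint : ∀ i j, i ≠ j → ∀ x ∈ P i, x ∉ P j
  notMem : ∀ i j, s j ∉ P i

open scoped Classical in
/-- The vertices used by a path system. -/
noncomputable def pathSupport {ι V : Type*} [Fintype ι] (s : ι → V) (P : ι → List V) : Finset V :=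
  Finset.univ.biUnion fun i => (s i :: P i).toFinset

section PathSystem

variable {ι V : Type*} [Fintype ι] {s : ι → V} {P : ι → List V}

theorem mem_pathSupport {x : V} : x ∈ pathSupport s P ↔ ∃ i, x = s i ∨ x ∈ P i := by
  simp [pathSupport]

theorem terminal_mem_pathSupport (i : ι) : s i ∈ pathSupport s P :=
  mem_pathSupport.2 ⟨i, .inl rfl⟩

theorem mem_pathSupport_of_mem {x : V} {i : ι} (h : x ∈ P i) : x ∈ pathSupport s P :=
  mem_pathSupport.2 ⟨i, .inr h⟩

open scoped Classical in
theorem IsPathSystem.card_filter_pathSupport (h : IsPathSystem s P) (hs : Function.Injective s)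
    (p : V → Prop) :
    ((pathSupport s P).filter p).card = ∑ i, (s i :: P i).countP (p ·) := by
  rw [pathSupport, Finset.filter_biUnion, Finset.card_biUnion]
  · refine Finset.sum_congr rfl fun i _ => ?_
    exact List.card_filter_eq_countP (List.nodup_cons.2 ⟨h.notMem i i, h.nodup i⟩) (by simp)
  · intro i _ j _ hij
    rw [Function.onFun, Finset.disjoint_left]
    intro x hx hx'
    simp only [Finset.mem_filter, List.mem_toFinset, List.mem_cons] at hx hx'
    rcases hx.1 with rfl | h1 <;> rcases hx'.1 with h2 | h2
    · exact hij (hs h2)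
    · exact h.notMem _ _ h2
    · exact h.notMem _ _ (h2 ▸ h1)
    · exact h.disjoint i j hij x h1 h2

theorem IsPathSystem.card_pathSupport (h : IsPathSystem s P) (hs : Function.Injective s) :
    (pathSupport s P).card = ∑ i, ((P i).length + 1) := by
  classical
  have := h.card_filter_pathSupport hs fun _ => True
  simpa using this

theorem IsPathSystem.update [DecidableEq ι] (h : IsPathSystem s P) (i : ι) {L : List V}
    (hL : L.Nodup)
    (hx : ∀ x ∈ L, x ∈ P i ∨ x ∉ pathSupport s P) : IsPathSystem s (Function.update P i L) := by
  have hfresh : ∀ x ∈ L, (∀ j, x ≠ s j) ∧ ∀ j, j ≠ i → x ∉ P j := by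
    intro x hxL
    rcases hx x hxL with hx | hx
    · exact ⟨fun j hj => h.notMem i j (hj ▸ hx), fun j hj => h.disjoint i j hj.symm x hx⟩
    · exact ⟨fun j hj => hx (mem_pathSupport.2 ⟨j, .inl hj⟩),
        fun j _ hj => hx (mem_pathSupport_of_mem hj)⟩
  refine ⟨fun j => ?_, fun j l hjl x hxj hxl => ?_, fun j l hl => ?_⟩
  · by_cases hj : j = i
    · subst hj; simpa using hL
    · simpa [hj] using h.nodup j
  · by_cases hj : j = i
    · subst hj
      rw [Function.update_self] at hxj
      rw [Function.update_of_ne hjl.symm] at hxl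
      exact (hfresh x hxj).2 l hjl.symm hxl
    · rw [Function.update_of_ne hj] at hxj
      by_cases hl : l = i
      · subst hl
        rw [Function.update_self] at hxl
        exact (hfresh x hxl).2 j hj hxj
      · rw [Function.update_of_ne hl] at hxl
        exact h.disjoint j l hjl x hxj hxl
  · by_cases hj : j = i
    · subst hj
      rw [Function.update_self] at hl
      exact (hfresh _ hl).1 l rfl
    · rw [Function.update_of_ne hj] at hl
      exact h.notMem j l hl

theorem IsPathSystem.notMem_pathSupport_update [DecidableEq ι] (h : IsPathSystem s P) {i : ι}
    {L : List V} {x : V}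
    (hxL : x ∉ L) (hx : x ∈ P i ∨ x ∉ pathSupport s P) :
    x ∉ pathSupport s (Function.update P i L) := by
  rw [mem_pathSupport]
  rintro ⟨j, rfl | hj⟩
  · rcases hx with hx | hx
    · exact h.notMem _ _ hx
    · exact hx (terminal_mem_pathSupport j)
  · by_cases hji : j = i
    · subst hji
      rw [Function.update_self] at hj
      exact hxL hj
    · rw [Function.update_of_ne hji] at hj
      rcases hx with hx | hx
      · exact h.disjoint i j (Ne.symm hji) x hx hj
      · exact hx (mem_pathSupport_of_mem hj)

/-- A stretch `M` of one of the paths may be replaced by a list `N` of unused vertices. -/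
theorem IsPathSystem.exists_reroute [DecidableEq ι] {G : SimpleGraph V} (h : IsPathSystem s P)
    {i : ι} {t : V}
    (hl : (s i :: P i ++ [t]).IsChain G.Adj) {x y : V} {A M B N : List V}
    (e : s i :: P i ++ [t] = A ++ x :: (M ++ y :: B)) (hN : N.Nodup)
    (hN' : ∀ z ∈ N, z ∉ pathSupport s P) (hc : (x :: (N ++ [y])).IsChain G.Adj) :
    ∃ L, IsPathSystem s (Function.update P i L) ∧ (s i :: L ++ [t]).IsChain G.Adj ∧
      L.length + M.length = (P i).length + N.length ∧ (∀ z ∈ L, z ∈ N ∨ z ∈ P i) ∧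
      ∀ z ∈ M, z ∉ pathSupport s (Function.update P i L) := by
  obtain ⟨A', B', hP, hspl⟩ := List.exists_splice e
  have hnd := h.nodup i
  rw [hP] at hnd
  have hsub : ∀ z ∈ A' ++ N ++ B', z ∈ P i ∨ z ∉ pathSupport s P := by
    intro z hz
    simp only [List.mem_append] at hz
    rcases hz with (hz | hz) | hz
    · left; simp [hP, hz]
    · exact .inr (hN' z hz)
    · left; simp [hP, hz]
  have hNP : ∀ z ∈ N, z ∉ A' ∧ z ∉ B' := fun z hz => by
    have : z ∉ P i := fun h => hN' z hz (mem_pathSupport_of_mem h)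
    rw [hP] at this
    simp at this
    tauto
  refine ⟨A' ++ N ++ B', h.update i ?_ hsub, ?_, ?_, ?_, fun z hz => ?_⟩
  · rw [List.nodup_append, List.nodup_append] at hnd ⊢
    obtain ⟨⟨hA', -, -⟩, hB', hd⟩ := hnd
    refine ⟨⟨hA', hN, fun a ha b hb => ?_⟩, hB', fun a ha b hb => ?_⟩
    · rintro rfl
      exact (hNP a hb).1 ha
    · rintro rfl
      rcases List.mem_append.1 ha with ha | ha
      · exact hd a (by simp [ha]) a hb rfl
      · exact (hNP a ha).2 hb
  · rw [hspl]
    rw [e] at hl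
    rw [List.isChain_split] at hl ⊢
    refine ⟨hl.1, ?_⟩
    have h2 := hl.2
    rw [← List.cons_append, List.isChain_split] at h2 ⊢
    exact ⟨by simpa using hc, h2.2⟩
  · rw [hP]
    simp only [List.length_append]
    omega
  · intro z hz
    simp only [List.mem_append, hP] at hz ⊢
    tauto
  · refine h.notMem_pathSupport_update ?_ (.inl (by simp [hP, hz]))
    have h1 : z ∉ N := fun hzN => hN' z hzN (mem_pathSupport_of_mem (i := i) (by simp [hP, hz]))
    simp only [List.nodup_append] at hnd
    grind

end PathSystem

namespace SimpleGraph

section Linkage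

variable {V : Type*} {G : SimpleGraph V} {k : ℕ} {s : ZMod k → V}
  {P : ZMod k → List V} {T : Finset (ZMod k)} {i₀ : ZMod k}

/-- A path system with interiors of length at most three whose members indexed by `T` are the
interiors of paths from `s i` to `s (i + 1)`, the others being empty. -/
structure IsShortLinkage (G : SimpleGraph V) (s : ZMod k → V) (T : Finset (ZMod k))
    (P : ZMod k → List V) : Prop where
  isPathSystem : IsPathSystem s P
  length_le : ∀ i, (P i).length ≤ 3
  isChain : ∀ i ∈ T, (s i :: P i ++ [s (i + 1)]).IsChain G.Adj
  eq_nil : ∀ i, i ∉ T → P i = []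

theorem IsShortLinkage.update (h : IsShortLinkage G s T P) {i : ZMod k} (hi : i ∈ T) {L : List V}
    (hL : IsPathSystem s (Function.update P i L)) (hl : L.length ≤ 3)
    (hc : (s i :: L ++ [s (i + 1)]).IsChain G.Adj) :
    IsShortLinkage G s T (Function.update P i L) := by
  refine ⟨hL, fun j => ?_, fun j hj => ?_, fun j hj => ?_⟩
  · by_cases e : j = i
    · subst e; simpa using hl
    · simpa [e] using h.length_le j
  · by_cases e : j = i
    · subst e; simpa using hc
    · simpa [e] using h.isChain j hj
  · have e : j ≠ i := by rintro rfl; exact hj hi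
    simpa [e] using h.eq_nil j hj

variable [NeZero k]

open scoped Classical in
theorem sum_countP_add_countP (h : IsPathSystem s P) (hs : Function.Injective s) (p : V → Prop) :
    ∑ i, ((s i :: P i).countP (p ·) + (P i ++ [s (i + 1)]).countP (p ·)) =
      2 * ((pathSupport s P).filter p).card := by
  have h1 : ∑ i, (P i ++ [s (i + 1)]).countP (p ·) = ∑ i, (s i :: P i).countP (p ·) := by
    have e1 : ∀ i, (P i ++ [s (i + 1)]).countP (p ·) =
        (P i).countP (p ·) + [s (i + 1)].countP (p ·) := fun i => List.countP_append
    have e2 : ∀ i, (s i :: P i).countP (p ·) = (P i).countP (p ·) + [s i].countP (p ·) :=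
      fun i => by simp [List.countP_cons]
    simp only [e1, e2, Finset.sum_add_distrib]
    congr 1
    exact Equiv.sum_comp (Equiv.addRight (1 : ZMod k)) fun i => [s i].countP (p ·)
  rw [Finset.sum_add_distrib, h1, h.card_filter_pathSupport hs, two_mul]

theorem IsShortLinkage.insert_update (h : IsShortLinkage G s T P) (hi : i₀ ∉ T) {N : List V}
    (hN : N.Nodup) (hN' : ∀ x ∈ N, x ∉ pathSupport s P) (hl : N.length ≤ 3)
    (hc : (s i₀ :: N ++ [s (i₀ + 1)]).IsChain G.Adj) :
    IsShortLinkage G s (insert i₀ T) (Function.update P i₀ N) := by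
  refine ⟨h.isPathSystem.update _ hN fun x hx => .inr (hN' x hx), fun i => ?_, fun i hi' => ?_,
    fun i hi' => ?_⟩
  · by_cases e : i = i₀
    · subst e; simpa using hl
    · simpa [e] using h.length_le i
  · by_cases e : i = i₀
    · subst e; simpa using hc
    · simpa [e] using h.isChain i (by simpa [e] using hi')
  · rw [Finset.mem_insert, not_or] at hi'
    simpa [hi'.1] using h.eq_nil i hi'.2

theorem IsShortLinkage.exists_shorter (h : IsShortLinkage G s T P) {i : ZMod k} (hi : i ∈ T)
    {v : V} (hv : v ∉ pathSupport s P) {p : ℕ} (hp : p + 3 ≤ (P i).length + 1)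
    (h1 : G.Adj v ((s i :: P i ++ [s (i + 1)]).getD p (s i)))
    (h2 : G.Adj v ((s i :: P i ++ [s (i + 1)]).getD (p + 3) (s i))) :
    ∃ P', IsShortLinkage G s T P' ∧ ∑ i, (P' i).length < ∑ i, (P i).length := by
  obtain ⟨A, M, B, hA, hM, e⟩ := List.exists_eq_append_cons_append_cons
    (l := s i :: P i ++ [s (i + 1)]) (p := p) (m := 2) (s i) (by simp; omega)
  obtain ⟨L, hL, hc, hlen, -⟩ := h.isPathSystem.exists_reroute (h.isChain i hi) e
    (List.nodup_singleton v) (by simpa using hv) (by simpa using ⟨h1.symm, h2⟩)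
  rw [hM, List.length_singleton] at hlen
  have := h.length_le i
  refine ⟨_, h.update hi hL (by omega) hc, Finset.sum_lt_sum (fun j _ => ?_)
    ⟨i, Finset.mem_univ _, ?_⟩⟩
  · by_cases e : j = i
    · subst e
      rw [Function.update_self]
      omega
    · rw [Function.update_of_ne e]
  · rw [Function.update_self]
    omega

theorem IsShortLinkage.exists_insert_of_reroute (h : IsShortLinkage G s T P) {i : ZMod k}
    (hi : i ∈ T) (hi₀ : i₀ ∉ T) {v u w : V} (hv : v ∉ pathSupport s P) (hu : u ∉ pathSupport s P)
    (hw : w ∉ pathSupport s P) (hvu : v ≠ u) (hvw : v ≠ w) (huw : u ≠ w)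
    (hsu : G.Adj (s i₀) u) (hws : G.Adj w (s (i₀ + 1))) {p : ℕ} (hp : p < (P i).length)
    (h1 : G.Adj v ((s i :: P i ++ [s (i + 1)]).getD p (s i)))
    (h2 : G.Adj v ((s i :: P i ++ [s (i + 1)]).getD (p + 2) (s i)))
    (h3 : G.Adj u ((s i :: P i ++ [s (i + 1)]).getD (p + 1) (s i)))
    (h4 : G.Adj w ((s i :: P i ++ [s (i + 1)]).getD (p + 1) (s i))) :
    ∃ P', IsShortLinkage G s (insert i₀ T) P' := by
  obtain ⟨A, M, B, hA, hM, e⟩ := List.exists_eq_append_cons_append_cons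
    (l := s i :: P i ++ [s (i + 1)]) (p := p) (m := 1) (s i) (by simp; omega)
  obtain ⟨m, rfl⟩ := List.length_eq_one_iff.1 hM
  have hm : (s i :: P i ++ [s (i + 1)]).getD (p + 1) (s i) = m := by
    conv_lhs => rw [e]
    rw [List.getD_append_right _ _ _ _ (by omega), hA, Nat.add_sub_cancel_left]
    simp
  rw [hm] at h3 h4
  obtain ⟨L, hL, hc, hlen, hvL, hmL⟩ := h.isPathSystem.exists_reroute (h.isChain i hi) e
    (List.nodup_singleton v) (by simpa using hv) (by simpa using ⟨h1.symm, h2⟩)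
  have hL' := h.update hi hL (by have := h.length_le i; simp at hlen; omega) hc
  have hfree : ∀ z, z ∉ pathSupport s P → v ≠ z → z ∉ pathSupport s (Function.update P i L) := by
    intro z hz hvz
    refine h.isPathSystem.notMem_pathSupport_update (fun hzL => ?_) (.inr hz)
    rcases hvL z hzL with h | h
    · exact hvz (List.mem_singleton.1 h).symm
    · exact hz (mem_pathSupport_of_mem h)
  refine ⟨_, hL'.insert_update hi₀ (N := [u, m, w]) ?_ ?_ (by simp) ?_⟩
  · simp [huw, h3.ne, h4.ne.symm]
  · simpa using ⟨hfree u hu hvu, hmL m (by simp), hfree w hw hvw⟩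
  · simpa using ⟨hsu, h3, h4.symm, hws⟩

open scoped Classical in
theorem card_filter_add_card_filter_compl [Fintype V] (L : Finset V) (p : V → Prop) :
    (L.filter p).card + (Lᶜ.filter p).card = (Finset.univ.filter p).card := by
  rw [← Finset.card_union_of_disjoint
    (Finset.disjoint_filter_filter disjoint_compl_right), ← Finset.filter_union, Finset.union_compl]

open scoped Classical in
theorem IsShortLinkage.exists_insert [Fintype V] (h : IsShortLinkage G s T P)
    (hi₀ : i₀ ∉ T) (hs : Function.Injective s) (hk : 4 ≤ k) (hn : 11 * k - 3 ≤ Fintype.card V)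
    (hdeg : ∀ v, (Fintype.card V + 1) / 2 + k / 2 - 1 ≤ (Finset.univ.filter (G.Adj v)).card)
    (hmin : ∀ P', IsShortLinkage G s T P' → ∑ i, (P i).length ≤ ∑ i, (P' i).length) :
    ∃ P', IsShortLinkage G s (insert i₀ T) P' := by
  by_contra hno
  push Not at hno
  have hP₀ := h.eq_nil i₀ hi₀
  set L := pathSupport s P with hL
  have hlink : ∀ N : List V, N.Nodup → (∀ x ∈ N, x ∉ L) → N.length ≤ 3 →
      ¬ (s i₀ :: N ++ [s (i₀ + 1)]).IsChain G.Adj := fun N h1 h2 h3 h4 =>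
    hno _ (h.insert_update hi₀ h1 h2 h3 h4)
  have hcard : L.card = ∑ i, ((P i).length + 1) := h.isPathSystem.card_pathSupport hs
  have hcardle : L.card ≤ 4 * k - 3 := by
    rw [hcard, ← Finset.add_sum_erase _ _ (Finset.mem_univ i₀), hP₀]
    have := Finset.sum_le_card_nsmul (Finset.univ.erase i₀) (fun i => (P i).length + 1) 4
      fun i _ => by have := h.length_le i; omega
    rw [Finset.card_erase_of_mem (Finset.mem_univ _), Finset.card_univ, ZMod.card,
      smul_eq_mul] at this
    simp only [List.length_nil]
    omega
  have hXY : ¬ G.Adj (s i₀) (s (i₀ + 1)) := fun hadj => hlink [] (by simp) (by simp) (by simp)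
    (by simpa using hadj)
  have hcompl : L.card + Lᶜ.card = Fintype.card V := by
    rw [Finset.card_add_card_compl]
  have hdU : ∀ x ∈ L, 1 < (Lᶜ.filter (G.Adj x)).card := by
    intro x hx
    have h1 := card_filter_add_card_filter_compl L (G.Adj x)
    have h2 := hdeg x
    have h3 : (L.filter (G.Adj x)).card < L.card := Finset.card_lt_card
      (Finset.filter_ssubset.2 ⟨x, hx, G.irrefl⟩)
    omega
  obtain ⟨a₁, ha₁, a₂, ha₂, hne_a⟩ := Finset.one_lt_card.1 (hdU _ (terminal_mem_pathSupport i₀))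
  obtain ⟨b₁, hb₁, b₂, hb₂, hne_b⟩ := Finset.one_lt_card.1
    (hdU _ (terminal_mem_pathSupport (i₀ + 1)))
  simp only [Finset.mem_filter, Finset.mem_compl] at ha₁ ha₂ hb₁ hb₂
  have hAB : ∀ v, v ∉ L → G.Adj (s i₀) v → ¬ G.Adj (s (i₀ + 1)) v := fun v hv h1 h2 =>
    hlink [v] (by simp) (by simpa using hv) (by simp) (by simpa using ⟨h1, h2.symm⟩)
  have hpair : ∀ a b, a ∉ L → b ∉ L → G.Adj (s i₀) a → G.Adj (s (i₀ + 1)) b →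
      2 * ((Fintype.card V + 1) / 2 + k / 2 - 1) + 2 + L.card ≤
        Fintype.card V + (L.filter (G.Adj a)).card + (L.filter (G.Adj b)).card := by
    intro a b ha hb hXa hYb
    have hab : a ≠ b := by
      rintro rfl
      exact hAB a ha hXa hYb
    have hnab : ¬ G.Adj a b := fun hadj => hlink [a, b] (by simpa using hab)
      (by simpa using ⟨ha, hb⟩)
      (by simp) (by simpa using ⟨hXa, hadj, hYb.symm⟩)
    have hcommon : ∀ z, z ∉ L → G.Adj a z → ¬ G.Adj b z := fun z hz h1 h2 =>
      hlink [a, z, b] (by simp [h1.ne, h2.ne.symm, hab]) (by simpa using ⟨ha, hz, hb⟩) (by simp)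
        (by simpa using ⟨hXa, h1, h2.symm, hYb.symm⟩)
    have hsub : insert a (insert b (Lᶜ.filter (G.Adj a) ∪ Lᶜ.filter (G.Adj b))) ⊆ Lᶜ := by
      intro z
      simp only [Finset.mem_insert, Finset.mem_union, Finset.mem_filter, Finset.mem_compl]
      rintro (rfl | rfl | h | h)
      exacts [ha, hb, h.1, h.1]
    have h1 := Finset.card_le_card hsub
    rw [Finset.card_insert_of_notMem (by simp [hab, hnab, G.adj_comm b a]),
      Finset.card_insert_of_notMem (by simp [hnab]), Finset.card_union_of_disjoint
        (Finset.disjoint_filter.2 fun z hz => hcommon z (Finset.mem_compl.1 hz))] at h1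
    have h2 := card_filter_add_card_filter_compl L (G.Adj a)
    have h3 := card_filter_add_card_filter_compl L (G.Adj b)
    have h4 := hdeg a
    have h5 := hdeg b
    omega
  have hwin : ∀ i ≠ i₀, ∀ v, v ∉ L → ∀ p, p + 3 ≤ (P i).length + 1 →
      ¬(G.Adj v ((s i :: P i ++ [s (i + 1)]).getD p (s i)) ∧
        G.Adj v ((s i :: P i ++ [s (i + 1)]).getD (p + 3) (s i))) := by
    rintro i - v hv p hp ⟨h1, h2⟩
    have hi : i ∈ T := by
      by_contra hi
      rw [h.eq_nil i hi] at hp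
      simp at hp
    obtain ⟨P', hP', hlt⟩ := h.exists_shorter hi hv hp h1 h2
    exact absurd (hmin P' hP') (by omega)
  have hrer : ∀ i ≠ i₀, ∀ v u w, v ∉ L → u ∉ L → w ∉ L → v ≠ u → v ≠ w → G.Adj (s i₀) u →
      G.Adj (s (i₀ + 1)) w → ∀ p < (P i).length,
      ¬(G.Adj v ((s i :: P i ++ [s (i + 1)]).getD p (s i)) ∧
        G.Adj v ((s i :: P i ++ [s (i + 1)]).getD (p + 2) (s i)) ∧
        G.Adj u ((s i :: P i ++ [s (i + 1)]).getD (p + 1) (s i)) ∧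
        G.Adj w ((s i :: P i ++ [s (i + 1)]).getD (p + 1) (s i))) := by
    rintro i - v u w hv hu hw hvu hvw hXu hYw p hp ⟨h1, h2, h3, h4⟩
    have hi : i ∈ T := by
      by_contra hi
      rw [h.eq_nil i hi] at hp
      simp at hp
    have huw : u ≠ w := by
      rintro rfl
      exact hAB u hu hXu hYw
    obtain ⟨P', hP'⟩ := h.exists_insert_of_reroute hi hi₀ hv hu hw hvu hvw huw hXu hYw.symm hp
      h1 h2 h3 h4
    exact hno P' hP'
  let Opp : V → V → Prop := fun u w =>
    G.Adj (s i₀) u ∧ G.Adj (s (i₀ + 1)) w ∨ G.Adj (s (i₀ + 1)) u ∧ G.Adj (s i₀) w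
  have hOpp : ∀ {u w}, u ∉ L → Opp u w → u ≠ w := by
    rintro u w hu (h | h) rfl
    · exact hAB u hu h.1 h.2
    · exact hAB u hu h.2 h.1
  have hrer' : ∀ i ≠ i₀, ∀ v u w, v ∉ L → u ∉ L → w ∉ L → v ≠ u → v ≠ w → Opp u w →
      ∀ p < (P i).length,
      ¬(G.Adj v ((s i :: P i ++ [s (i + 1)]).getD p (s i)) ∧
        G.Adj v ((s i :: P i ++ [s (i + 1)]).getD (p + 2) (s i)) ∧
        G.Adj u ((s i :: P i ++ [s (i + 1)]).getD (p + 1) (s i)) ∧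
        G.Adj w ((s i :: P i ++ [s (i + 1)]).getD (p + 1) (s i))) := by
    rintro i hi v u w hv hu hw hvu hvw (ho | ho) p hp hA
    · exact hrer i hi v u w hv hu hw hvu hvw ho.1 ho.2 p hp hA
    · exact hrer i hi v w u hv hw hu hvw hvu ho.2 ho.1 p hp ⟨hA.1, hA.2.1, hA.2.2.2, hA.2.2.1⟩
  have hloc := fun i (hi : i ≠ i₀) a b c d (ha : a ∉ L) (hb : b ∉ L) (hc : c ∉ L) (hd : d ∉ L)
      (hab : a ≠ b) (hcd : c ≠ d) (hac : Opp a c) (had : Opp a d) (hbc : Opp b c) (hbd : Opp b d) =>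
    countP_adj_le_of_window (G := G) (x := s i) (y := s (i + 1)) (a := a) (b := b) (c := c)
      (d := d) (h.length_le i) (by
        intro v hv
        refine hwin i hi v ?_
        simp only [List.mem_cons, List.not_mem_nil, or_false] at hv
        rcases hv with rfl | rfl | rfl | rfl
        exacts [ha, hb, hc, hd]) (by
        intro v u w hm
        have hac' := hOpp ha hac
        have had' := hOpp ha had
        have hbc' := hOpp hb hbc
        have hbd' := hOpp hb hbd
        simp only [List.mem_cons, List.not_mem_nil, or_false, Prod.mk.injEq] at hm
        rcases hm with ⟨rfl, rfl, rfl⟩ | ⟨rfl, rfl, rfl⟩ | ⟨rfl, rfl, rfl⟩ | ⟨rfl, rfl, rfl⟩ |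
          ⟨rfl, rfl, rfl⟩ | ⟨rfl, rfl, rfl⟩ | ⟨rfl, rfl, rfl⟩ | ⟨rfl, rfl, rfl⟩
        · exact hrer' i hi _ _ _ ha hb hc hab hac' hbc
        · exact hrer' i hi _ _ _ ha hb hd hab had' hbd
        · exact hrer' i hi _ _ _ hb ha hc hab.symm hbc' hac
        · exact hrer' i hi _ _ _ hb ha hd hab.symm hbd' had
        · exact hrer' i hi _ _ _ hc ha hd hac'.symm hcd had
        · exact hrer' i hi _ _ _ hc hb hd hbc'.symm hcd hbd
        · exact hrer' i hi _ _ _ hd ha hc had'.symm hcd.symm hac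
        · exact hrer' i hi _ _ _ hd hb hc hbd'.symm hcd.symm hbc)
  set w : V → ZMod k → ℕ := fun v i =>
    (s i :: P i).countP (G.Adj v ·) + (P i ++ [s (i + 1)]).countP (G.Adj v ·) with hw
  have hlocA := fun i (hi : i ≠ i₀) => hloc i hi a₁ a₂ b₁ b₂ ha₁.1 ha₂.1 hb₁.1 hb₂.1 hne_a hne_b
    (.inl ⟨ha₁.2, hb₁.2⟩) (.inl ⟨ha₁.2, hb₂.2⟩) (.inl ⟨ha₂.2, hb₁.2⟩) (.inl ⟨ha₂.2, hb₂.2⟩)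
  have hlocB := fun i (hi : i ≠ i₀) => hloc i hi b₁ b₂ a₁ a₂ hb₁.1 hb₂.1 ha₁.1 ha₂.1 hne_b hne_a
    (.inr ⟨hb₁.2, ha₁.2⟩) (.inr ⟨hb₁.2, ha₂.2⟩) (.inr ⟨hb₂.2, ha₁.2⟩) (.inr ⟨hb₂.2, ha₂.2⟩)
  have hsum : ∀ v, ∑ i, w v i = 2 * (L.filter (G.Adj v)).card := fun v =>
    sum_countP_add_countP h.isPathSystem hs (G.Adj v)
  have hW₀ : w a₁ i₀ + w a₂ i₀ + w b₁ i₀ + w b₂ i₀ = 4 := by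
    have e : ∀ v, w v i₀ =
        (if G.Adj (s i₀) v then 1 else 0) + if G.Adj (s (i₀ + 1)) v then 1 else 0 := fun v => by
      simp only [hw, hP₀, G.adj_comm _ v]
      simp [List.countP_cons]
    have n3 : ¬ G.Adj (s i₀) b₁ := fun hx => hAB b₁ hb₁.1 hx hb₁.2
    have n4 : ¬ G.Adj (s i₀) b₂ := fun hx => hAB b₂ hb₂.1 hx hb₂.2
    rw [e, e, e, e, if_pos ha₁.2, if_pos ha₂.2, if_pos hb₁.2, if_pos hb₂.2, if_neg n3, if_neg n4,
      if_neg (hAB a₁ ha₁.1 ha₁.2), if_neg (hAB a₂ ha₂.1 ha₂.2)]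
  have hWle : ∀ i ∈ Finset.univ, w a₁ i + w a₂ i + w b₁ i + w b₂ i ≤
      4 * ((P i).length + 1) + if i = i₀ then 0 else 4 := by
    intro i _
    by_cases hi : i = i₀
    · subst hi
      rw [hW₀, hP₀]
      simp
    · rw [if_neg hi]
      exact (hlocA i hi).1
  have hrhs : ∑ i, (4 * ((P i).length + 1) + if i = i₀ then 0 else 4) =
      4 * L.card + 4 * (k - 1) := by
    rw [Finset.sum_add_distrib, ← Finset.mul_sum, ← hcard]
    congr 1
    rw [Finset.sum_ite, Finset.sum_const_zero, zero_add, Finset.sum_const, Finset.filter_ne',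
      Finset.card_erase_of_mem (Finset.mem_univ _), Finset.card_univ, ZMod.card, smul_eq_mul,
        mul_comm]
  have hlhs : ∑ i, (w a₁ i + w a₂ i + w b₁ i + w b₂ i) = 2 * (L.filter (G.Adj a₁)).card +
      2 * (L.filter (G.Adj a₂)).card + 2 * (L.filter (G.Adj b₁)).card +
      2 * (L.filter (G.Adj b₂)).card := by
    simp only [Finset.sum_add_distrib, hsum]
  have hle := Finset.sum_le_sum hWle
  have p1 := hpair a₁ b₁ ha₁.1 hb₁.1 ha₁.2 hb₁.2
  have p2 := hpair a₂ b₂ ha₂.1 hb₂.1 ha₂.2 hb₂.2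
  have heq := (Finset.sum_eq_sum_iff_of_le hWle).1 (by
    rw [hrhs, hlhs] at hle ⊢
    omega)
  have hodd : k % 2 = 1 := by
    rw [hrhs, hlhs] at hle
    omega
  have hwalk : ∀ j : ℕ, j < k →
      (j % 2 = 0 → G.Adj a₁ (s (i₀ - j)) ∧ G.Adj a₂ (s (i₀ - j)) ∧ ¬ G.Adj b₁ (s (i₀ - j)) ∧
        ¬ G.Adj b₂ (s (i₀ - j))) ∧
      (j % 2 = 1 → G.Adj b₁ (s (i₀ - j)) ∧ G.Adj b₂ (s (i₀ - j)) ∧ ¬ G.Adj a₁ (s (i₀ - j)) ∧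
        ¬ G.Adj a₂ (s (i₀ - j))) := by
    intro j
    induction j with
    | zero =>
      intro _
      refine ⟨fun _ => ?_, by simp⟩
      simp only [Nat.cast_zero, sub_zero]
      exact ⟨ha₁.2.symm, ha₂.2.symm, fun hx => hAB b₁ hb₁.1 hx.symm hb₁.2,
        fun hx => hAB b₂ hb₂.1 hx.symm hb₂.2⟩
    | succ j ih =>
      intro hj
      have hi : i₀ - ((j + 1 : ℕ) : ZMod k) ≠ i₀ := by
        rw [Ne, sub_eq_self, ZMod.natCast_eq_zero_iff]
        exact Nat.not_dvd_of_pos_of_lt (by omega) hj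
      have e : i₀ - ((j + 1 : ℕ) : ZMod k) + 1 = i₀ - (j : ZMod k) := by push_cast; ring
      have hE := heq _ (Finset.mem_univ (i₀ - ((j + 1 : ℕ) : ZMod k)))
      rw [if_neg hi] at hE
      have hA := (hlocA _ hi).2 hE
      have hB := (hlocB _ hi).2 (by rw [← hE]; simp only [hw]; ring)
      rw [e] at hA hB
      obtain ⟨ih1, ih2⟩ := ih (by omega)
      refine ⟨fun h1 => ?_, fun h1 => ?_⟩
      · obtain ⟨h2, h3, h4, h5⟩ := ih2 (by omega)
        obtain ⟨h6, h7, h8, h9⟩ := hB h2 h3 h4 h5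
        exact ⟨h8, h9, h6, h7⟩
      · obtain ⟨h2, h3, h4, h5⟩ := ih1 (by omega)
        obtain ⟨h6, h7, h8, h9⟩ := hA h2 h3 h4 h5
        exact ⟨h8, h9, h6, h7⟩
  have hend := ((hwalk (k - 1) (by omega)).1 (by omega)).2.2.1
  rw [Nat.cast_sub (by omega)] at hend
  simp only [CharP.cast_eq_zero, Nat.cast_one, zero_sub, sub_neg_eq_add] at hend
  exact hend hb₁.2.symm

open scoped Classical in
theorem exists_isShortLinkage [Fintype V] (hs : Function.Injective s) (hk : 4 ≤ k)
    (hn : 11 * k - 3 ≤ Fintype.card V)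
    (hdeg : ∀ v, (Fintype.card V + 1) / 2 + k / 2 - 1 ≤ (Finset.univ.filter (G.Adj v)).card)
    (T : Finset (ZMod k)) : ∃ P, IsShortLinkage G s T P := by
  induction T using Finset.induction_on with
  | empty => exact ⟨fun _ => [], ⟨by simp, by simp, by simp⟩, by simp, by simp, by simp⟩
  | insert i T hi ih =>
    obtain ⟨P, hP, hmin⟩ := exists_minimalFor_of_wellFoundedLT (IsShortLinkage G s T)
      (fun P => ∑ i, (P i).length) ih
    refine hP.exists_insert hi hs hk hn hdeg fun P' hP' => ?_
    exact le_of_not_gt fun hlt => absurd (hmin hP' hlt.le) (not_le.2 hlt)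

/-- A path system whose members are the interiors of paths from `s i` to `s (i + 1)`. -/
structure IsLinkage (G : SimpleGraph V) (s : ZMod k → V) (P : ZMod k → List V) : Prop where
  isPathSystem : IsPathSystem s P
  isChain : ∀ i, (s i :: P i ++ [s (i + 1)]).IsChain G.Adj

/-- A linkage whose total length is as large as possible. -/
structure IsMaxLinkage (G : SimpleGraph V) (s : ZMod k → V) (P : ZMod k → List V) : Prop extends
    IsLinkage G s P where
  sum_length_le : ∀ P', IsLinkage G s P' → ∑ i, (P' i).length ≤ ∑ i, (P i).length

theorem IsMaxLinkage.length_le (h : IsMaxLinkage G s P) {i : ZMod k} {A M B N : List V} {x y : V}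
    (e : s i :: P i ++ [s (i + 1)] = A ++ x :: (M ++ y :: B)) (hN : N.Nodup)
    (hN' : ∀ z ∈ N, z ∉ pathSupport s P) (hc : (x :: (N ++ [y])).IsChain G.Adj) :
    N.length ≤ M.length := by
  by_contra! hlt
  obtain ⟨L, hL, hc, hlen, -⟩ := h.isPathSystem.exists_reroute (h.isChain i) e hN hN' hc
  refine absurd (h.sum_length_le (Function.update P i L) ⟨hL, fun j => ?_⟩)
    (not_le.2 (Finset.sum_lt_sum (fun j _ => ?_) ⟨i, Finset.mem_univ _, ?_⟩))
  · by_cases e : j = i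
    · subst e; simpa using hc
    · simpa [e] using h.isChain j
  · by_cases e : j = i
    · subst e
      rw [Function.update_self]
      omega
    · rw [Function.update_of_ne e]
  · rw [Function.update_self]
    omega

open scoped Classical in
theorem IsMaxLinkage.two_mul_card_filter_adj_le (h : IsMaxLinkage G s P)
    (hs : Function.Injective s) {v : V} (hv : v ∉ pathSupport s P) :
    2 * ((pathSupport s P).filter (G.Adj v)).card ≤ (pathSupport s P).card := by
  rw [← sum_countP_add_countP h.isPathSystem hs, h.isPathSystem.card_pathSupport hs]
  refine Finset.sum_le_sum fun i _ => ?_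
  have := List.countP_dropLast_add_countP_tail_le (p := (G.Adj v ·)) (q := (G.Adj v ·))
    (l := s i :: P i ++ [s (i + 1)]) (List.isChain_iff_forall_rel_of_append_cons_cons.2 ?_)
  · rw [List.dropLast_concat] at this
    simpa using this
  · rintro x y A B e ⟨h1, h2⟩
    have := h.length_le (N := [v]) (M := []) e (List.nodup_singleton v) (by simpa using hv)
      (by simp_all [G.adj_comm])
    simp at this

open scoped Classical in
theorem IsMaxLinkage.card_compl_le [Fintype V] (h : IsMaxLinkage G s P)
    (hs : Function.Injective s)
    (hdeg : ∀ v, (Fintype.card V + 1) / 2 + k / 2 - 1 ≤ (Finset.univ.filter (G.Adj v)).card)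
    {v : V} (hv : v ∉ pathSupport s P) :
    (pathSupport s P)ᶜ.card + 2 * (k / 2) ≤
      2 * ((pathSupport s P)ᶜ.filter (G.Adj v)).card + 2 := by
  have h1 := h.two_mul_card_filter_adj_le hs hv
  have h2 := card_filter_add_card_filter_compl (pathSupport s P) (G.Adj v)
  have h3 := hdeg v
  have h4 := Finset.card_add_card_compl (pathSupport s P)
  omega

open scoped Classical in
theorem IsMaxLinkage.exists_spanning_compl [Fintype V] (h : IsMaxLinkage G s P)
    (hs : Function.Injective s) (hk : 4 ≤ k)
    (hdeg : ∀ v, (Fintype.card V + 1) / 2 + k / 2 - 1 ≤ (Finset.univ.filter (G.Adj v)).card)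
    {u v : V} (hu : u ∉ pathSupport s P) (hv : v ∉ pathSupport s P) (huv : u ≠ v) :
    ∃ R : List V, R.Nodup ∧ (∀ x, x ∈ R ↔ x ∉ pathSupport s P) ∧ R.IsChain G.Adj ∧
      R.head? = some u ∧ R.getLast? = some v ∧ R.length = (pathSupport s P)ᶜ.card := by
  obtain ⟨R, h1, h2, h3, h4, h5⟩ := exists_spanning_isChain G (pathSupport s P)ᶜ
    (Finset.mem_compl.2 hu) (Finset.mem_compl.2 hv) huv (by
      intro x hx y hy _ _
      have h1 := h.card_compl_le hs hdeg (Finset.mem_compl.1 hx)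
      have h2 := h.card_compl_le hs hdeg (Finset.mem_compl.1 hy)
      omega)
  refine ⟨R, h1, fun x => by rw [h2, Finset.mem_compl], h3, h4, h5, ?_⟩
  rw [← List.toFinset_card_of_nodup h1]
  congr 1
  ext x
  simp [h2]

open scoped Classical in
theorem IsMaxLinkage.card_compl_le_length [Fintype V] (h : IsMaxLinkage G s P)
    (hs : Function.Injective s) (hk : 4 ≤ k)
    (hdeg : ∀ v, (Fintype.card V + 1) / 2 + k / 2 - 1 ≤ (Finset.univ.filter (G.Adj v)).card)
    {i : ZMod k} {A M B : List V} {x y u v : V}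
    (e : s i :: P i ++ [s (i + 1)] = A ++ x :: (M ++ y :: B))
    (hu : u ∉ pathSupport s P) (hv : v ∉ pathSupport s P) (huv : u ≠ v) (hxu : G.Adj x u)
    (hvy : G.Adj v y) : (pathSupport s P)ᶜ.card ≤ M.length := by
  obtain ⟨R, h1, h2, h3, h4, h5, h6⟩ := h.exists_spanning_compl hs hk hdeg hu hv huv
  rw [← h6]
  refine h.length_le e h1 (fun z hz => (h2 z).1 hz) ?_
  rw [List.isChain_cons]
  refine ⟨?_, ?_⟩
  · rw [List.head?_append, h4]
    simpa using hxu
  · rw [List.isChain_append]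
    refine ⟨h3, by simp, ?_⟩
    rw [h5]
    simpa using hvy

open scoped Classical in
theorem _root_.IsPathSystem.card_filter_mul_le (h : IsPathSystem s P) (hs : Function.Injective s)
    {p : V → Prop} {g : ℕ} (hg : ∀ i A x M y B, s i :: P i ++ [s (i + 1)] =
      A ++ x :: (M ++ y :: B) →
      p x → p y → g ≤ M.length) :
    ((pathSupport s P).filter p).card * (g + 1) ≤ (pathSupport s P).card + k * g := by
  rw [h.card_filter_pathSupport hs, h.card_pathSupport hs, Finset.sum_mul]
  calc _ ≤ ∑ i : ZMod k, ((P i).length + 1 + g) := Finset.sum_le_sum fun i _ => by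
        have := List.countP_mul_le_of_gap (p := (p ·)) (g := g) (s i :: P i) ?_
        · simpa using this
        · intro A x M y B e hx hy
          refine hg i A x M y (B ++ [s (i + 1)]) ?_ (by simpa using hx) (by simpa using hy)
          rw [e]
          simp
    _ = _ := by
        rw [Finset.sum_add_distrib, Finset.sum_const, Finset.card_univ, ZMod.card, smul_eq_mul]

open scoped Classical in
theorem _root_.IsPathSystem.sum_countP_eq (h : IsPathSystem s P) (hs : Function.Injective s)
    {p : V → Prop} : ∑ i, (s i :: P i ++ [s (i + 1)]).countP (p ·) =
      ((pathSupport s P).filter p).card + (Finset.univ.filter fun i => p (s i)).card := by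
  have e : ∀ i, (s i :: P i ++ [s (i + 1)]).countP (p ·) =
      (s i :: P i).countP (p ·) + if p (s (i + 1)) then 1 else 0 := fun i => by
    rw [List.countP_append]
    simp [List.countP_cons]
  simp only [e, Finset.sum_add_distrib]
  rw [h.card_filter_pathSupport hs, Finset.card_filter]
  congr 1
  exact Equiv.sum_comp (Equiv.addRight (1 : ZMod k)) fun i => if p (s i) then 1 else 0

open scoped Classical in
theorem _root_.IsPathSystem.card_filter_add_mul_le (h : IsPathSystem s P)
    (hs : Function.Injective s)
    {p : V → Prop} {g : ℕ} (hg : ∀ i A x M y B, s i :: P i ++ [s (i + 1)] =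
      A ++ x :: (M ++ y :: B) →
      p x → p y → g ≤ M.length) :
    (((pathSupport s P).filter p).card + (Finset.univ.filter fun i => p (s i)).card) * (g + 1) ≤
      (pathSupport s P).card + k * (g + 1) := by
  rw [← h.sum_countP_eq hs, h.card_pathSupport hs, Finset.sum_mul]
  calc _ ≤ ∑ i : ZMod k, ((P i).length + 1 + (g + 1)) := Finset.sum_le_sum fun i _ => by
        have := List.countP_mul_le_of_gap (p := (p ·)) (g := g) (s i :: P i ++ [s (i + 1)]) ?_
        · simp only [List.length_append, List.length_cons, List.length_nil] at this
          omega
        · intro A x M y B e hx hy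
          exact hg i A x M y B e (by simpa using hx) (by simpa using hy)
    _ = _ := by
        rw [Finset.sum_add_distrib, Finset.sum_const, Finset.card_univ, ZMod.card, smul_eq_mul]

open scoped Classical in
/-- The vertex `x` has at least `d` neighbours outside of `L`. -/
def HasOutNeighbors [Fintype V] (G : SimpleGraph V) (L : Finset V) (d : ℕ) (x : V) : Prop :=
  d ≤ (Lᶜ.filter (G.Adj x)).card

open scoped Classical in
/-- Double counting of the edges between `L` and its complement. -/
theorem card_compl_mul_le [Fintype V] (G : SimpleGraph V) (L : Finset V) {δ : ℕ}
    (hdeg : ∀ v, δ ≤ (Finset.univ.filter (G.Adj v)).card) :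
    Lᶜ.card * (δ + 1) + (L.filter (G.HasOutNeighbors L 2)).card ≤
      (L.filter (G.HasOutNeighbors L 1)).card +
      Lᶜ.card * ((L.filter (G.HasOutNeighbors L 2)).card + Lᶜ.card) := by
  have h1 : ∑ u ∈ Lᶜ, (L.filter (G.Adj u)).card = ∑ x ∈ L, (Lᶜ.filter (G.Adj x)).card := by
    have := Finset.sum_card_bipartiteAbove_eq_sum_card_bipartiteBelow (s := Lᶜ) (t := L) G.Adj
    simp only [Finset.bipartiteAbove, Finset.bipartiteBelow] at this
    rw [this]
    refine Finset.sum_congr rfl fun x _ => ?_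
    simp only [G.adj_comm x]
  have h2 : Lᶜ.card * (δ + 1) ≤ ∑ u ∈ Lᶜ, ((L.filter (G.Adj u)).card + Lᶜ.card) := by
    rw [← smul_eq_mul]
    refine Finset.card_nsmul_le_sum _ _ _ fun u hu => ?_
    have h1 := card_filter_add_card_filter_compl L (G.Adj u)
    have h2 := hdeg u
    have h3 : (Lᶜ.filter (G.Adj u)).card < Lᶜ.card := Finset.card_lt_card
      (Finset.filter_ssubset.2 ⟨u, hu, G.irrefl⟩)
    omega
  have h3 : ∑ x ∈ L, ((Lᶜ.filter (G.Adj x)).card +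
      if G.HasOutNeighbors L 2 x then 1 else 0) ≤
      ∑ x ∈ L, ((if G.HasOutNeighbors L 1 x then 1 else 0) +
        Lᶜ.card * if G.HasOutNeighbors L 2 x then 1 else 0) := by
    refine Finset.sum_le_sum fun x _ => ?_
    have := Finset.card_filter_le Lᶜ (G.Adj x)
    unfold HasOutNeighbors
    split_ifs <;> omega
  rw [Finset.sum_add_distrib, Finset.sum_add_distrib, ← Finset.mul_sum, ← h1] at h3
  rw [Finset.sum_add_distrib, Finset.sum_const, smul_eq_mul] at h2
  rw [mul_add _ (Finset.card _) (Finset.card _), Finset.card_filter (G.HasOutNeighbors L 1),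
    Finset.card_filter (G.HasOutNeighbors L 2)]
  omega

end Linkage

end SimpleGraph

theorem Nat.five_mul_le_of_linkage_counts {c h k δ f w : ℕ} (hk : 4 ≤ k) (hn : 11 * k ≤ c + h + 3)
    (hδ : c + h + 2 * (k / 2) ≤ 2 * (δ + 1)) (h4 : 4 ≤ h) (hf : 2 * f ≤ c + k)
    (hw : w * (h + 1) ≤ c + k * h) (he : h * (δ + 1) + w ≤ f + h * (w + h)) :
    5 * k ≤ h + 4 ∧ c ≤ h + k + 4 := by
  have hK : k ≤ 2 * (k / 2) + 1 := by omega
  generalize k / 2 = K at *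
  zify at *
  have key : (c : ℤ) * (h - 1) ^ 2 ≤ h * (h + 1) * (h - k + 1) + k * (h + 1) +
      2 * k * h * (h - 1) := by
    have e1 : (h : ℤ) * (c + h + 2 * K) ≤ h * (2 * (δ + 1)) := by gcongr
    have e2 : (h : ℤ) * (c - h + 2 * K) ≤ c + k + 2 * (h - 1) * w := by linarith
    have e3 : (h + 1 : ℤ) * (h * (c - h + 2 * K)) ≤ (h + 1) * (c + k + 2 * (h - 1) * w) := by gcongr
    have e4 : 2 * (h - 1 : ℤ) * (w * (h + 1)) ≤ 2 * (h - 1) * (c + k * h) := by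
      apply mul_le_mul_of_nonneg_left hw; linarith
    have e5 : (h * (h + 1) : ℤ) * k ≤ (h * (h + 1)) * (2 * K + 1) := by gcongr
    linarith
  have h5 : (5 * k : ℤ) ≤ h + 4 := by
    by_contra! hlt
    have e1 : (11 * k - 3 - h : ℤ) * (h - 1) ^ 2 ≤ c * (h - 1) ^ 2 := by
      apply mul_le_mul_of_nonneg_right _ (sq_nonneg _); linarith
    have e2 : (0 : ℤ) ≤ (5 * k - 5 - h) * (h - 1) ^ 2 :=
      mul_nonneg (by linarith) (sq_nonneg _)
    rcases h4.eq_or_lt with h' | h'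
    · rw [← h'] at key e1
      linarith
    · have : (h - 5 : ℤ) * h ≥ 0 := mul_nonneg (by linarith) (by linarith)
      nlinarith
  refine ⟨h5, ?_⟩
  by_contra! hlt
  have e1 : (h + k + 5 : ℤ) * (h - 1) ^ 2 ≤ c * (h - 1) ^ 2 := by
    apply mul_le_mul_of_nonneg_right _ (sq_nonneg _); linarith
  nlinarith

theorem Nat.add_le_of_linkage_counts {c h k δ f w m : ℕ} (hk : 4 ≤ k)
    (h1 : 5 * k ≤ h + 4) (h2 : c ≤ h + k + 4) (hf : 2 * f ≤ c + k)
    (he : h * (δ + 1) + w ≤ f + h * (w + h)) (hm : (w + m) * (h + 1) ≤ c + k * (h + 1)) :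
    w + m ≤ k + 1 ∧ δ + 1 ≤ w + h := by
  constructor
  · by_contra! hlt
    have : (k + 2) * (h + 1) ≤ (w + m) * (h + 1) := Nat.mul_le_mul_right _ hlt
    nlinarith
  · by_contra! hlt
    have : h * (w + h + 1) ≤ h * (δ + 1) := Nat.mul_le_mul_left _ (by omega)
    nlinarith

theorem List.exists_eq_cons_append_of_countP_pos {α : Type*} {p : α → Bool} {l : List α}
    (h : 0 < l.countP p) : ∃ M y B, l = M ++ y :: B ∧ p y ∧ ∀ z ∈ M, ¬ p z := by
  induction l with
  | nil => simp at h
  | cons a l ih =>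
    by_cases ha : p a
    · exact ⟨[], a, l, by simp, ha, by simp⟩
    · rw [List.countP_cons_of_neg ha] at h
      obtain ⟨M, y, B, rfl, hy, hM⟩ := ih h
      exact ⟨a :: M, y, B, by simp, hy, by simpa [ha] using hM⟩

theorem List.exists_eq_append_of_two_le_countP {α : Type*} {p : α → Bool} {l : List α}
    (h : 2 ≤ l.countP p) :
    ∃ A x M y B, l = A ++ x :: (M ++ y :: B) ∧ p x ∧ p y ∧ ∀ z ∈ M, ¬ p z := by
  obtain ⟨A, x, l', rfl, hx, hA⟩ := List.exists_eq_cons_append_of_countP_pos (p := p) (l := l)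
    (by omega)
  rw [List.countP_append, List.countP_eq_zero.2 hA, List.countP_cons_of_pos hx] at h
  obtain ⟨M, y, B, rfl, hy, hM⟩ := List.exists_eq_cons_append_of_countP_pos (p := p) (l := l')
    (by omega)
  exact ⟨A, x, M, y, B, rfl, hx, hy, hM⟩

theorem Finset.exists_injective_of_card_le {ι α : Type*} [Fintype ι] [DecidableEq α]
    {Z : ι → Finset α} (h : ∀ i, Fintype.card ι ≤ (Z i).card) :
    ∃ z : ι → α, Function.Injective z ∧ ∀ i, z i ∈ Z i := by
  refine (Finset.all_card_le_biUnion_card_iff_exists_injective Z).1 fun s => ?_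
  rcases s.eq_empty_or_nonempty with rfl | ⟨i, hi⟩
  · simp
  · exact (Finset.card_le_univ s).trans ((h i).trans
      (Finset.card_le_card (Finset.subset_biUnion_of_mem Z hi)))

namespace SimpleGraph

section Linkage

variable {V : Type*} {G : SimpleGraph V} {k : ℕ} [NeZero k] {s : ZMod k → V}
  {P : ZMod k → List V}

/-- Link one pair through a given list and all other pairs through single vertices. -/
theorem exists_isLinkage_of_card_le [DecidableEq V] {i₀ : ZMod k} {L : List V} (hL : L.Nodup)
    (hLs : ∀ i, s i ∉ L) (hc : (s i₀ :: L ++ [s (i₀ + 1)]).IsChain G.Adj) {Z : ZMod k → Finset V}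
    (hZ : ∀ i ≠ i₀, k ≤ (Z i).card) (hZL : ∀ i, ∀ z ∈ Z i, z ∉ L)
    (hZs : ∀ i j, s j ∉ Z i) (hZadj : ∀ i, ∀ z ∈ Z i, G.Adj (s i) z ∧ G.Adj z (s (i + 1))) :
    ∃ P', IsLinkage G s P' ∧ ∑ i, (P' i).length + 1 = L.length + k := by
  obtain ⟨z, hz, hzZ⟩ := Finset.exists_injective_of_card_le
    (Z := fun i : {i : ZMod k // i ≠ i₀} => Z i)
    (fun i => ((Fintype.card_subtype_le _).trans_eq (ZMod.card k)).trans (hZ i i.2))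
  refine ⟨fun i => if h : i = i₀ then L else [z ⟨i, h⟩], ⟨⟨fun i => ?_, fun i j hij x => ?_,
    fun i j => ?_⟩, fun i => ?_⟩, ?_⟩
  · by_cases h : i = i₀
    · simpa [h] using hL
    · simp [h]
  · by_cases h : i = i₀ <;> by_cases h' : j = i₀
    · exact absurd (h.trans h'.symm) hij
    · simp only [h, h', dite_true, dite_false, List.mem_singleton]
      rintro hx rfl
      exact hZL _ _ (hzZ ⟨j, h'⟩) hx
    · simp only [h, h', dite_true, dite_false, List.mem_singleton]
      rintro rfl hx
      exact hZL _ _ (hzZ ⟨i, h⟩) hx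
    · simp only [h, h', dite_false, List.mem_singleton]
      rintro rfl hx
      exact hij (congrArg Subtype.val (hz hx))
  · by_cases h : i = i₀
    · simpa [h] using hLs j
    · simp only [h, dite_false, List.mem_singleton]
      intro hx
      exact hZs i j (hx ▸ hzZ ⟨i, h⟩)
  · by_cases h : i = i₀
    · subst h
      simpa using hc
    · simpa [h] using hZadj i _ (hzZ ⟨i, h⟩)
  · rw [← Finset.add_sum_erase _ _ (Finset.mem_univ i₀), Finset.sum_congr rfl (g := fun _ => 1)]
    · simp only [dite_true, Finset.sum_const, smul_eq_mul, mul_one,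
        Finset.card_erase_of_mem (Finset.mem_univ i₀), Finset.card_univ, ZMod.card]
      have := NeZero.pos k
      omega
    · intro i hi
      simp [Finset.ne_of_mem_erase hi]

end Linkage

end SimpleGraph

theorem List.isInfix_of_cons_append_eq {α : Type*} {a t x y : α} {l A M B : List α}
    (e : a :: l ++ [t] = A ++ x :: (M ++ y :: B)) : M <:+: l := by
  have e' : l ++ [t] = (A ++ [x]).tail ++ (M ++ y :: B) := by
    have := congrArg List.tail e
    cases A <;> simpa using this
  have e'' := congrArg List.dropLast e'
  rw [List.dropLast_concat, List.dropLast_append_of_ne_nil (by simp),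
    List.dropLast_append_of_ne_nil (by simp)] at e''
  exact ⟨_, _, by rw [e'', List.append_assoc]⟩

namespace SimpleGraph

section Linkage

variable {V : Type*} {G : SimpleGraph V} {k : ℕ} [NeZero k] {s : ZMod k → V}
  {P : ZMod k → List V}

open scoped Classical in
theorem HasOutNeighbors.exists_ne [Fintype V] {L : Finset V} {x y : V}
    (hx : G.HasOutNeighbors L 2 x) (hy : G.HasOutNeighbors L 1 y) :
    ∃ u v, u ∉ L ∧ v ∉ L ∧ u ≠ v ∧ G.Adj x u ∧ G.Adj v y := by
  obtain ⟨v, hv⟩ := Finset.card_pos.1 hy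
  obtain ⟨u, hu, huv⟩ := Finset.exists_mem_ne hx v
  simp only [Finset.mem_filter, Finset.mem_compl] at hu hv
  exact ⟨u, v, hu.1, hv.1, huv, hu.2, hv.2.symm⟩

open scoped Classical in
theorem IsMaxLinkage.counts_le [Fintype V] (h : IsMaxLinkage G s P)
    (hs : Function.Injective s) (hk : 4 ≤ k) (hn : 11 * k - 3 ≤ Fintype.card V)
    (hdeg : ∀ v, (Fintype.card V + 1) / 2 + k / 2 - 1 ≤ (Finset.univ.filter (G.Adj v)).card)
    {v : V} (hv : v ∉ pathSupport s P) {w m : ℕ}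
    (hw : ((pathSupport s P).filter (G.HasOutNeighbors (pathSupport s P) 2)).card = w)
    (hm : (Finset.univ.filter fun i =>
      G.HasOutNeighbors (pathSupport s P) 2 (s i)).card = m) :
    2 * ((pathSupport s P).filter (G.HasOutNeighbors (pathSupport s P) 1)).card ≤
      (pathSupport s P).card + k ∧
    w + m ≤ k ∧ m ≤ w ∧
    (Fintype.card V + 1) / 2 + k / 2 ≤ w + (pathSupport s P)ᶜ.card ∧
    ((pathSupport s P).filter (G.HasOutNeighbors (pathSupport s P) 2) \ Finset.univ.image s).card +
      m = w := by
  have hgap := @IsMaxLinkage.card_compl_le_length V G k s P _ _ h hs hk hdeg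
  have hch := Finset.card_add_card_compl (pathSupport s P)
  have h4 : 4 ≤ (pathSupport s P)ᶜ.card := by
    have h1 := h.card_compl_le hs hdeg hv
    have h2 : ((pathSupport s P)ᶜ.filter (G.Adj v)).card < (pathSupport s P)ᶜ.card :=
      Finset.card_lt_card (Finset.filter_ssubset.2 ⟨v, Finset.mem_compl.2 hv, G.irrefl⟩)
    omega
  have hgapW : ∀ i A x M y B, s i :: P i ++ [s (i + 1)] = A ++ x :: (M ++ y :: B) →
      G.HasOutNeighbors (pathSupport s P) 2 x →
      G.HasOutNeighbors (pathSupport s P) 2 y → (pathSupport s P)ᶜ.card ≤ M.length := by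
    intro i A x M y B e hx hy
    obtain ⟨u, v, hu, hv, huv, hxu, hvy⟩ := HasOutNeighbors.exists_ne hx (Nat.le_of_succ_le hy)
    exact hgap e hu hv huv hxu hvy
  have hgapF : ∀ i A x M y B, s i :: P i ++ [s (i + 1)] = A ++ x :: (M ++ y :: B) →
      G.HasOutNeighbors (pathSupport s P) 1 x →
      G.HasOutNeighbors (pathSupport s P) 1 y → 1 ≤ M.length := by
    intro i A x M y B e hx hy
    obtain ⟨u, hu⟩ := Finset.card_pos.1 hx
    obtain ⟨v, hv⟩ := Finset.card_pos.1 hy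
    simp only [Finset.mem_filter, Finset.mem_compl] at hu hv
    by_cases huv : u = v
    · subst huv
      exact h.length_le e (List.nodup_singleton u) (by simpa using hu.1)
        (by simpa using ⟨hu.2, hv.2.symm⟩)
    · have := hgap e hu.1 hv.1 huv hu.2 hv.2.symm
      omega
  have hF := h.isPathSystem.card_filter_mul_le hs hgapF
  have hW := h.isPathSystem.card_filter_mul_le hs hgapW
  have hWm := h.isPathSystem.card_filter_add_mul_le hs hgapW
  have hE := card_compl_mul_le G (pathSupport s P) hdeg
  have hsum := h.isPathSystem.sum_countP_eq hs
    (p := fun x => G.HasOutNeighbors (pathSupport s P) 2 x)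
  have hS : (Finset.univ.image s).card = k := by
    rw [Finset.card_image_of_injective _ hs, Finset.card_univ, ZMod.card]
  have hSm : ((pathSupport s P).filter (G.HasOutNeighbors (pathSupport s P) 2) ∩
      Finset.univ.image s).card = m := by
    rw [← hm, ← Finset.card_image_of_injective _ hs]
    congr 1
    ext x
    simp only [Finset.mem_inter, Finset.mem_filter, Finset.mem_image, Finset.mem_univ, true_and]
    constructor
    · rintro ⟨⟨-, h1⟩, i, rfl⟩
      exact ⟨i, h1, rfl⟩
    · rintro ⟨i, h1, rfl⟩
      exact ⟨⟨terminal_mem_pathSupport i, h1⟩, i, rfl⟩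
  have hWS := Finset.card_sdiff_add_card_inter ((pathSupport s P).filter
    (G.HasOutNeighbors (pathSupport s P) 2)) (Finset.univ.image s)
  rw [hSm, hw] at hWS
  rw [hw] at hW hE
  rw [hw, hm] at hWm hsum
  obtain ⟨h5, h6⟩ := Nat.five_mul_le_of_linkage_counts hk (by omega) (by omega) h4
    (by omega) hW hE
  obtain ⟨h7, h8⟩ := Nat.add_le_of_linkage_counts hk h5 h6 (by omega) hE hWm
  refine ⟨by omega, ?_, by omega, by omega, hWS⟩
  by_contra! hlt
  obtain ⟨i, -, hi⟩ : ∃ i ∈ Finset.univ, 1 < (s i :: P i ++ [s (i + 1)]).countP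
      (fun x => decide (G.HasOutNeighbors (pathSupport s P) 2 x)) := by
    refine Finset.exists_lt_of_sum_lt ?_
    rw [hsum, Finset.sum_const, Finset.card_univ, ZMod.card]
    simpa using hlt
  obtain ⟨A, x, M, y, B, e, hx, hy, hM⟩ := List.exists_eq_append_of_two_le_countP hi
  have hMh := hgapW i A x M y B e (by simpa using hx) (by simpa using hy)
  have hMP := List.isInfix_of_cons_append_eq e
  have hsub : M.toFinset ∪ (Finset.univ.image s ∪ ((pathSupport s P).filter
    (G.HasOutNeighbors (pathSupport s P) 2) \ Finset.univ.image s)) ⊆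
      pathSupport s P := by
    refine Finset.union_subset (fun z hz => ?_) (Finset.union_subset (fun z hz => ?_)
      (Finset.sdiff_subset.trans (Finset.filter_subset _ _)))
    · exact mem_pathSupport_of_mem (hMP.subset (List.mem_toFinset.1 hz))
    · obtain ⟨j, -, rfl⟩ := Finset.mem_image.1 hz
      exact terminal_mem_pathSupport j
  have hcard := Finset.card_le_card hsub
  rw [Finset.card_union_of_disjoint, Finset.card_union_of_disjoint Finset.disjoint_sdiff,
    List.toFinset_card_of_nodup ((h.isPathSystem.nodup i).sublist hMP.sublist), hS] at hcard
  · omega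
  · rw [Finset.disjoint_left]
    intro z hz hz'
    rw [List.mem_toFinset] at hz
    rcases Finset.mem_union.1 hz' with hz' | hz'
    · obtain ⟨j, -, rfl⟩ := Finset.mem_image.1 hz'
      exact h.isPathSystem.notMem i j (hMP.subset hz)
    · exact hM z hz (by simpa using (Finset.mem_filter.1 (Finset.mem_sdiff.1 hz').1).2)

open scoped Classical in
theorem card_add_card_filter_adj_le {L A : Finset V} {x : V} (hx : x ∈ L) (hA : A ⊆ L)
    (hxA : x ∉ A) :
    A.card + (L.filter (G.Adj x)).card + 1 ≤ (A.filter (G.Adj x)).card + L.card := by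
  have h1 : insert x (A.filter (¬ G.Adj x ·)) ⊆ L.filter (¬ G.Adj x ·) := by
    intro z hz
    rcases Finset.mem_insert.1 hz with rfl | hz
    · exact Finset.mem_filter.2 ⟨hx, G.irrefl⟩
    · exact Finset.mem_filter.2 ⟨hA (Finset.mem_filter.1 hz).1, (Finset.mem_filter.1 hz).2⟩
  have h2 := Finset.card_le_card h1
  rw [Finset.card_insert_of_notMem (by simp [hxA])] at h2
  have h3 := Finset.card_filter_add_card_filter_not (s := A) (G.Adj x)
  have h4 := Finset.card_filter_add_card_filter_not (s := L) (G.Adj x)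
  omega

open scoped Classical in
/-- Few vertices of `A` are non-adjacent to a vertex of `L` with few neighbours outside of `L`. -/
theorem card_add_le_of_not_hasOutNeighbors [Fintype V] {L A : Finset V} {δ d : ℕ}
    (hdeg : ∀ v, δ ≤ (Finset.univ.filter (G.Adj v)).card) {x : V} (hx : x ∈ L) (hA : A ⊆ L)
    (hxA : x ∉ A) (hd : ¬ G.HasOutNeighbors L (d + 1) x) :
    A.card + δ + 1 ≤ (A.filter (G.Adj x)).card + L.card + d := by
  have h1 := card_add_card_filter_adj_le (G := G) hx hA hxA
  have h2 := card_filter_add_card_filter_compl L (G.Adj x)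
  have h3 := hdeg x
  unfold HasOutNeighbors at hd
  omega

open scoped Classical in
theorem IsMaxLinkage.pathSupport_eq_univ [Fintype V] (h : IsMaxLinkage G s P)
    (hs : Function.Injective s) (hk : 4 ≤ k) (hn : 11 * k - 3 ≤ Fintype.card V)
    (hdeg : ∀ v, (Fintype.card V + 1) / 2 + k / 2 - 1 ≤ (Finset.univ.filter (G.Adj v)).card) :
    pathSupport s P = Finset.univ := by
  by_contra hne
  obtain ⟨v₀, hv₀⟩ : ∃ v, v ∉ pathSupport s P := by
    simpa [Finset.eq_univ_iff_forall] using hne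
  obtain ⟨w, hw⟩ : ∃ w, ((pathSupport s P).filter
    (G.HasOutNeighbors (pathSupport s P) 2)).card = w := ⟨_, rfl⟩
  obtain ⟨m, hm⟩ : ∃ m, (Finset.univ.filter fun i =>
    G.HasOutNeighbors (pathSupport s P) 2 (s i)).card = m := ⟨_, rfl⟩
  obtain ⟨hF, hwm, hmw, hδw, hWS⟩ := h.counts_le hs hk hn hdeg hv₀ hw hm
  have hch := Finset.card_add_card_compl (pathSupport s P)
  have hC := h.isPathSystem.card_pathSupport hs
  rw [Finset.sum_add_distrib, Finset.sum_const, Finset.card_univ, ZMod.card, smul_eq_mul,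
    mul_one] at hC
  have hS : (Finset.univ.image s).card = k := by
    rw [Finset.card_image_of_injective _ hs, Finset.card_univ, ZMod.card]
  have hmax := h.sum_length_le
  have hspan := @IsMaxLinkage.exists_spanning_compl V G k s P _ _ h hs hk hdeg
  have hterm : ∀ i, s i ∈ pathSupport s P := terminal_mem_pathSupport
  set C := pathSupport s P with hCdef
  set S := Finset.univ.image s with hSdef
  have hmemS : ∀ i, s i ∈ S := fun i => Finset.mem_image_of_mem s (Finset.mem_univ i)
  obtain ⟨c, hc⟩ : ∃ c, C.card = c := ⟨_, rfl⟩
  obtain ⟨b, hb⟩ : ∃ b, Cᶜ.card = b := ⟨_, rfl⟩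
  obtain ⟨f, hf⟩ : ∃ f, (C.filter (G.HasOutNeighbors C 1)).card = f := ⟨_, rfl⟩
  obtain ⟨δ, hδ⟩ : ∃ δ, (Fintype.card V + 1) / 2 + k / 2 - 1 = δ := ⟨_, rfl⟩
  rw [hc] at hF hch hC
  rw [hb] at hδw hch
  rw [hf] at hF
  rw [hδ] at hdeg
  have hsparse : ∀ {A : Finset V} {x : V} {d : ℕ}, x ∈ C → A ⊆ C → x ∉ A →
      ¬ G.HasOutNeighbors C (d + 1) x → A.card + δ + 1 ≤ (A.filter (G.Adj x)).card + c + d := by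
    intro A x d hx hA hxA hd
    rw [← hc]
    exact card_add_le_of_not_hasOutNeighbors hdeg hx hA hxA hd
  obtain ⟨j₀, hj₀⟩ : ∃ i, ¬ G.HasOutNeighbors C 2 (s i) := by
    by_contra! hno
    rw [Finset.filter_true_of_mem fun i _ => hno i, Finset.card_univ, ZMod.card] at hm
    omega
  have hcδ := hsparse (hterm j₀) (Finset.empty_subset C) (by simp) hj₀
  simp only [Finset.card_empty, Finset.filter_empty] at hcδ
  obtain ⟨a, haC, ha⟩ : ∃ a ∈ C, ¬ G.HasOutNeighbors C 1 a := by
    by_contra! hno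
    rw [Finset.filter_true_of_mem hno] at hf
    omega
  have hcδ' := hsparse haC (Finset.empty_subset C) (by simp) ha
  simp only [Finset.card_empty, Finset.filter_empty] at hcδ'
  obtain ⟨i₀, hi₀, hi₁⟩ : ∃ i, ¬ G.HasOutNeighbors C 2 (s i) ∧
      ¬ G.HasOutNeighbors C 2 (s (i + 1)) := by
    by_contra! hno
    have h1 : Finset.univ ⊆ (Finset.univ.filter fun i => G.HasOutNeighbors C 2 (s i)) ∪
        (Finset.univ.filter fun i => G.HasOutNeighbors C 2 (s i)).image (· - 1) := by
      intro i _
      by_cases hi : G.HasOutNeighbors C 2 (s i)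
      · simp [hi]
      · refine Finset.mem_union_right _ (Finset.mem_image.2 ⟨i + 1, ?_, by simp⟩)
        simpa using hno i hi
    have h2 := (Finset.card_le_card h1).trans (Finset.card_union_le _ _)
    have h3 := Finset.card_image_le (s := Finset.univ.filter fun i => G.HasOutNeighbors C 2 (s i))
      (f := (· - 1))
    rw [Finset.card_univ, ZMod.card] at h2
    omega
  have hWSub : C.filter (G.HasOutNeighbors C 2) \ S ⊆ C :=
    Finset.sdiff_subset.trans (Finset.filter_subset _ _)
  have hw₁ := hsparse (hterm i₀) hWSub (by simp [hmemS]) hi₀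
  have hw₂ := hsparse (hterm (i₀ + 1)) hWSub (by simp [hmemS]) hi₁
  have hpos₁ : 0 < ((C.filter (G.HasOutNeighbors C 2) \ S).filter (G.Adj (s i₀))).card := by omega
  have hpos₂ : 1 < ((C.filter (G.HasOutNeighbors C 2) \ S).filter
    (G.Adj (s (i₀ + 1)))).card := by omega
  obtain ⟨w₁, hw₁⟩ := Finset.card_pos.1 hpos₁
  obtain ⟨w₂, hw₂, hw₁₂⟩ := Finset.exists_mem_ne hpos₂ w₁
  simp only [Finset.mem_filter, Finset.mem_sdiff] at hw₁ hw₂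
  obtain ⟨⟨⟨hw₁C, hw₁W⟩, hw₁S⟩, hadj₁⟩ := hw₁
  obtain ⟨⟨⟨hw₂C, hw₂W⟩, hw₂S⟩, hadj₂⟩ := hw₂
  obtain ⟨u, v, hu, hv, huv, hwu, hvw⟩ := hw₁W.exists_ne (Nat.le_of_succ_le hw₂W)
  obtain ⟨R, hRn, hRm, hRc, hRu, hRv, hRl⟩ := hspan hu hv huv
  have hRC : ∀ x ∈ C, x ∉ R := fun x hx hxR => (hRm x).1 hxR hx
  obtain ⟨Z, hZk, hZW, hZS, hZadj⟩ : ∃ Z : ZMod k → Finset V, (∀ i, k ≤ (Z i).card) ∧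
      (∀ i, ∀ z ∈ Z i, z ∈ C ∧ ¬ G.HasOutNeighbors C 2 z) ∧ (∀ i j, s j ∉ Z i) ∧
      ∀ i, ∀ z ∈ Z i, G.Adj (s i) z ∧ G.Adj z (s (i + 1)) := by
    by_cases hm0 : m = 0
    · have hs2 : ∀ i, ¬ G.HasOutNeighbors C 2 (s i) := by
        rw [hm0, Finset.card_eq_zero, Finset.filter_eq_empty_iff] at hm
        exact fun i => hm (Finset.mem_univ i)
      have hA : (C \ (C.filter (G.HasOutNeighbors C 2) ∪ S)).card + k + w ≥ c := by
        have h1 := Finset.le_card_sdiff (C.filter (G.HasOutNeighbors C 2) ∪ S) C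
        have h2 := Finset.card_union_le (C.filter (G.HasOutNeighbors C 2)) S
        omega
      refine ⟨fun i => ((C \ (C.filter (G.HasOutNeighbors C 2) ∪ S)).filter (G.Adj (s i))).filter
        (G.Adj (s (i + 1))), fun i => ?_, fun i z => ?_, fun i j => ?_, fun i z => ?_⟩
      · have h1 := hsparse (A := C \ (C.filter (G.HasOutNeighbors C 2) ∪ S)) (hterm i)
          Finset.sdiff_subset (by simp [hmemS]) (hs2 i)
        have h2 := hsparse (A := (C \ (C.filter (G.HasOutNeighbors C 2) ∪ S)).filter (G.Adj (s i)))
          (hterm (i + 1)) ((Finset.filter_subset _ _).trans Finset.sdiff_subset)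
          (by simp [hmemS]) (hs2 (i + 1))
        dsimp only
        omega
      · simp only [Finset.mem_filter, Finset.mem_sdiff, Finset.mem_union]
        tauto
      · simp [hmemS]
      · simp only [Finset.mem_filter]
        exact fun hz => ⟨hz.1.2, hz.2.symm⟩
    · have hA : (C \ (C.filter (G.HasOutNeighbors C 1) ∪ S)).card + k + f ≥ c := by
        have h1 := Finset.le_card_sdiff (C.filter (G.HasOutNeighbors C 1) ∪ S) C
        have h2 := Finset.card_union_le (C.filter (G.HasOutNeighbors C 1)) S
        omega
      have hfull : ∀ i, ∀ z ∈ C \ (C.filter (G.HasOutNeighbors C 1) ∪ S), G.Adj z (s i) := by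
        intro i z hz
        simp only [Finset.mem_sdiff, Finset.mem_union, Finset.mem_filter, not_or, not_and] at hz
        have h1 := hsparse (A := {s i}) hz.1 (by simpa using hterm i)
          (by rw [Finset.mem_singleton]; rintro rfl; exact hz.2.2 (hmemS i)) (hz.2.1 hz.1)
        by_contra hadj
        rw [Finset.card_singleton, Finset.filter_singleton, if_neg hadj, Finset.card_empty] at h1
        omega
      refine ⟨fun _ => C \ (C.filter (G.HasOutNeighbors C 1) ∪ S), fun i => by dsimp only; omega,
        fun i z hz => ?_, fun i j => by simp [hmemS],
        fun i z hz => ⟨(hfull i z hz).symm, hfull _ z hz⟩⟩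
      simp only [Finset.mem_sdiff, Finset.mem_union, Finset.mem_filter, not_or, not_and] at hz
      exact ⟨hz.1, fun hz2 => hz.2.1 hz.1 (Nat.le_of_succ_le hz2)⟩
  have hne : ∀ i, s i ≠ w₁ ∧ s i ≠ w₂ := fun i =>
    ⟨fun e => hw₁S (e ▸ hmemS i), fun e => hw₂S (e ▸ hmemS i)⟩
  obtain ⟨P', hP', hlen⟩ := exists_isLinkage_of_card_le (G := G) (s := s) (i₀ := i₀)
    (L := w₁ :: R ++ [w₂]) (Z := Z) (by
      simp only [List.cons_append, List.nodup_cons, List.mem_append, List.mem_singleton, not_or,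
        List.nodup_append]
      refine ⟨⟨hRC w₁ hw₁C, hw₁₂.symm⟩, hRn, by simp, ?_⟩
      rintro x hx y rfl rfl
      exact hRC _ hw₂C hx)
    (fun i => by simpa [hne i] using hRC _ (hterm i)) (by
      simp only [List.cons_append, List.append_assoc, List.isChain_cons, List.head?_cons,
        Option.mem_def, Option.some.injEq, forall_eq', List.isChain_append, List.head?_append, hRu,
        hRv]
      simp [hadj₁, hwu, hRc, hvw, hadj₂.symm])
    (fun i _ => hZk i) (fun i z hz => by
      have h1 := hZW i z hz
      have h2 := hRC z h1.1
      simp only [List.cons_append, List.mem_cons, List.mem_append, List.not_mem_nil, or_false,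
        not_or]
      exact ⟨by rintro rfl; exact h1.2 hw₁W, h2, by rintro rfl; exact h1.2 hw₂W⟩) hZS hZadj
  have := hmax P' hP'
  simp only [List.length_append, List.length_cons, List.length_nil] at hlen
  omega

end Linkage

end SimpleGraph

theorem List.ofFn_sublist_flatten {α : Type*} {n : ℕ} {s : Fin n → α} {Q : Fin n → List α}
    (h : ∀ i, s i ∈ Q i) : (List.ofFn s).Sublist (List.ofFn Q).flatten := by
  induction n with
  | zero => simp
  | succ n ih =>
    rw [List.ofFn_succ, List.ofFn_succ, List.flatten_cons]
    exact (List.singleton_sublist.2 (h 0)).append (ih fun i => h i.succ)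

namespace SimpleGraph

theorem exists_zmod_cycle_of_list {V : Type*} [Fintype V] {G : SimpleGraph V} {k : ℕ}
    {s : Fin k → V} [NeZero k] {l : List V} (hn : l.Nodup) (hl : ∀ x, x ∈ l)
    (hc : l.IsChain G.Adj) (hc' : ∀ a ∈ l.getLast?, ∀ b ∈ l.head?, G.Adj a b)
    (hs : (List.ofFn s).Sublist l) :
    ∃ f : ZMod (Fintype.card V) → V, Function.Bijective f ∧
      (∀ i, G.Adj (f i) (f (i + 1))) ∧
      ∃ p : Fin k → ZMod (Fintype.card V),
        StrictMono (fun j => (p j).val) ∧ ∀ j, f (p j) = s j := by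
  classical
  have hlen : l.length = Fintype.card V := by
    rw [← List.toFinset_card_of_nodup hn, ← Finset.card_univ]
    congr 1
    ext x
    simp [hl]
  rw [← hlen]
  have hpos : l.length ≠ 0 := by
    have := hs.length_le
    have := NeZero.pos k
    rw [List.length_ofFn] at *
    omega
  have : NeZero l.length := ⟨hpos⟩
  have hlt : ∀ i : ZMod l.length, i.val < l.length := fun i => ZMod.val_lt i
  have hinj : Function.Injective fun i : ZMod l.length => l[i.val]'(hlt i) := by
    intro i j hij
    exact ZMod.val_injective _ ((hn.getElem_inj_iff).1 hij)
  refine ⟨fun i => l[i.val]'(hlt i), ?_, fun i => ?_, ?_⟩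
  · rw [Fintype.bijective_iff_injective_and_card]
    exact ⟨hinj, by rw [ZMod.card, hlen]⟩
  · have hv : (i + 1).val = (i.val + 1) % l.length := by
      rw [ZMod.val_add, ZMod.val_one_eq_one_mod, Nat.add_mod_mod]
    simp only [hv]
    rcases (Nat.succ_le_of_lt (hlt i)).lt_or_eq with h | h
    · simp only [Nat.mod_eq_of_lt (show i.val + 1 < l.length from h)]
      exact List.isChain_iff_getElem.1 hc _ h
    · have e : i.val = l.length - 1 := by omega
      have e' : (i.val + 1) % l.length = 0 := by
        rw [show i.val + 1 = l.length from h, Nat.mod_self]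
      simp only [e']
      refine hc' _ ?_ _ ?_
      · simp [List.getLast?_eq_getElem?, ← e, hlt i]
      · simp [List.head?_eq_getElem?, Nat.pos_of_ne_zero hpos]
  · obtain ⟨g, hg⟩ := List.sublist_iff_exists_fin_orderEmbedding_get_eq.1 hs
    have hval : ∀ j : Fin k, (((g (Fin.cast (List.length_ofFn (f := s)).symm j)).val : ℕ) :
        ZMod l.length).val = (g (Fin.cast (List.length_ofFn (f := s)).symm j)).val :=
      fun j => ZMod.val_natCast_of_lt (g _).2
    refine ⟨fun j => ((g (Fin.cast (List.length_ofFn (f := s)).symm j)).val : ZMod l.length),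
      fun i j hij => ?_, fun j => ?_⟩
    · simp only [hval]
      exact g.strictMono hij
    · simp only [hval]
      have := hg (Fin.cast (List.length_ofFn (f := s)).symm j)
      simpa using this.symm

theorem IsLinkage.exists_list {V : Type*} [Fintype V] {G : SimpleGraph V} {k : ℕ}
    {s : ZMod (k + 1) → V} {P : ZMod (k + 1) → List V} (h : IsLinkage G s P)
    (hs : Function.Injective s) (hP : ∀ v, ∃ i, v = s i ∨ v ∈ P i) :
    ∃ l : List V, l.Nodup ∧ (∀ x, x ∈ l) ∧ l.IsChain G.Adj ∧
      (∀ a ∈ l.getLast?, ∀ b ∈ l.head?, G.Adj a b) ∧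
      (List.ofFn (n := k + 1) s).Sublist l := by
  have hsucc : ∀ i : ZMod (k + 1), (s i :: P i).IsChain G.Adj ∧
      ∀ x ∈ (s i :: P i).getLast?, G.Adj x (s (i + 1)) := fun i => by
    have := List.isChain_append.1 (h.isChain i)
    exact ⟨this.1, fun x hx => this.2.2 x hx _ (by simp)⟩
  refine ⟨(List.ofFn (n := k + 1) fun i => s i :: P i).flatten, ?_, fun x => ?_, ?_, ?_,
    List.ofFn_sublist_flatten fun i => List.mem_cons_self⟩
  · rw [List.nodup_flatten, List.pairwise_ofFn]
    refine ⟨?_, fun i j hij x hx hx' => ?_⟩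
    · simp only [List.mem_ofFn]
      rintro _ ⟨i, rfl⟩
      exact List.nodup_cons.2 ⟨h.isPathSystem.notMem i i, h.isPathSystem.nodup i⟩
    · rcases List.mem_cons.1 hx with rfl | hx <;> rcases List.mem_cons.1 hx' with e | hx'
      · exact hij.ne (hs e)
      · exact h.isPathSystem.notMem j i hx'
      · subst e
        exact h.isPathSystem.notMem i j hx
      · exact h.isPathSystem.disjoint i j hij.ne x hx hx'
  · obtain ⟨i, hi⟩ := hP x
    exact List.mem_flatten.2 ⟨s i :: P i, List.mem_ofFn.2 ⟨i, rfl⟩, List.mem_cons.2 hi⟩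
  · rw [List.isChain_flatten (by simp), List.isChain_ofFn]
    refine ⟨?_, fun i hi x hx y hy => ?_⟩
    · simp only [List.mem_ofFn]
      rintro _ ⟨i, rfl⟩
      exact (hsucc i).1
    · have e : ((⟨i, by omega⟩ : Fin (k + 1)) + 1 : Fin (k + 1)) = ⟨i + 1, by omega⟩ := by
        ext
        simp [Fin.val_add]
        omega
      obtain rfl : s (⟨i + 1, by omega⟩ : Fin (k + 1)) = y := by simpa using hy
      rw [← e]
      exact (hsucc (⟨i, by omega⟩ : Fin (k + 1))).2 x hx
  · intro a ha b hb
    rw [List.ofFn_succ', List.concat_eq_append, List.flatten_append, List.getLast?_append,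
      List.flatten_singleton, List.getLast?_cons] at ha
    rw [List.ofFn_succ, List.flatten_cons] at hb
    obtain rfl : s (0 : Fin (k + 1)) = b := by simpa using hb
    have e : (Fin.last k + 1 : Fin (k + 1)) = 0 := Fin.last_add_one k
    rw [← e]
    refine (hsucc (Fin.last k)).2 a ?_
    rw [List.getLast?_cons]
    simpa using ha

theorem exists_isMaxLinkage {V : Type*} [Fintype V] {G : SimpleGraph V} {k : ℕ} [NeZero k]
    {s : ZMod k → V} (hs : Function.Injective s) (h : ∃ P, IsLinkage G s P) :
    ∃ P, IsMaxLinkage G s P := by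
  classical
  obtain ⟨P, hP, hmin⟩ := exists_minimalFor_of_wellFoundedLT (IsLinkage G s)
    (fun P => Fintype.card V - ∑ i, (P i).length) h
  have hle : ∀ P', IsLinkage G s P' → ∑ i, (P' i).length ≤ Fintype.card V := fun P' hP' =>
    calc ∑ i, (P' i).length ≤ ∑ i, ((P' i).length + 1) :=
          Finset.sum_le_sum fun i _ => Nat.le_succ _
      _ = (pathSupport s P').card := (hP'.isPathSystem.card_pathSupport hs).symm
      _ ≤ _ := Finset.card_le_univ _
  refine ⟨P, hP, fun P' hP' => ?_⟩
  have h1 := hle P hP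
  have h2 := hle P' hP'
  by_contra! hlt
  have := hmin hP' (Nat.sub_le_sub_left hlt.le _)
  dsimp only at this
  omega

open scoped Classical in
theorem exists_isChain_of_dirac {V : Type*} [Fintype V] {G : SimpleGraph V}
    (h3 : 3 ≤ Fintype.card V)
    (hdeg : ∀ v, Fintype.card V ≤ 2 * (Finset.univ.filter (G.Adj v)).card) (a : V) :
    ∃ T : List V, (a :: T).Nodup ∧ (∀ x, x ∈ a :: T) ∧ (a :: T).IsChain G.Adj ∧
      ∀ b ∈ (a :: T).getLast?, G.Adj b a := by
  obtain ⟨R, h1, h2, h4, h5⟩ := exists_hamiltonian_isChain G h3 fun x y _ _ => by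
    have := hdeg x
    have := hdeg y
    omega
  obtain ⟨A, B, rfl⟩ := List.append_of_mem (h2 a)
  have hp : List.Perm (A ++ a :: B) (a :: (B ++ A)) := List.perm_append_comm
  refine ⟨B ++ A, hp.nodup_iff.1 h1, fun x => hp.mem_iff.1 (h2 x), ?_, ?_⟩
  · rw [List.isChain_append] at h4
    rw [← List.cons_append, List.isChain_append]
    refine ⟨h4.2.1, h4.1, fun x hx y hy => h5 x ?_ y ?_⟩
    · simpa [List.getLast?_append, List.getLast?_cons] using hx
    · rw [List.head?_append, Option.mem_def.1 hy]
      rfl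
  · intro b hb
    rcases List.eq_nil_or_concat A with rfl | ⟨A', c, rfl⟩
    · exact h5 b (by simpa using hb) a (by simp)
    · obtain rfl : c = b := by
        simpa [List.getLast?_cons, List.getLast?_append] using hb
      rw [List.isChain_append] at h4
      exact h4.2.2 c (by simp) a (by simp)

open scoped Classical in
theorem exists_list_of_dirac {V : Type*} [Fintype V] {G : SimpleGraph V}
    (h3 : 3 ≤ Fintype.card V)
    (hdeg : ∀ v, Fintype.card V ≤ 2 * (Finset.univ.filter (G.Adj v)).card) {a b c : V}
    (hab : a ≠ b) (hac : a ≠ c) (hbc : b ≠ c) :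
    ∃ l : List V, l.Nodup ∧ (∀ x, x ∈ l) ∧ l.IsChain G.Adj ∧
      (∀ a ∈ l.getLast?, ∀ b ∈ l.head?, G.Adj a b) ∧ [a, b, c].Sublist l := by
  obtain ⟨T, h1, h2, h4, h5⟩ := exists_isChain_of_dirac h3 hdeg a
  obtain ⟨A, B, rfl⟩ := List.append_of_mem (show b ∈ T by simpa [hab.symm] using h2 b)
  have hc : c ∈ A ∨ c ∈ B := by simpa [hac.symm, hbc.symm] using h2 c
  rcases hc with hc | hc
  · have hp : List.Perm (a :: (A ++ b :: B).reverse) (a :: (A ++ b :: B)) :=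
      (List.reverse_perm _).cons a
    refine ⟨a :: (A ++ b :: B).reverse, hp.nodup_iff.2 h1, fun x => hp.mem_iff.2 (h2 x), ?_, ?_, ?_⟩
    · rw [List.isChain_cons] at h4 ⊢
      refine ⟨fun y hy => (h5 y ?_).symm, ?_⟩
      · rw [List.head?_reverse] at hy
        rw [List.getLast?_cons, Option.mem_def.1 hy]
        rfl
      · rw [List.isChain_reverse]
        exact h4.2.imp fun _ _ h => h.symm
    · intro x hx y hy
      obtain rfl : a = y := by simpa using hy
      rw [List.isChain_cons] at h4
      refine (h4.1 x ?_).symm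
      rw [List.getLast?_cons, List.getLast?_reverse] at hx
      cases A <;> simpa using hx
    · refine List.Sublist.cons_cons a ?_
      rw [List.reverse_append, List.reverse_cons, List.append_assoc]
      refine List.Sublist.trans ?_ (List.sublist_append_right _ _)
      exact List.Sublist.cons_cons b (List.singleton_sublist.2 (List.mem_reverse.2 hc))
  · refine ⟨_, h1, h2, h4, ?_, ?_⟩
    · intro x hx y hy
      obtain rfl : a = y := by simpa using hy
      exact h5 x hx
    · refine List.Sublist.cons_cons a (List.Sublist.trans ?_ (List.sublist_append_right _ _))
      exact List.Sublist.cons_cons b (List.singleton_sublist.2 hc)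

open scoped Classical in
theorem exists_list_of_degree {V : Type*} [Fintype V] {G : SimpleGraph V} {k : ℕ}
    {s : Fin k → V} (hs : Function.Injective s) (hk : 2 ≤ k) (hn : 11 * k - 3 ≤ Fintype.card V)
    (hdeg : ∀ v, (Fintype.card V + 1) / 2 + k / 2 - 1 ≤ (Finset.univ.filter (G.Adj v)).card) :
    ∃ l : List V, l.Nodup ∧ (∀ x, x ∈ l) ∧ l.IsChain G.Adj ∧
      (∀ a ∈ l.getLast?, ∀ b ∈ l.head?, G.Adj a b) ∧ (List.ofFn s).Sublist l := by
  rcases lt_or_ge k 4 with hk4 | hk4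
  · have hdirac : ∀ v, Fintype.card V ≤ 2 * (Finset.univ.filter (G.Adj v)).card := fun v => by
      have := hdeg v
      omega
    obtain rfl | rfl : k = 2 ∨ k = 3 := by omega
    · obtain ⟨c, hc⟩ : ∃ c, c ∉ ({s 0, s 1} : Finset V) := by
        by_contra! hno
        have h1 := Finset.card_le_card (show Finset.univ ⊆ ({s 0, s 1} : Finset V) from
          fun x _ => hno x)
        have h2 := Finset.card_le_two (a := s 0) (b := s 1)
        rw [Finset.card_univ] at h1
        omega
      simp only [Finset.mem_insert, Finset.mem_singleton, not_or] at hc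
      obtain ⟨l, h1, h2, h3, h4, h5⟩ := exists_list_of_dirac (G := G) (by omega) hdirac
        (hs.ne (show (0 : Fin 2) ≠ 1 by decide)) (Ne.symm hc.1) (Ne.symm hc.2)
      refine ⟨l, h1, h2, h3, h4, List.Sublist.trans ?_ h5⟩
      simp [List.ofFn_succ]
    · obtain ⟨l, h1, h2, h3, h4, h5⟩ := exists_list_of_dirac (G := G) (by omega) hdirac
        (hs.ne (show (0 : Fin 3) ≠ 1 by decide)) (hs.ne (show (0 : Fin 3) ≠ 2 by decide))
        (hs.ne (show (1 : Fin 3) ≠ 2 by decide))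
      exact ⟨l, h1, h2, h3, h4, by simpa [List.ofFn_succ] using h5⟩
  · obtain ⟨k, rfl⟩ : ∃ j, k = j + 1 := ⟨k - 1, by omega⟩
    obtain ⟨P, hP⟩ := exists_isShortLinkage (G := G) (k := k + 1) (s := s) hs hk4 hn hdeg
      Finset.univ
    obtain ⟨P, hP⟩ := exists_isMaxLinkage hs
      ⟨P, hP.isPathSystem, fun i => hP.isChain i (Finset.mem_univ i)⟩
    have huniv := hP.pathSupport_eq_univ hs hk4 hn hdeg
    exact hP.toIsLinkage.exists_list hs fun v => mem_pathSupport.1 (huniv ▸ Finset.mem_univ v)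

end SimpleGraph

/-- Kierstead–Sárközy–Selkow: for k ≥ 2, every graph on n ≥ 11k − 3 vertices with minimum
degree at least ⌈n/2⌉ + ⌊k/2⌋ − 1 is k-ordered Hamiltonian: for any distinct vertices
s₁, …, s_k there is a Hamilton cycle (a cyclic ordering f of all the vertices, consecutive
ones adjacent) encountering s₁, …, s_k in this cyclic order (i.e. they occur at positions
with strictly increasing representatives). -/
theorem k_ordered_hamiltonian_graph (k : ℕ) (hk : 2 ≤ k)
    (V : Type) [Fintype V] [DecidableEq V] (G : SimpleGraph V) [DecidableRel G.Adj]
    (hn : 11 * k - 3 ≤ Fintype.card V)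
    (hdeg : (Fintype.card V + 1) / 2 + k / 2 - 1 ≤ G.minDegree)
    (s : Fin k → V) (hs : Function.Injective s) :
    ∃ f : ZMod (Fintype.card V) → V, Function.Bijective f ∧
      (∀ i, G.Adj (f i) (f (i + 1))) ∧
      ∃ p : Fin k → ZMod (Fintype.card V),
        StrictMono (fun j => (p j).val) ∧ ∀ j, f (p j) = s j := by
  have : NeZero k := ⟨by omega⟩
  have hdeg' : ∀ v, (Fintype.card V + 1) / 2 + k / 2 - 1 ≤
      (@Finset.filter V (G.Adj v) (fun _ => Classical.propDecidable _) Finset.univ).card :=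
    fun v => by
      refine (hdeg.trans (G.minDegree_le_degree v)).trans_eq ?_
      rw [← SimpleGraph.card_neighborFinset_eq_degree]
      congr 1
      ext x
      simp
  obtain ⟨l, h1, h2, h3, h4, h5⟩ := SimpleGraph.exists_list_of_degree hs hk hn hdeg'
  exact SimpleGraph.exists_zmod_cycle_of_list h1 h2 h3 h4 h5
end

section
/- There exist positive constants c and C and an integer n₀ such that the following holds: whenever G is an oriented graph on n ≥ n₀ vertices with minimum semidegree δ⁰(G) ≥ (1/2 − c)n, and n₁, …, n_t are integers with each nᵢ ≥ 3 and n₁ + ⋯ + n_t ≤ n − C, then G contains t pairwise vertex-disjoint directed cycles of lengths n₁, …, n_t respectively. -/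
/-- The outdegree of a vertex `x` in the digraph with adjacency relation `G`. -/
noncomputable def outDeg {V : Type*} (G : V → V → Prop) (x : V) : ℕ :=
  Nat.card {y : V // G x y}

/-- The indegree of a vertex `x` in the digraph with adjacency relation `G`. -/
noncomputable def inDeg {V : Type*} (G : V → V → Prop) (x : V) : ℕ :=
  Nat.card {y : V // G y x}

/-- An oriented graph: no loops and no 2-cycles. -/
def IsOriented {V : Type*} (G : V → V → Prop) : Prop :=
  ∀ x y : V, G x y → ¬ G y x

namespace OrientedGraph

open Finset
open scoped Classical

section Basic

variable {V : Type*} {G : V → V → Prop}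

/-- The out-neighbours of `v` inside `U`; the in-neighbours are `nbr (flip G) U v`. -/
noncomputable def nbr (G : V → V → Prop) (U : Finset V) (v : V) : Finset V :=
  {u ∈ U | G v u}

/-- `v` has outdegree and indegree at least `(1/2 - c)|U|` into `U`. -/
def NearRegular (G : V → V → Prop) (c : ℝ) (U : Finset V) (v : V) : Prop :=
  (1 / 2 - c) * (#U : ℝ) ≤ #(nbr G U v) ∧ (1 / 2 - c) * (#U : ℝ) ≤ #(nbr (flip G) U v)

/-- Every vertex of `L` is nonadjacent to at most `e` vertices of `L`. -/
def AlmostComplete (G : V → V → Prop) (e : ℝ) (L : Finset V) : Prop :=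
  ∀ v ∈ L, (#L : ℝ) ≤ #(nbr G L v) + #(nbr (flip G) L v) + e

lemma mem_nbr {U : Finset V} {u v : V} : u ∈ nbr G U v ↔ u ∈ U ∧ G v u := by
  simp [nbr]

lemma mem_nbr_flip {U : Finset V} {u v : V} : u ∈ nbr (flip G) U v ↔ u ∈ U ∧ G u v :=
  mem_nbr (G := flip G)

lemma nbr_subset (U : Finset V) (v : V) : nbr G U v ⊆ U := filter_subset _ _

lemma isOriented_flip (hG : IsOriented G) : IsOriented (flip G) := fun x y h h' => hG x y h' h

lemma not_adj_self (hG : IsOriented G) (x : V) : ¬ G x x := fun h => hG x x h h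

lemma disjoint_nbr (hG : IsOriented G) (U W : Finset V) (v : V) :
    Disjoint (nbr G U v) (nbr (flip G) W v) := by
  rw [Finset.disjoint_left]
  intro u hu hu'
  exact hG _ _ (mem_nbr.1 hu).2 (mem_nbr_flip.1 hu').2

lemma card_nbr_add_card_nbr_flip_le (hG : IsOriented G) (U : Finset V) (v : V) :
    #(nbr G U v) + #(nbr (flip G) U v) ≤ #U := by
  rw [← card_union_of_disjoint (disjoint_nbr hG U U v)]
  exact card_le_card (union_subset (nbr_subset U v) (nbr_subset U v))

lemma card_le_nbr_add_sdiff (U W : Finset V) (v : V) :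
    #(nbr G U v) ≤ #(nbr G W v) + #(U \ W) := by
  have : nbr G U v ⊆ nbr G W v ∪ (U \ W) := by
    intro u hu
    rw [mem_nbr] at hu
    by_cases h : u ∈ W <;> simp [mem_nbr, h, hu]
  exact (card_le_card this).trans (card_union_le _ _)

lemma AlmostComplete.mono (hG : IsOriented G) {e : ℝ} {L L' : Finset V}
    (h : AlmostComplete G e L) (hL : L' ⊆ L) : AlmostComplete G e L' := by
  intro v hv
  have h1 := h v (hL hv)
  have h2 : #(nbr G L v) + #(nbr (_root_.flip G) L v) ≤
      #(nbr G L' v) + #(nbr (_root_.flip G) L' v) + #(L \ L') := by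
    rw [← card_union_of_disjoint (disjoint_nbr hG L L v),
      ← card_union_of_disjoint (disjoint_nbr hG L' L' v)]
    have : nbr G L v ∪ nbr (_root_.flip G) L v ⊆
        (nbr G L' v ∪ nbr (_root_.flip G) L' v) ∪ (L \ L') := by
      intro u hu
      simp only [mem_union, mem_nbr, mem_sdiff] at hu ⊢
      tauto
    exact (card_le_card this).trans (card_union_le _ _)
  have h3 : #(L \ L') + #L' = #L := card_sdiff_add_card_eq_card hL
  have h2' : (#(nbr G L v) : ℝ) + #(nbr (_root_.flip G) L v) ≤
      #(nbr G L' v) + #(nbr (_root_.flip G) L' v) + #(L \ L') := by exact_mod_cast h2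
  have h3' : (#(L \ L') : ℝ) + #L' = #L := by exact_mod_cast h3
  linarith

lemma AlmostComplete.flip {e : ℝ} {L : Finset V} (h : AlmostComplete G e L) :
    AlmostComplete (flip G) e L := by
  intro v hv
  have := h v hv
  change (#L : ℝ) ≤ #(nbr (_root_.flip G) L v) + #(nbr G L v) + e
  linarith

lemma NearRegular.almostComplete {c : ℝ} {U : Finset V} (h : ∀ v ∈ U, NearRegular G c U v) :
    AlmostComplete G (2 * c * #U) U := by
  intro v hv
  have := h v hv
  unfold NearRegular at this
  linarith [this.1, this.2]

lemma sum_card_nbr_flip (U : Finset V) :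
    ∑ v ∈ U, #(nbr (flip G) U v) = ∑ v ∈ U, #(nbr G U v) :=
  (sum_card_bipartiteAbove_eq_sum_card_bipartiteBelow (s := U) (t := U) G).symm

lemma AlmostComplete.exists_large_nbr {e : ℝ} {L : Finset V} (h : AlmostComplete G e L)
    (hne : L.Nonempty) : ∃ v ∈ L, ((#L : ℝ) - e) / 2 ≤ #(nbr G L v) := by
  refine exists_le_of_sum_le hne ?_
  have h1 : ∑ v ∈ L, ((#L : ℝ) - e) ≤ ∑ v ∈ L, ((#(nbr G L v) : ℝ) + #(nbr (_root_.flip G) L v)) :=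
    sum_le_sum fun v hv => by linarith [h v hv]
  have h2 : ∑ v ∈ L, (#(nbr (_root_.flip G) L v) : ℝ) = ∑ v ∈ L, (#(nbr G L v) : ℝ) := by
    exact_mod_cast sum_card_nbr_flip L
  rw [sum_add_distrib, h2] at h1
  rw [← sum_div]
  linarith

lemma exists_small_nbr (hG : IsOriented G) {L : Finset V} (hne : L.Nonempty) :
    ∃ v ∈ L, (#(nbr G L v) : ℝ) ≤ #L / 2 := by
  refine exists_le_of_sum_le hne ?_
  have h1 : ∑ v ∈ L, ((#(nbr G L v) : ℝ) + #(nbr (_root_.flip G) L v)) ≤ ∑ v ∈ L, (#L : ℝ) :=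
    sum_le_sum fun v _ => by exact_mod_cast card_nbr_add_card_nbr_flip_le hG L v
  have h2 : ∑ v ∈ L, (#(nbr (_root_.flip G) L v) : ℝ) = ∑ v ∈ L, (#(nbr G L v) : ℝ) := by
    exact_mod_cast sum_card_nbr_flip L
  rw [sum_add_distrib, h2] at h1
  rw [← sum_div]
  linarith

/-- `l` is a directed path of length `j` with all its vertices in `W`. -/
structure IsPathIn (G : V → V → Prop) (W : Finset V) (j : ℕ) (l : List V) : Prop where
  length_eq : l.length = j
  nodup : l.Nodup
  mem : ∀ u ∈ l, u ∈ W
  chain : l.IsChain G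

lemma IsPathIn.mono {W W' : Finset V} {j : ℕ} {l : List V} (h : IsPathIn G W j l)
    (hW : W ⊆ W') : IsPathIn G W' j l :=
  ⟨h.length_eq, h.nodup, fun u hu => hW (h.mem u hu), h.chain⟩

lemma exists_path (hG : IsOriented G) {e : ℝ} (he : 0 ≤ e) (j : ℕ) {L : Finset V}
    (h : AlmostComplete G e L) (hL : 2 ^ j * (e + 1) ≤ #L + e) :
    ∃ l, IsPathIn G L j l := by
  induction j generalizing L with
  | zero => exact ⟨[], rfl, List.nodup_nil, by simp, List.isChain_nil⟩
  | succ j ih =>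
    have hpow : (1 : ℝ) ≤ 2 ^ j := one_le_pow₀ (by norm_num)
    have hne : L.Nonempty := by
      rw [← card_pos]
      have : (0 : ℝ) < #L := by
        rw [pow_succ] at hL
        nlinarith
      exact_mod_cast this
    obtain ⟨v, hv, hvL⟩ := h.exists_large_nbr hne
    obtain ⟨l, hl⟩ := ih (h.mono hG (nbr_subset L v)) (by
      rw [pow_succ] at hL
      linarith)
    refine ⟨v :: l, by simp [hl.length_eq], ?_, ?_, ?_⟩
    · refine List.nodup_cons.2 ⟨fun hvl => ?_, hl.nodup⟩
      exact not_adj_self hG v (mem_nbr.1 (hl.mem v hvl)).2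
    · intro u hu
      rcases List.mem_cons.1 hu with rfl | hu
      · exact hv
      · exact nbr_subset L v (hl.mem u hu)
    · refine List.isChain_cons.2 ⟨fun y hy => ?_, hl.chain⟩
      exact (mem_nbr.1 (hl.mem y (List.mem_of_mem_head? hy))).2

lemma isChain_cons_append_singleton {b c : V} {l : List V} (hl : l.IsChain G)
    (hc : ∀ u ∈ l.head?, G c u) (hb : ∀ u ∈ l.getLast?, G u b) (hcb : l = [] → G c b) :
    (c :: (l ++ [b])).IsChain G := by
  rcases l with _ | ⟨a, l⟩
  · simpa using hcb rfl
  · refine List.isChain_cons.2 ⟨?_, List.isChain_append.2 ⟨hl, List.isChain_singleton _, ?_⟩⟩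
    · simpa using hc
    · intro x hx y hy
      simp only [List.head?_cons, Option.mem_def, Option.some.injEq] at hy
      exact hy ▸ hb x hx

/-- `l` is a directed cycle of length `j` with all its vertices in `U`. -/
structure IsCycleIn (G : V → V → Prop) (U : Finset V) (j : ℕ) (l : List V) : Prop where
  length_eq : l.length = j
  nodup : l.Nodup
  mem : ∀ u ∈ l, u ∈ U
  closed : ∃ a l', l = a :: l' ∧ (a :: (l' ++ [a])).IsChain G

lemma IsCycleIn.mono {W W' : Finset V} {j : ℕ} {l : List V} (h : IsCycleIn G W j l)
    (hW : W ⊆ W') : IsCycleIn G W' j l :=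
  ⟨h.length_eq, h.nodup, fun u hu => hW (h.mem u hu), h.closed⟩

/-- A directed path inside the set of vertices `u` with `y → u → x` closes up the edge `x → y`
to a directed cycle. -/
lemma IsPathIn.isCycleIn (hG : IsOriented G) {U W : Finset V} {x y : V} {j : ℕ} {l : List V}
    (h : IsPathIn G W j l) (hx : x ∈ U) (hy : y ∈ U) (hxy : G x y) (hj : 0 < j)
    (hW : ∀ u ∈ W, u ∈ U ∧ G y u ∧ G u x) : IsCycleIn G U (j + 2) (x :: y :: l) := by
  have hxy' : x ≠ y := fun h => not_adj_self hG x (h ▸ hxy)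
  refine ⟨by simp [h.length_eq], ?_, ?_, x, y :: l, rfl, ?_⟩
  · simp only [List.nodup_cons, List.mem_cons, not_or]
    refine ⟨⟨hxy', fun hm => ?_⟩, fun hm => ?_, h.nodup⟩
    · exact not_adj_self hG x (hW x (h.mem x hm)).2.2
    · exact not_adj_self hG y (hW y (h.mem y hm)).2.1
  · intro u hu
    simp only [List.mem_cons] at hu
    rcases hu with rfl | rfl | hu
    · exact hx
    · exact hy
    · exact (hW u (h.mem u hu)).1
  · refine List.isChain_cons_cons.2 ⟨hxy, isChain_cons_append_singleton h.chain ?_ ?_ ?_⟩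
    · intro u hu
      exact (hW u (h.mem u (List.mem_of_mem_head? hu))).2.1
    · intro u hu
      exact (hW u (h.mem u (List.mem_of_mem_getLast? hu))).2.2
    · rintro rfl
      have := h.length_eq
      simp at this
      omega

end Basic

section ShortCycles

variable {V : Type*} {G : V → V → Prop}

lemma card_add_card_le_card_inter_add {A B U : Finset V} (hA : A ⊆ U) (hB : B ⊆ U) :
    (#A : ℝ) + #B ≤ #(A ∩ B) + #U := by
  have h1 := card_union_add_card_inter A B
  have h2 := card_le_card (union_subset hA hB)
  have : #A + #B ≤ #(A ∩ B) + #U := by omega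
  exact_mod_cast this

lemma AlmostComplete.card_le (hG : IsOriented G) {e : ℝ} {L A : Finset V} {v : V}
    (h : AlmostComplete G e L) (hv : v ∈ L) (hA : A ⊆ L) :
    (#A : ℝ) ≤ #(nbr G A v) + #(nbr (_root_.flip G) A v) + e := by
  have h1 := h v hv
  have h2 : A ⊆ (nbr G A v ∪ nbr (_root_.flip G) A v) ∪
      (L \ (nbr G L v ∪ nbr (_root_.flip G) L v)) := by
    intro u hu
    have := hA hu
    simp only [mem_union, mem_nbr, mem_sdiff]
    tauto
  have h3 : nbr G L v ∪ nbr (_root_.flip G) L v ⊆ L :=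
    union_subset (nbr_subset L v) (nbr_subset L v)
  have h4 := card_sdiff_add_card_eq_card h3
  rw [card_union_of_disjoint (disjoint_nbr hG L L v)] at h4
  have h5 := (card_le_card h2).trans (card_union_le _ _)
  rw [card_union_of_disjoint (disjoint_nbr hG A A v)] at h5
  have h4' : (#(L \ (nbr G L v ∪ nbr (_root_.flip G) L v)) : ℝ) +
      (#(nbr G L v) + #(nbr (_root_.flip G) L v)) = #L := by exact_mod_cast h4
  have h5' : (#A : ℝ) ≤ #(nbr G A v) + #(nbr (_root_.flip G) A v) +
      #(L \ (nbr G L v ∪ nbr (_root_.flip G) L v)) := by exact_mod_cast h5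
  linarith

lemma NearRegular.flip {c : ℝ} {U : Finset V} {v : V} (h : NearRegular G c U v) :
    NearRegular (flip G) c U v := ⟨h.2, h.1⟩

lemma NearRegular.card_nbr_sub {c : ℝ} {U U' : Finset V} {v : V} (h : NearRegular G c U v) :
    (1 / 2 - c) * (#U : ℝ) - #(U \ U') ≤ #(nbr G U' v) := by
  have h1 := h.1
  have h2 : (#(nbr G U v) : ℝ) ≤ #(nbr G U' v) + #(U \ U') := by
    exact_mod_cast card_le_nbr_add_sdiff U U' v
  linarith

lemma NearRegular.card_nbr_le (hG : IsOriented G) {c : ℝ} {U U' : Finset V} {v : V}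
    (h : NearRegular G c U v) (hU : U' ⊆ U) :
    (#(nbr G U' v) : ℝ) ≤ (1 / 2 + c) * #U := by
  have h1 := h.2
  have h2 : (#(nbr G U v) : ℝ) + #(nbr (_root_.flip G) U v) ≤ #U := by
    exact_mod_cast card_nbr_add_card_nbr_flip_le hG U v
  have h3 : (#(nbr G U' v) : ℝ) ≤ #(nbr G U v) := by
    exact_mod_cast card_le_card (filter_subset_filter _ hU)
  linarith

/-- Every vertex lies on a cycle of any given length avoiding a prescribed small set. -/
lemma exists_cycle_through (hG : IsOriented G) {c : ℝ} (hc : 0 ≤ c) {U U' : Finset V} {v : V}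
    {j : ℕ} (hU : ∀ u ∈ U, NearRegular G c U u) (hU' : U' ⊆ U) (hv : v ∈ U')
    (hsmall : (#(U \ U') : ℝ) ≤ #U / 20) (hj : 3 ≤ j)
    (hn : 20 * 2 ^ j * (2 * c * #U + 1) ≤ #U) :
    ∃ l, IsCycleIn G U' j (v :: l) := by
  obtain ⟨i, rfl⟩ : ∃ i, j = i + 2 := ⟨j - 2, by omega⟩
  have hpow : (2 : ℝ) ≤ 2 ^ i := by
    calc (2 : ℝ) = 2 ^ 1 := by norm_num
      _ ≤ 2 ^ i := pow_le_pow_right₀ (by norm_num) (by omega)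
  have hpow2 : (2 : ℝ) ^ (i + 2) = 4 * 2 ^ i := by ring
  rw [hpow2] at hn
  have hcn : 0 ≤ c * #U := by positivity
  have hn' : 160 * (2 * c * #U + 1) ≤ (#U : ℝ) := by nlinarith
  have hcomp : AlmostComplete G (2 * c * #U) U' :=
    (NearRegular.almostComplete hU).mono hG hU'
  have hvU := hU v (hU' hv)
  have hP1 := hvU.card_nbr_sub (U' := U')
  have hP2 := hvU.card_nbr_le hG hU'
  have hP : (nbr G U' v).Nonempty := by
    rw [← card_pos]
    have : (0 : ℝ) < #(nbr G U' v) := by linarith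
    exact_mod_cast this
  obtain ⟨b, hb, hbP⟩ := exists_small_nbr hG hP
  obtain ⟨hbU, hvb⟩ := mem_nbr.1 hb
  have hB := (hU b (hU' hbU)).card_nbr_sub (U' := U')
  have h1 := hcomp.card_le hG hv (nbr_subset (G := G) U' b)
  have h2 : nbr G (nbr G U' b) v = nbr G (nbr G U' v) b := by
    ext u
    simp only [mem_nbr]
    tauto
  rw [h2] at h1
  obtain ⟨l, hl⟩ := exists_path hG (by linarith : 0 ≤ 2 * c * (#U : ℝ)) i
    (hcomp.mono hG ((nbr_subset (G := flip G) _ v).trans (nbr_subset (G := G) U' b)))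
    (by nlinarith)
  refine ⟨b :: l, hl.isCycleIn hG hv hbU hvb (by omega) fun u hu => ?_⟩
  simp only [mem_nbr] at hu
  tauto

/-- If every edge of an almost complete oriented graph lies on few triangles, then some vertex
has small indegree. -/
lemma AlmostComplete.exists_indegree_le (hG : IsOriented G) {e : ℝ} (he : 0 ≤ e) {L : Finset V}
    (h : AlmostComplete G e L) (hne : L.Nonempty)
    (hlink : ∀ x ∈ L, ∀ y ∈ L, G x y → (#(nbr G L y ∩ nbr (_root_.flip G) L x) : ℝ) ≤ e) :
    ∃ x ∈ L, (#(nbr (_root_.flip G) L x) : ℝ) ≤ 5 * e := by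
  obtain ⟨x, hx, hmax⟩ := exists_max_image L (fun x => #(nbr G L x)) hne
  refine ⟨x, hx, ?_⟩
  rcases (nbr (_root_.flip G) L x).eq_empty_or_nonempty with h0 | h0
  · rw [h0, card_empty]
    simpa using he
  obtain ⟨q, hq, hqQ⟩ := (h.mono hG (nbr_subset (G := _root_.flip G) L x)).exists_large_nbr h0
  obtain ⟨hqL, hqx⟩ := mem_nbr_flip.1 hq
  have h1 := hlink q hqL x hx hqx
  have h2 := h.card_le hG hqL (nbr_subset (G := G) L x)
  have h3 : nbr (_root_.flip G) (nbr G L x) q = nbr G L x ∩ nbr (_root_.flip G) L q := by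
    ext u
    simp only [mem_nbr, mem_inter]
    tauto
  have h4 : nbr G (nbr G L x) q ∪ nbr G (nbr (_root_.flip G) L x) q ⊆ nbr G L q := by
    intro u hu
    simp only [mem_nbr, mem_union] at hu ⊢
    tauto
  have h5 : Disjoint (nbr G (nbr G L x) q) (nbr G (nbr (_root_.flip G) L x) q) :=
    (disjoint_nbr hG L L x).mono (nbr_subset _ _) (nbr_subset _ _)
  have h6 := card_le_card h4
  rw [card_union_of_disjoint h5] at h6
  have h7 : (#(nbr G (nbr G L x) q) : ℝ) + #(nbr G (nbr (_root_.flip G) L x) q) ≤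
      #(nbr G L x) := by exact_mod_cast h6.trans (hmax q hqL)
  rw [h3] at h2
  linarith

/-- If a large set `L` contains no cycle of length `j`, then many vertices outside `L` lie on
such a cycle whose other vertices are all in `L`. -/
lemma exists_many_closing (hG : IsOriented G) {c : ℝ} (hc : 0 ≤ c) {U L : Finset V} {j : ℕ}
    (hU : ∀ u ∈ U, NearRegular G c U u) (hL : L ⊆ U) (hj : 3 ≤ j)
    (hn : 180 * (2 ^ j * (2 * c * #U + 1)) ≤ #L) (hno : ∀ l, ¬ IsCycleIn G L j l) :
    ∃ W ⊆ U, (9 / 10 * #L : ℝ) ≤ #W ∧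
      ∀ w ∈ W, ∃ l, IsPathIn G L (j - 1) l ∧ IsCycleIn G U j (w :: l) := by
  obtain ⟨i, rfl⟩ : ∃ i, j = i + 3 := ⟨j - 3, by omega⟩
  set e : ℝ := 2 ^ (i + 3) * (2 * c * #U + 1) with he
  have hpow : (1 : ℝ) ≤ 2 ^ i := one_le_pow₀ (by norm_num)
  have hcn : 0 ≤ c * #U := by positivity
  have hie : 2 ^ (i + 1) * (2 * c * #U + 1) ≤ e := by
    rw [he]
    gcongr <;> norm_num
  have hce : 2 * c * #U + 1 ≤ e := by
    rw [pow_succ] at hie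
    nlinarith
  have hc0 : 0 ≤ 2 * c * #U := by linarith
  have hcomp : AlmostComplete G (2 * c * #U) L := (NearRegular.almostComplete hU).mono hG hL
  have hlink : ∀ x ∈ L, ∀ y ∈ L, G x y →
      (#(nbr G L y ∩ nbr (flip G) L x) : ℝ) ≤ e := by
    intro x hx y hy hxy
    by_contra! hlt
    obtain ⟨l, hl⟩ := exists_path hG hc0 (i + 1)
      (hcomp.mono hG (inter_subset_left.trans (nbr_subset (G := G) L y)))
      (by linarith : _ ≤ (#(nbr G L y ∩ nbr (flip G) L x) : ℝ) + _)
    refine hno _ (hl.isCycleIn hG hx hy hxy (by omega) fun u hu => ?_)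
    simp only [mem_inter, mem_nbr] at hu
    tauto
  have hcomp' : AlmostComplete G e L := fun v hv => (hcomp v hv).trans (by linarith)
  have hLne : L.Nonempty := by
    rw [← card_pos]
    have : (0 : ℝ) < #L := by linarith
    exact_mod_cast this
  obtain ⟨x, hx, hxin⟩ := hcomp'.exists_indegree_le hG (by linarith) hLne hlink
  have hL2 := hcomp' x hx
  have hcomp2 : AlmostComplete G e (nbr G L x) := hcomp'.mono hG (nbr_subset L x)
  have hne2 : (nbr G L x).Nonempty := by
    rw [← card_pos]
    have : (0 : ℝ) < #(nbr G L x) := by linarith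
    exact_mod_cast this
  obtain ⟨y, hy, hyout⟩ := hcomp2.flip.exists_indegree_le (isOriented_flip hG) (by linarith)
    hne2 (by
      intro a ha b hb hab
      refine le_trans ?_ (hlink b (nbr_subset L x hb) a (nbr_subset L x ha) hab)
      refine Nat.cast_le.2 (card_le_card ?_)
      rw [inter_comm]
      exact inter_subset_inter (filter_subset_filter _ (nbr_subset L x))
        (filter_subset_filter _ (nbr_subset L x)))
  change (#(nbr G (nbr G L x) y) : ℝ) ≤ 5 * e at hyout
  obtain ⟨hyL, hxy⟩ := mem_nbr.1 hy
  have hL3 := hcomp2 y hy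
  obtain ⟨q, hq⟩ := exists_path hG hc0 i
    (hcomp.mono hG ((nbr_subset (G := flip G) _ y).trans (nbr_subset (G := G) L x)))
    (by
      have : (2 : ℝ) ^ i * (2 * c * #U + 1) ≤ e := by
        rw [he]
        gcongr <;> norm_num
      linarith)
  have hqL : ∀ u ∈ q, u ∈ L ∧ G x u ∧ G u y := fun u hu => by
    have := hq.mem u hu
    simp only [mem_nbr] at this
    tauto
  have hpath : IsPathIn G L (i + 2) (x :: (q ++ [y])) := by
    refine ⟨by simp [hq.length_eq], ?_, ?_, ?_⟩
    · simp only [List.nodup_cons, List.mem_append, List.mem_singleton, not_or, List.nodup_append,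
        List.nodup_nil, List.not_mem_nil, not_false_eq_true, and_true, true_and]
      refine ⟨⟨fun hm => not_adj_self hG x (hqL x hm).2.1,
        fun h => not_adj_self hG x (h ▸ hxy)⟩, hq.nodup, ?_⟩
      rintro a ha b rfl rfl
      exact not_adj_self hG _ (hqL _ ha).2.2
    · intro u hu
      simp only [List.mem_cons, List.mem_append, List.not_mem_nil, or_false] at hu
      rcases hu with rfl | hu | rfl
      · exact hx
      · exact (hqL u hu).1
      · exact hyL
    · exact isChain_cons_append_singleton hq.chain
        (fun u hu => (hqL u (List.mem_of_mem_head? hu)).2.1)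
        (fun u hu => (hqL u (List.mem_of_mem_getLast? hu)).2.2) (fun _ => hxy)
  refine ⟨nbr G (U \ L) y ∩ nbr (flip G) (U \ L) x,
    inter_subset_left.trans ((nbr_subset _ _).trans sdiff_subset), ?_, fun w hw => ?_⟩
  · have h1 := card_add_card_le_card_inter_add (nbr_subset (G := G) (U \ L) y)
      (nbr_subset (G := flip G) (U \ L) x)
    have h2 : (#(U \ L) : ℝ) + #L = #U := by exact_mod_cast card_sdiff_add_card_eq_card hL
    have h3 : ∀ (F : V → V → Prop) (v : V), (#(nbr F U v) : ℝ) ≤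
        #(nbr F (U \ L) v) + #(nbr F L v) := by
      intro F v
      have : nbr F U v ⊆ nbr F (U \ L) v ∪ nbr F L v := by
        intro u hu
        simp only [mem_nbr, mem_union, mem_sdiff] at hu ⊢
        tauto
      exact_mod_cast (card_le_card this).trans (card_union_le _ _)
    have h4 : (#(nbr G L y) : ℝ) ≤ #(nbr G (nbr G L x) y) + #(L \ nbr G L x) := by
      exact_mod_cast card_le_nbr_add_sdiff L (nbr G L x) y
    have h5 : (#(L \ nbr G L x) : ℝ) + #(nbr G L x) = #L := by
      exact_mod_cast card_sdiff_add_card_eq_card (nbr_subset L x)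
    have h6 := (hU y (hL hyL)).1
    have h7 := (hU x (hL hx)).2
    have h8 := h3 G y
    have h9 := h3 (flip G) x
    linarith
  · simp only [mem_inter, mem_nbr, mem_sdiff] at hw
    refine ⟨_, hpath, by simp [hq.length_eq], ?_, ?_, w, _, rfl, ?_⟩
    · exact List.nodup_cons.2 ⟨fun hm => hw.1.1.2 (hpath.mem w hm), hpath.nodup⟩
    · intro u hu
      rcases List.mem_cons.1 hu with rfl | hu
      · exact hw.1.1.1
      · exact hL (hpath.mem u hu)
    · refine isChain_cons_append_singleton hpath.chain ?_ ?_ (by simp)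
      · simpa using show G w x from hw.2.2
      · intro u hu
        rw [← List.cons_append, List.getLast?_append] at hu
        simp only [List.getLast?_singleton, Option.some_or, Option.mem_def,
          Option.some.injEq] at hu
        exact hu ▸ hw.1.2

end ShortCycles

section LayerCake

variable {V : Type*}

lemma intervalIntegrable_card_le (U : Finset V) (f : V → ℝ) (a b : ℝ) :
    IntervalIntegrable (fun s => (#{u ∈ U | s ≤ f u} : ℝ)) MeasureTheory.volume a b := by
  refine Antitone.intervalIntegrable fun s t hst => Nat.cast_le.2 (card_le_card fun u hu => ?_)
  rw [mem_filter] at hu ⊢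
  exact ⟨hu.1, hst.trans hu.2⟩

lemma integral_card_le (U : Finset V) (f : V → ℝ) {m : ℝ} (hf : ∀ u ∈ U, f u ∈ Set.Icc 0 m) :
    ∫ s in (0 : ℝ)..m, (#{u ∈ U | s ≤ f u} : ℝ) = ∑ u ∈ U, f u := by
  have h1 : ∀ s : ℝ, (#{u ∈ U | s ≤ f u} : ℝ) =
      ∑ u ∈ U, Set.indicator {x | x ≤ f u} (fun _ => (1 : ℝ)) s := by
    intro s
    rw [card_filter]
    push_cast
    exact sum_congr rfl fun u _ => by simp [Set.indicator]
  simp_rw [h1]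
  rw [intervalIntegral.integral_finsetSum]
  · refine sum_congr rfl fun u hu => ?_
    rw [intervalIntegral.integral_indicator (hf u hu)]
    simp
  · intro u _
    refine Antitone.intervalIntegrable fun s t hst => ?_
    simp only [Set.indicator, Set.mem_ofPred_eq]
    split_ifs <;> linarith

/-- Comparison of sums through comparison of the sizes of superlevel sets. -/
lemma mul_sum_le_of_card_le {U : Finset V} {f h : V → ℝ} {m a b : ℝ} (hm : 0 ≤ m)
    (hf : ∀ u ∈ U, f u ∈ Set.Icc 0 m) (hh : ∀ u ∈ U, 0 ≤ h u)
    (hcard : ∀ s, 0 < s → a * #{u ∈ U | s ≤ f u} ≤ #{u ∈ U | s ≤ h u} + b) :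
    a * ∑ u ∈ U, f u ≤ ∑ u ∈ U, h u + b * m := by
  have h1 : ∑ u ∈ U, min (h u) m ≤ ∑ u ∈ U, h u := sum_le_sum fun u _ => min_le_left _ _
  refine le_trans ?_ (add_le_add_left h1 _)
  rw [← integral_card_le U f hf, ← integral_card_le (m := m) U (fun u => min (h u) m)
    (fun u hu => ⟨le_min (hh u hu) hm, min_le_right _ _⟩)]
  have h2 : b * m = ∫ _ in (0 : ℝ)..m, b := by simp [mul_comm]
  rw [h2, ← intervalIntegral.integral_const_mul,
    ← intervalIntegral.integral_add (intervalIntegrable_card_le _ _ _ _) (by simp)]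
  refine intervalIntegral.integral_mono_on_of_le_Ioo hm
    ((intervalIntegrable_card_le _ _ _ _).const_mul _)
    ((intervalIntegrable_card_le _ _ _ _).add (by simp)) fun s hs => ?_
  refine (hcard s hs.1).trans_eq ?_
  congr 3
  ext u
  simp only [mem_filter, le_min_iff, hs.2.le, and_true]

end LayerCake

section CycleOfNonposWeight

variable {V : Type*} {G : V → V → Prop}

lemma sum_eq_sum_max_sub_sum_max (U : Finset V) (g : V → ℝ) :
    ∑ u ∈ U, g u = ∑ u ∈ U, max (g u) 0 - ∑ u ∈ U, max (-g u) 0 := by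
  rw [← sum_sub_distrib]
  refine sum_congr rfl fun u _ => ?_
  rcases le_total 0 (g u) with h | h
  · rw [max_eq_left h, max_eq_right (by linarith)]; ring
  · rw [max_eq_right h, max_eq_left (by linarith)]; ring

lemma sum_map_le_length_mul {g : V → ℝ} {b : ℝ} {l : List V} (hl : ∀ u ∈ l, g u ≤ b) :
    (l.map g).sum ≤ l.length * b := by
  rw [← nsmul_eq_mul, ← List.length_map (f := g)]
  refine List.sum_le_card_nsmul _ _ fun x hx => ?_
  obtain ⟨u, hu, rfl⟩ := List.mem_map.1 hx
  exact hl u hu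

/-- If the total weight is nonpositive, there is a cycle of prescribed short length of nonpositive
weight. -/
lemma exists_cycle_sum_nonpos (hG : IsOriented G) {c : ℝ} (hc : 0 ≤ c) {U : Finset V} {j : ℕ}
    (hU : ∀ u ∈ U, NearRegular G c U u) (hj : 3 ≤ j) (hne : U.Nonempty)
    (hn : 12000 * j * (2 ^ j * (2 * c * #U + 1)) ≤ #U) (g : V → ℝ) (hg : ∑ u ∈ U, g u ≤ 0) :
    ∃ l, IsCycleIn G U j l ∧ (l.map g).sum ≤ 0 := by
  by_contra! hpos
  set e : ℝ := 2 ^ j * (2 * c * #U + 1) with he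
  have hpow : (1 : ℝ) ≤ 2 ^ j := one_le_pow₀ (by norm_num)
  have hcn : 0 ≤ c * #U := by positivity
  have he0 : 1 ≤ e := by rw [he]; nlinarith
  have hj' : (3 : ℝ) ≤ j := by exact_mod_cast hj
  have hn20 : 20 * 2 ^ j * (2 * c * #U + 1) ≤ (#U : ℝ) := by
    rw [mul_assoc, ← he]
    nlinarith
  obtain ⟨v, hv, hmin⟩ := exists_min_image U g hne
  obtain ⟨m, hm⟩ : ∃ m, m = -g v := ⟨_, rfl⟩
  have hm0 : 0 < m := by
    by_contra! hm0
    have h0 : ∀ u ∈ U, g u = 0 := by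
      have h0 : ∀ u ∈ U, 0 ≤ g u := fun u hu => by linarith [hmin u hu]
      exact (sum_eq_zero_iff_of_nonneg h0).1 (le_antisymm hg (sum_nonneg h0))
    obtain ⟨l, hl⟩ := exists_cycle_through hG hc hU subset_rfl hv (by simp; positivity) hj hn20
    refine (hpos _ hl).ne' (List.sum_eq_zero fun x hx => ?_)
    obtain ⟨u, hu, rfl⟩ := List.mem_map.1 hx
    exact h0 u (hl.mem u hu)
  have hS : (#U : ℝ) / 20 < #{u ∈ U | m / j ≤ g u} := by
    by_contra! hS
    have hvS : v ∈ U \ {u ∈ U | m / j ≤ g u} := by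
      simp only [mem_sdiff, mem_filter, not_and, not_le]
      refine ⟨hv, fun _ => ?_⟩
      have : 0 < m / j := by positivity
      linarith
    obtain ⟨l, hl⟩ := exists_cycle_through hG hc hU sdiff_subset hvS
      (by rwa [Finset.sdiff_sdiff_eq_self (filter_subset _ _)]) hj hn20
    have h1 := hpos _ (hl.mono sdiff_subset)
    have h2 : (l.map g).sum ≤ (l.map g).length • (m / j) := by
      refine List.sum_le_card_nsmul _ _ fun x hx => ?_
      obtain ⟨u, hu, rfl⟩ := List.mem_map.1 hx
      have := hl.mem u (List.mem_cons_of_mem _ hu)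
      simp only [mem_sdiff, mem_filter, not_and, not_le] at this
      exact (this.2 this.1).le
    have h3 : ((l.map g).length : ℝ) = j - 1 := by
      have := hl.length_eq
      rw [List.length_map, ← this]
      simp
    rw [nsmul_eq_mul, h3] at h2
    rw [List.map_cons, List.sum_cons] at h1
    have h4 : ((j : ℝ) - 1) * (m / j) = m - m / j := by field_simp
    have : 0 < m / j := by positivity
    linarith
  have hplus : m / j * (#U / 20) ≤ ∑ u ∈ U, max (g u) 0 := by
    calc m / j * (#U / 20) ≤ m / j * #{u ∈ U | m / j ≤ g u} := by gcongr
      _ = ∑ u ∈ {u ∈ U | m / j ≤ g u}, m / j := by rw [sum_const, nsmul_eq_mul, mul_comm]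
      _ ≤ ∑ u ∈ {u ∈ U | m / j ≤ g u}, max (g u) 0 :=
        sum_le_sum fun u hu => (mem_filter.1 hu).2.trans (le_max_left _ _)
      _ ≤ ∑ u ∈ U, max (g u) 0 :=
        sum_le_sum_of_subset_of_nonneg (filter_subset _ _) fun u _ _ => le_max_right _ _
  have hlayer := mul_sum_le_of_card_le (U := U) (f := fun u => max (-g u) 0)
    (h := fun u => max (g u) 0 / 2) (a := 9 / 10) (b := 180 * e) hm0.le
    (fun u hu => ⟨le_max_right _ _, max_le (by linarith [hmin u hu]) hm0.le⟩)
    (fun u _ => by positivity) (by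
      intro s hs
      set L := {u ∈ U | s ≤ max (-g u) 0} with hL
      have hLs : ∀ u ∈ L, g u ≤ -s := by
        intro u hu
        rcases le_max_iff.1 (mem_filter.1 hu).2 with h | h <;> linarith
      have hsum : ∀ l : List V, (∀ u ∈ l, u ∈ L) → (l.map g).sum ≤ l.length * (-s) :=
        fun l hl => sum_map_le_length_mul fun u hu => hLs u (hl u hu)
      by_cases hlarge : 180 * e ≤ #L
      · obtain ⟨W, hWU, hW, hcl⟩ := exists_many_closing hG hc hU (filter_subset _ U) hj hlarge
          (by
            intro l hl
            have h1 := hpos l (hl.mono (filter_subset _ _))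
            have h2 := hsum l hl.mem
            rw [hl.length_eq] at h2
            nlinarith)
        have : W ⊆ {u ∈ U | s ≤ max (g u) 0 / 2} := by
          intro w hw
          refine mem_filter.2 ⟨hWU hw, ?_⟩
          obtain ⟨l, hl, hlc⟩ := hcl w hw
          have h1 := hpos _ hlc
          have h2 := hsum l hl.mem
          have h3 : (l.length : ℝ) = j - 1 := by
            rw [hl.length_eq, Nat.cast_sub (by omega), Nat.cast_one]
          rw [h3] at h2
          rw [List.map_cons, List.sum_cons] at h1
          have h4 : 2 * s ≤ g w := by nlinarith
          linarith [le_max_left (g w) 0]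
        have : (#W : ℝ) ≤ #{u ∈ U | s ≤ max (g u) 0 / 2} := by exact_mod_cast card_le_card this
        linarith
      · have : (0 : ℝ) ≤ #{u ∈ U | s ≤ max (g u) 0 / 2} := by positivity
        have : (0 : ℝ) ≤ #L := by positivity
        linarith)
  rw [← sum_div] at hlayer
  have hsplit := sum_eq_sum_max_sub_sum_max U g
  have hem : 180 * e * m ≤ 3 / 10 * (m / j * (#U / 20)) := by
    have : 12000 * e ≤ #U / j := by
      rw [le_div_iff₀ (by positivity)]
      linarith
    have h2 : m / j * (#U / 20) = m / 20 * (#U / j) := by field_simp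
    rw [h2]
    nlinarith
  have hU0 : (0 : ℝ) < #U := by exact_mod_cast card_pos.2 hne
  have : 0 < m / j * (#U / 20) := by positivity
  linarith

end CycleOfNonposWeight

section ConnectingPaths

variable {V : Type*} {G : V → V → Prop}

lemma exists_edge_between (hG : IsOriented G) {c : ℝ} (hc : 0 ≤ c) {U P R : Finset V}
    (hU : ∀ u ∈ U, NearRegular G c U u) (hPU : P ⊆ U) (hRU : R ⊆ U)
    (hP : (44 / 100 * #U : ℝ) ≤ #P) (hR : (44 / 100 * #U : ℝ) ≤ #R)
    (hn : 200 * (2 * c * #U + 1) ≤ (#U : ℝ)) : ∃ p ∈ P, ∃ r ∈ R, G p r := by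
  by_contra! hno
  have hcn : 0 ≤ c * #U := by positivity
  have hPne : P.Nonempty := by
    rw [← card_pos]
    have : (0 : ℝ) < #P := by linarith
    exact_mod_cast this
  have hinter : (#(P ∩ R) : ℝ) ≤ 2 * c * #U := by
    rcases (P ∩ R).eq_empty_or_nonempty with h0 | h0
    · rw [h0, card_empty, Nat.cast_zero]
      linarith
    · obtain ⟨v, hv, hvL⟩ := ((NearRegular.almostComplete hU).mono hG
        (inter_subset_left.trans hPU)).exists_large_nbr h0
      have : nbr G (P ∩ R) v = ∅ := by
        refine filter_eq_empty_iff.2 fun u hu => ?_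
        exact hno v (mem_inter.1 hv).1 u (mem_inter.1 hu).2
      rw [this, card_empty, Nat.cast_zero] at hvL
      linarith
  obtain ⟨b, hb, hbP⟩ := exists_small_nbr hG hPne
  have h1 : nbr G U b ⊆ nbr G P b ∪ (U \ (P ∪ R)) := by
    intro u hu
    obtain ⟨huU, hbu⟩ := mem_nbr.1 hu
    have : u ∉ R := fun h => hno b hb u h hbu
    simp only [mem_union, mem_nbr, mem_sdiff]
    tauto
  have h2 : (#(nbr G U b) : ℝ) ≤ #(nbr G P b) + #(U \ (P ∪ R)) := by
    exact_mod_cast (card_le_card h1).trans (card_union_le _ _)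
  have h3 : (#(U \ (P ∪ R)) : ℝ) + #(P ∪ R) = #U := by
    exact_mod_cast card_sdiff_add_card_eq_card (union_subset hPU hRU)
  have h4 : (#(P ∪ R) : ℝ) + #(P ∩ R) = #P + #R := by
    exact_mod_cast card_union_add_card_inter P R
  have h5 := (hU b (hPU hb)).1
  linarith

lemma exists_short_connection (hG : IsOriented G) {c : ℝ} (hc : 0 ≤ c) {U U' : Finset V} {x y : V}
    (hU : ∀ u ∈ U, NearRegular G c U u) (hU' : U' ⊆ U)
    (hsmall : (#(U \ U') : ℝ) ≤ 55 / 1000 * #U) (hx : NearRegular G c U x)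
    (hy : NearRegular G c U y) (hn : 200 * (2 * c * #U + 1) ≤ (#U : ℝ)) :
    ∃ p ∈ U', ∃ r ∈ U', G y p ∧ G p r ∧ G r x := by
  have h1 := hy.card_nbr_sub (U' := U')
  have h2 := hx.flip.card_nbr_sub (U' := U')
  obtain ⟨p, hp, r, hr, hpr⟩ := exists_edge_between hG hc hU
    ((nbr_subset (G := G) U' y).trans hU') ((nbr_subset (G := flip G) U' x).trans hU')
    (by linarith) (by linarith) hn
  exact ⟨p, (mem_nbr.1 hp).1, r, (mem_nbr.1 hr).1, (mem_nbr.1 hp).2, hpr, (mem_nbr.1 hr).2⟩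

/-- A path of quite negative weight, whose vertices have weights not much above the average. -/
lemma exists_path_sum_le (hG : IsOriented G) {c : ℝ} (hc : 0 ≤ c) {U S : Finset V} {k : ℕ}
    (hU : ∀ u ∈ U, NearRegular G c U u) (hk : (160 : ℝ) ≤ k) (hne : U.Nonempty) (g : V → ℝ) {a : ℝ}
    (ha : 0 ≤ a) (hSU : S ⊆ U) (hS : (#S : ℝ) ≤ #U / 20) (hgS : ∀ u ∈ U, u ∉ S → g u ≤ 20 * a)
    (hneg : ∑ u ∈ U, max (-g u) 0 = a * #U) (hpos : ∑ u ∈ U, max (g u) 0 ≤ a * #U)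
    (hn : 80 * k * (2 ^ k * (2 * c * #U + 1)) ≤ #U) :
    ∃ q, IsPathIn G U k q ∧ (q.map g).sum ≤ -(80 * a) := by
  set e : ℝ := 2 ^ k * (2 * c * #U + 1) with he
  have hU0 : (0 : ℝ) < #U := by exact_mod_cast card_pos.2 hne
  have hcn : 0 ≤ c * #U := by positivity
  have hk0 : 1 ≤ k := by exact_mod_cast (by linarith : (1 : ℝ) ≤ k)
  have hpow : (1 : ℝ) ≤ 2 ^ k := one_le_pow₀ (by norm_num)
  have hce : 2 * c * #U + 1 ≤ e := by nlinarith
  have hcomp := NearRegular.almostComplete hU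
  by_cases hv : ∃ v ∈ U, g v ≤ -(20 * (k + 4) * a)
  · obtain ⟨v, hvU, hv⟩ := hv
    obtain ⟨i, rfl⟩ : ∃ i, k = i + 1 := ⟨k - 1, (Nat.sub_add_cancel hk0).symm⟩
    have h1 := (hU v hvU).card_nbr_sub (U' := U \ S)
    rw [Finset.sdiff_sdiff_eq_self hSU] at h1
    have h2 : 2 ^ i * (2 * c * #U + 1) ≤ e := by
      rw [he]
      gcongr <;> norm_num
    obtain ⟨l, hl⟩ := exists_path hG (by linarith : 0 ≤ 2 * c * (#U : ℝ)) i
      (hcomp.mono hG ((nbr_subset (G := G) (U \ S) v).trans sdiff_subset)) (by nlinarith)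
    have hlm : ∀ u ∈ l, (u ∈ U ∧ u ∉ S) ∧ G v u := fun u hu => by
      have := hl.mem u hu
      simpa only [mem_nbr, mem_sdiff] using this
    refine ⟨v :: l, ⟨by simp [hl.length_eq], ?_, ?_, ?_⟩, ?_⟩
    · exact List.nodup_cons.2 ⟨fun h => not_adj_self hG v (hlm v h).2, hl.nodup⟩
    · intro u hu
      rcases List.mem_cons.1 hu with rfl | hu
      · exact hvU
      · exact (hlm u hu).1.1
    · exact List.isChain_cons.2
        ⟨fun u hu => (hlm u (List.mem_of_mem_head? hu)).2, hl.chain⟩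
    · have := sum_map_le_length_mul (g := g) (l := l) fun u hu => hgS u (hlm u hu).1.1 (hlm u hu).1.2
      rw [hl.length_eq] at this
      rw [List.map_cons, List.sum_cons]
      push_cast at hv
      linarith
  · push Not at hv
    have ha0 : 0 < a := by
      refine lt_of_le_of_ne ha fun h => ?_
      subst h
      rw [zero_mul] at hneg hpos
      obtain ⟨v, hvU⟩ := hne
      have h1 := hv v hvU
      have h2 := single_le_sum (f := fun u => max (g u) 0) (fun u _ => le_max_right _ _) hvU
      have h3 := le_max_left (g v) 0
      linarith
    set L := {u ∈ U | g u ≤ -(a / 2)} with hL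
    have hLcard : (#U : ℝ) ≤ 40 * (k + 4) * #L := by
      have h1 : ∀ u ∈ U, max (-g u) 0 ≤ a / 2 + if g u ≤ -(a / 2) then 20 * (k + 4) * a else 0 := by
        intro u hu
        have := hv u hu
        split_ifs with h
        · exact max_le (by linarith) (by positivity)
        · exact max_le (by linarith) (by linarith)
      have h2 := sum_le_sum h1
      rw [hneg, sum_add_distrib, sum_const, ← sum_filter, sum_const, nsmul_eq_mul, nsmul_eq_mul,
        ← hL] at h2
      have h3 : a * #U ≤ a * (40 * (k + 4) * #L) := by linarith
      exact le_of_mul_le_mul_left h3 ha0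
    obtain ⟨l, hl⟩ := exists_path hG (by linarith : 0 ≤ 2 * c * (#U : ℝ)) k
      (hcomp.mono hG (filter_subset _ U)) (by
        have h1 : e ≤ #L := by
          have h2 : (40 * (k + 4) : ℝ) * e ≤ 40 * (k + 4) * #L := by nlinarith
          exact le_of_mul_le_mul_left h2 (by positivity)
        rw [← hL]
        linarith)
    refine ⟨l, hl.mono (filter_subset _ U), ?_⟩
    have := sum_map_le_length_mul (g := g) (l := l) fun u hu => (mem_filter.1 (hl.mem u hu)).2
    rw [hl.length_eq] at this
    nlinarith

/-- If the total weight is nonpositive, any two vertices are connected by a path of prescribed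
moderate length whose interior has nonpositive weight. -/
lemma exists_connection_sum_nonpos (hG : IsOriented G) {c : ℝ} (hc : 0 ≤ c) {U : Finset V}
    {x y : V} {k : ℕ} (hU : ∀ u ∈ U, NearRegular G c U u) (hx : NearRegular G c U x)
    (hy : NearRegular G c U y) (hk : (164 : ℝ) ≤ k) (hne : U.Nonempty)
    (hn : 80 * k * (2 ^ k * (2 * c * #U + 1)) ≤ #U) (g : V → ℝ) (hg : ∑ u ∈ U, g u ≤ 0) :
    ∃ q, IsPathIn G U k q ∧ (∀ u ∈ q.head?, G y u) ∧ (∀ u ∈ q.getLast?, G u x) ∧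
      (q.map g).sum ≤ 0 := by
  have hk0 : 4 ≤ k := by exact_mod_cast (by linarith : (4 : ℝ) ≤ k)
  obtain ⟨i, rfl⟩ : ∃ i, k = i + 4 := ⟨k - 4, (Nat.sub_add_cancel hk0).symm⟩
  have hU0 : (0 : ℝ) < #U := by exact_mod_cast card_pos.2 hne
  have hcn : 0 ≤ c * #U := by positivity
  have hi : (160 : ℝ) ≤ i := by
    push_cast at hk
    linarith
  have hpow : (1 : ℝ) ≤ 2 ^ i := one_le_pow₀ (by norm_num)
  have hn1 : 80 * i * (2 ^ i * (2 * c * #U + 1)) ≤ (#U : ℝ) := by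
    refine le_trans ?_ hn
    gcongr
    · exact Nat.le_add_right _ _
    · norm_num
    · exact Nat.le_add_right _ _
  have hn2 : 12800 * (2 * c * #U + 1) ≤ (#U : ℝ) := by
    refine le_trans ?_ hn1
    have : 2 * c * #U + 1 ≤ 2 ^ i * (2 * c * #U + 1) := by nlinarith
    nlinarith
  have hn3 : 1280 * i ≤ (#U : ℝ) := by
    refine le_trans ?_ hn
    have h1 : 1 ≤ 2 ^ i * (2 * c * #U + 1) := by nlinarith
    have h2 : (2 : ℝ) ^ (i + 4) = 16 * 2 ^ i := by ring
    rw [h2]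
    push_cast
    nlinarith
  obtain ⟨a, ha⟩ : ∃ a, a = (∑ u ∈ U, max (-g u) 0) / #U := ⟨_, rfl⟩
  have ha0 : 0 ≤ a := by
    rw [ha]
    exact div_nonneg (sum_nonneg fun u _ => le_max_right _ _) hU0.le
  have hneg : ∑ u ∈ U, max (-g u) 0 = a * #U := by
    rw [ha]
    field_simp
  have hpos : ∑ u ∈ U, max (g u) 0 ≤ a * #U := by
    have hsplit := sum_eq_sum_max_sub_sum_max U g
    linarith
  set S := {u ∈ U | 20 * a < g u} with hS
  have hScard : (#S : ℝ) ≤ #U / 20 := by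
    rcases ha0.eq_or_lt with h0 | h0
    · have : S = ∅ := by
        refine filter_eq_empty_iff.2 fun u hu => ?_
        have h2 := single_le_sum (f := fun u => max (g u) 0) (fun u _ => le_max_right _ _) hu
        have h3 := le_max_left (g u) 0
        rw [← h0] at hpos ⊢
        linarith
      rw [this, card_empty, Nat.cast_zero]
      linarith
    · have h1 : #S * (20 * a) ≤ a * #U := by
        calc #S * (20 * a) = ∑ u ∈ S, 20 * a := by rw [sum_const, nsmul_eq_mul]
          _ ≤ ∑ u ∈ S, max (g u) 0 :=
            sum_le_sum fun u hu => (mem_filter.1 hu).2.le.trans (le_max_left _ _)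
          _ ≤ ∑ u ∈ U, max (g u) 0 :=
            sum_le_sum_of_subset_of_nonneg (filter_subset _ _) fun u _ _ => le_max_right _ _
          _ ≤ a * #U := hpos
      have h2 : a * (20 * #S) ≤ a * #U := by linarith
      have := le_of_mul_le_mul_left h2 h0
      linarith
  have hgS : ∀ u ∈ U, u ∉ S → g u ≤ 20 * a := by
    intro u hu huS
    by_contra! h
    exact huS (mem_filter.2 ⟨hu, h⟩)
  obtain ⟨q, hq, hqsum⟩ := exists_path_sum_le hG hc hU hi hne g ha0 (filter_subset _ U)
    hScard hgS hneg hpos hn1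
  have hsize : ∀ l : List V, l.length ≤ i + 2 →
      (#(U \ (U \ (S ∪ l.toFinset))) : ℝ) ≤ 55 / 1000 * #U := by
    intro l hl
    have h1 : U \ (U \ (S ∪ l.toFinset)) ⊆ S ∪ l.toFinset := by
      intro u hu
      simp only [mem_sdiff, not_and, not_not] at hu
      exact hu.2 hu.1
    have h2 := (card_le_card h1).trans (card_union_le _ _)
    have h3 := l.toFinset_card_le
    have h4 : (#(U \ (U \ (S ∪ l.toFinset))) : ℝ) ≤ #S + (i + 2) := by
      exact_mod_cast (by omega : #(U \ (U \ (S ∪ l.toFinset))) ≤ #S + (i + 2))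
    linarith
  have hqne : q ≠ [] := by
    rintro rfl
    have h0 := hq.length_eq
    simp only [List.length_nil] at h0
    rw [← h0] at hi
    norm_num at hi
  have hhead := hq.mem _ (q.head_mem hqne)
  have hlast := hq.mem _ (q.getLast_mem hqne)
  obtain ⟨z₁, hz₁, z₂, hz₂, hyz, hz₁₂, hzq⟩ := exists_short_connection hG hc hU sdiff_subset
    (hsize q (by rw [hq.length_eq]; omega)) (hU _ hhead) hy (by linarith)
  obtain ⟨z₃, hz₃, z₄, hz₄, hqz, hz₃₄, hzx⟩ := exists_short_connection hG hc hU sdiff_subset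
    (hsize (z₁ :: z₂ :: q) (by simp [hq.length_eq])) hx (hU _ hlast) (by linarith)
  simp only [mem_sdiff, mem_union, List.mem_toFinset, not_or, List.mem_cons] at hz₁ hz₂ hz₃ hz₄
  have hne₁₂ : z₁ ≠ z₂ := fun h => not_adj_self hG z₁ (by rwa [← h] at hz₁₂)
  have hne₃₄ : z₃ ≠ z₄ := fun h => not_adj_self hG z₃ (by rwa [← h] at hz₃₄)
  refine ⟨z₁ :: ((z₂ :: (q ++ [z₃])) ++ [z₄]), ⟨by simp [hq.length_eq], ?_, ?_, ?_⟩, ?_, ?_, ?_⟩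
  · have hqnd := hq.nodup
    have h1 : ∀ u ∈ q, u ≠ z₃ := fun u hu h => hz₃.2.2.2.2 (h ▸ hu)
    have h2 : ∀ u ∈ q, u ≠ z₄ := fun u hu h => hz₄.2.2.2.2 (h ▸ hu)
    simp only [List.nodup_cons, List.cons_append, List.append_assoc, List.mem_cons,
      List.mem_append, List.not_mem_nil, or_false, not_or, List.nodup_append, List.nodup_nil,
      not_false_eq_true, and_true, List.nil_append]
    refine ⟨⟨hne₁₂, hz₁.2.2, Ne.symm hz₃.2.2.1, Ne.symm hz₄.2.2.1⟩,
      ⟨hz₂.2.2, Ne.symm hz₃.2.2.2.1, Ne.symm hz₄.2.2.2.1⟩, hqnd, hne₃₄, ?_⟩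
    rintro u hu b (rfl | rfl)
    · exact h1 u hu
    · exact h2 u hu
  · intro u hu
    simp only [List.mem_cons, List.mem_append, List.not_mem_nil, or_false] at hu
    rcases hu with rfl | (rfl | hu | rfl) | rfl
    · exact hz₁.1
    · exact hz₂.1
    · exact hq.mem u hu
    · exact hz₃.1
    · exact hz₄.1
  · refine isChain_cons_append_singleton (isChain_cons_append_singleton hq.chain ?_ ?_ ?_) ?_ ?_ ?_
    · intro u hu
      rw [List.head?_eq_some_head hqne, Option.mem_def, Option.some.injEq] at hu
      exact hu ▸ hzq
    · intro u hu
      rw [List.getLast?_eq_some_getLast hqne, Option.mem_def, Option.some.injEq] at hu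
      exact hu ▸ hqz
    · exact fun h => absurd h hqne
    · simpa using hz₁₂
    · intro u hu
      rw [← List.cons_append, List.getLast?_append] at hu
      simp only [List.getLast?_singleton, Option.some_or, Option.mem_def,
        Option.some.injEq] at hu
      exact hu ▸ hz₃₄
    · simp
  · simpa using hyz
  · intro u hu
    rw [← List.cons_append, List.getLast?_append] at hu
    simp only [List.getLast?_singleton, Option.some_or, Option.mem_def,
      Option.some.injEq] at hu
    exact hu ▸ hzx
  · have h1 := hgS _ hz₁.1 hz₁.2.1
    have h2 := hgS _ hz₂.1 hz₂.2.1
    have h3 := hgS _ hz₃.1 hz₃.2.1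
    have h4 := hgS _ hz₄.1 hz₄.2.1
    simp only [List.map_cons, List.map_append, List.sum_cons, List.sum_append, List.map_nil,
      List.sum_nil]
    linarith

end ConnectingPaths

section Potential

variable {V : Type*} {G : V → V → Prop}

lemma max_add_pow_four_le (x d : ℝ) :
    max (x + d) 0 ^ 4 ≤
      max x 0 ^ 4 + 4 * max x 0 ^ 3 * d + 8 * max x 0 ^ 2 * d ^ 2 + 3 * d ^ 4 := by
  set y := max x 0 with hy
  have h1 : max (x + d) 0 ^ 4 ≤ (y + d) ^ 4 := by
    rcases le_total 0 (y + d) with h | h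
    · refine pow_le_pow_left₀ (le_max_right _ _) (max_le ?_ h) 4
      linarith [le_max_left x 0]
    · rw [max_eq_right (by linarith [le_max_left x 0]), zero_pow four_ne_zero]
      positivity
  nlinarith [mul_nonneg (sq_nonneg d) (sq_nonneg (y - d))]

/-- The total fourth-power deficit below `p` of the averages over `U` of the functions `a i`. -/
noncomputable def deficit {ι : Type*} (p : ℝ) (I : Finset ι) (a : ι → V → ℝ) (U : Finset V) : ℝ :=
  ∑ i ∈ I, max (p - (∑ u ∈ U, a i u) / #U) 0 ^ 4

/-- If for each weight of nonpositive total there is an admissible small set of nonpositive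
weight, then some admissible set can be removed while keeping the deficit small. -/
lemma exists_deficit_sdiff_le {ι : Type*} {p K : ℝ} {I : Finset ι} {a : ι → V → ℝ}
    {U : Finset V} {P : Finset V → Prop} (ha : ∀ i u, a i u ∈ Set.Icc 0 1) (hK : 1 ≤ K)
    (hI : (#I : ℝ) ≤ 4 * #U) (hU : 2 * K ≤ #U) (hdef : deficit p I a U ≤ 5000 * K ^ 4 / #U)
    (hP : ∀ g : V → ℝ, ∑ u ∈ U, g u ≤ 0 →
      ∃ T ⊆ U, T.Nonempty ∧ (#T : ℝ) ≤ K ∧ P T ∧ ∑ u ∈ T, g u ≤ 0) :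
    ∃ T ⊆ U, T.Nonempty ∧ (#T : ℝ) ≤ K ∧ P T ∧
      deficit p I a (U \ T) ≤ 5000 * K ^ 4 / #(U \ T) := by
  set s : ℝ := (#U : ℝ) with hs
  have hs2 : 2 ≤ s := by linarith
  set X : ι → ℝ := fun i => (∑ u ∈ U, a i u) / s with hX
  set y : ι → ℝ := fun i => max (p - X i) 0 with hy
  obtain ⟨T, hTU, hTne, hTK, hPT, hT⟩ := hP (fun u => ∑ i ∈ I, 4 * y i ^ 3 * (a i u - X i)) (by
    rw [sum_comm]
    refine (sum_eq_zero fun i _ => ?_).le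
    rw [← mul_sum, sum_sub_distrib, sum_const, nsmul_eq_mul, ← hs]
    have : s * X i = ∑ u ∈ U, a i u := by
      rw [hX]
      field_simp
    rw [this, sub_self, mul_zero])
  refine ⟨T, hTU, hTne, hTK, hPT, ?_⟩
  have hT1 : (1 : ℝ) ≤ #T := by exact_mod_cast hTne.card_pos
  set k : ℝ := (#T : ℝ) with hk
  have hsk : (#(U \ T) : ℝ) = s - k := by
    rw [eq_sub_iff_add_eq, hs, hk]
    exact_mod_cast card_sdiff_add_card_eq_card hTU
  rw [hsk]
  have hsk0 : s / 2 ≤ s - k := by linarith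
  set D : ι → ℝ := fun i => ∑ u ∈ T, (a i u - X i) with hD
  have hX01 : ∀ i, X i ∈ Set.Icc 0 1 := by
    intro i
    refine ⟨div_nonneg (sum_nonneg fun u _ => (ha i u).1) (by linarith), ?_⟩
    rw [div_le_one (by linarith), hs, card_eq_sum_ones, Nat.cast_sum, Nat.cast_one]
    exact sum_le_sum fun u _ => (ha i u).2
  have hDk : ∀ i, |D i| ≤ k := by
    intro i
    refine (abs_sum_le_sum_abs _ _).trans ?_
    rw [hk, card_eq_sum_ones, Nat.cast_sum, Nat.cast_one]
    refine sum_le_sum fun u _ => abs_le.2 ?_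
    constructor <;> linarith [(ha i u).1, (ha i u).2, (hX01 i).1, (hX01 i).2]
  have hX' : ∀ i, p - (∑ u ∈ U \ T, a i u) / (s - k) = p - X i + D i / (s - k) := by
    intro i
    have h1 : ∑ u ∈ U \ T, a i u = s * X i - ∑ u ∈ T, a i u := by
      rw [eq_sub_iff_add_eq, sum_sdiff hTU, hX]
      field_simp
    have h2 : D i = ∑ u ∈ T, a i u - k * X i := by
      rw [hD]
      simp only [sum_sub_distrib, sum_const, nsmul_eq_mul, hk]
    have h3 : s - k ≠ 0 := by linarith
    rw [h1, h2]
    field_simp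
    ring
  have hterm : ∀ i ∈ I, max (p - (∑ u ∈ U \ T, a i u) / (s - k)) 0 ^ 4 ≤
      y i ^ 4 * (1 + 1 / (2 * s)) + 4 * y i ^ 3 * D i / (s - k) + 560 * K ^ 4 / s ^ 3 := by
    intro i _
    rw [hX' i]
    refine (max_add_pow_four_le _ _).trans ?_
    set d := D i / (s - k) with hd
    have hd1 : d ^ 2 ≤ 4 * K ^ 2 / s ^ 2 := by
      have : |d| ≤ 2 * K / s := by
        rw [hd, abs_div, abs_of_pos (by linarith : 0 < s - k), div_le_div_iff₀ (by linarith)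
          (by linarith)]
        nlinarith [hDk i, abs_nonneg (D i)]
      calc d ^ 2 = |d| ^ 2 := (sq_abs d).symm
        _ ≤ (2 * K / s) ^ 2 := pow_le_pow_left₀ (abs_nonneg d) this 2
        _ = 4 * K ^ 2 / s ^ 2 := by ring
    have hd2 : d ^ 4 ≤ 16 * K ^ 4 / s ^ 4 := by
      calc d ^ 4 = (d ^ 2) ^ 2 := by ring
        _ ≤ (4 * K ^ 2 / s ^ 2) ^ 2 := pow_le_pow_left₀ (sq_nonneg d) hd1 2
        _ = 16 * K ^ 4 / s ^ 4 := by ring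
    have hs0 : 0 < s := by linarith
    have hamgm : 8 * y i ^ 2 * d ^ 2 ≤ y i ^ 4 * (1 / (2 * s)) + 32 * s * d ^ 4 := by
      have h1 : y i ^ 4 * (1 / (2 * s)) + 32 * s * d ^ 4 - 8 * y i ^ 2 * d ^ 2 =
          (y i ^ 2 - 8 * s * d ^ 2) ^ 2 / (2 * s) := by
        field_simp
        ring
      have h2 : 0 ≤ (y i ^ 2 - 8 * s * d ^ 2) ^ 2 / (2 * s) := by positivity
      linarith
    have hfour : (32 * s + 3) * d ^ 4 ≤ 560 * K ^ 4 / s ^ 3 := by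
      calc (32 * s + 3) * d ^ 4 ≤ (35 * s) * (16 * K ^ 4 / s ^ 4) := by
            gcongr
            linarith
        _ = 560 * K ^ 4 / s ^ 3 := by
            field_simp
            ring
    have h5 : 4 * y i ^ 3 * d = 4 * y i ^ 3 * D i / (s - k) := by rw [hd, mul_div_assoc]
    rw [← h5]
    change y i ^ 4 + 4 * y i ^ 3 * d + 8 * y i ^ 2 * d ^ 2 + 3 * d ^ 4 ≤ _
    linarith
  have hlin : ∑ i ∈ I, 4 * y i ^ 3 * D i / (s - k) ≤ 0 := by
    rw [← sum_div]
    refine div_nonpos_of_nonpos_of_nonneg ?_ (by linarith)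
    rw [sum_comm] at hT
    refine le_trans (sum_congr rfl fun i _ => ?_).le hT
    rw [hD, mul_sum]
  have hsum : deficit p I a (U \ T) ≤
      deficit p I a U * (1 + 1 / (2 * s)) + #I * (560 * K ^ 4 / s ^ 3) := by
    unfold deficit
    rw [hsk]
    refine (sum_le_sum hterm).trans ?_
    rw [sum_add_distrib, sum_add_distrib, ← sum_mul, sum_const, nsmul_eq_mul]
    linarith
  have hs0 : 0 < s := by linarith
  calc deficit p I a (U \ T) ≤ deficit p I a U * (1 + 1 / (2 * s)) +
        #I * (560 * K ^ 4 / s ^ 3) := hsum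
    _ ≤ 5000 * K ^ 4 / s * (1 + 1 / (2 * s)) + 4 * s * (560 * K ^ 4 / s ^ 3) := by gcongr
    _ = 5000 * K ^ 4 * (1 / s + 948 / 1000 / s ^ 2) := by
      field_simp
      ring
    _ ≤ 5000 * K ^ 4 * (1 / (s - k)) := by
      refine mul_le_mul_of_nonneg_left ?_ (by positivity)
      have h1 : 1 / (s - 1) ≤ 1 / (s - k) :=
        one_div_le_one_div_of_le (by linarith) (by linarith)
      refine le_trans ?_ h1
      rw [div_add_div _ _ (by positivity) (by positivity),
        div_le_div_iff₀ (by positivity) (by linarith)]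
      nlinarith [pow_pos hs0 2, pow_pos hs0 3]
    _ = 5000 * K ^ 4 / (s - k) := by ring

end Potential

section Balanced

variable {V : Type*} {G : V → V → Prop}

lemma deficit_mono {ι : Type*} {p : ℝ} {I J : Finset ι} (h : I ⊆ J) (a : ι → V → ℝ)
    (U : Finset V) : deficit p I a U ≤ deficit p J a U :=
  sum_le_sum_of_subset_of_nonneg h fun _ _ _ => by positivity

/-- The indicator functions of the outneighbourhoods and the inneighbourhoods. -/
noncomputable def adjIndicator (G : V → V → Prop) : V ⊕ V → V → ℝ :=
  Sum.elim (fun v u => if G v u then 1 else 0) (fun v u => if G u v then 1 else 0)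

lemma adjIndicator_mem_Icc (i : V ⊕ V) (u : V) : adjIndicator G i u ∈ Set.Icc 0 1 := by
  rcases i with v | v <;> simp only [adjIndicator, Sum.elim_inl, Sum.elim_inr] <;> split_ifs <;>
    simp

lemma sum_adjIndicator_inl (U : Finset V) (v : V) :
    ∑ u ∈ U, adjIndicator G (Sum.inl v) u = #(nbr G U v) := by
  simp [adjIndicator, nbr]

lemma sum_adjIndicator_inr (U : Finset V) (v : V) :
    ∑ u ∈ U, adjIndicator G (Sum.inr v) u = #(nbr (flip G) U v) :=
  sum_adjIndicator_inl (G := flip G) U v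

/-- The degrees of the vertices of `W` into `U` are on average close to at least half of `|U|`. -/
def Balanced (G : V → V → Prop) (K : ℕ) (c : ℝ) (W U : Finset V) : Prop :=
  deficit (1 / 2 - c / 2) (W.disjSum W) (adjIndicator G) U ≤ 5000 * (K : ℝ) ^ 4 / #U

/-- Sets of at least `M` vertices are large enough for the constructions with sets of at most `K`
vertices in graphs whose degrees deviate from one half by at most a proportion `c`. -/
structure IsThreshold (K : ℕ) (c : ℝ) (M : ℕ) : Prop where
  pos : 0 < c
  two_mul_le : 2 * K + 2 ≤ M
  deficit_le : 5000 * (K : ℝ) ^ 4 ≤ (c / 2) ^ 4 * M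
  mul_pow_le : ∀ n : ℕ, M ≤ n → 12000 * K * (2 ^ K * (2 * c * n + 1)) ≤ (n : ℝ)

lemma exists_isThreshold (K : ℕ) : ∃ c M, IsThreshold K c M := by
  set D : ℝ := 12000 * K * 2 ^ K + 1 with hD
  have hD0 : 0 < D := by positivity
  refine ⟨1 / (4 * D), max (2 * K + 2) (max ⌈5000 * (K : ℝ) ^ 4 / (1 / (4 * D) / 2) ^ 4⌉₊
    ⌈2 * D⌉₊), by positivity, le_max_left _ _, ?_, fun n hn => ?_⟩
  · rw [← div_le_iff₀' (by positivity)]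
    refine (Nat.le_ceil _).trans (Nat.cast_le.2 ?_)
    exact (le_max_left _ _).trans (le_max_right _ _)
  · have h1 : 2 * D ≤ n := (Nat.le_ceil _).trans
      (Nat.cast_le.2 (((le_max_right _ _).trans (le_max_right _ _)).trans hn))
    have h2 : 2 * (1 / (4 * D)) * n + 1 = (n / D + 2) / 2 := by
      field_simp
      ring
    calc 12000 * K * (2 ^ K * (2 * (1 / (4 * D)) * n + 1)) =
          12000 * K * 2 ^ K * ((n / D + 2) / 2) := by rw [h2]; ring
      _ ≤ D * ((n / D + 2) / 2) := by gcongr; linarith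
      _ = (n + 2 * D) / 2 := by field_simp
      _ ≤ n := by linarith

lemma IsThreshold.mul_pow_le_of_le {K M k n : ℕ} {b c : ℝ} (h : IsThreshold K c M) (hk : k ≤ K)
    (hn : M ≤ n) (hb : b ≤ 12000) : b * k * (2 ^ k * (2 * c * n + 1)) ≤ (n : ℝ) := by
  have := h.pos
  refine le_trans ?_ (h.mul_pow_le n hn)
  gcongr
  norm_num

lemma Balanced.mono {K : ℕ} {c : ℝ} {W W' U : Finset V} (h : Balanced G K c W U) (hW : W' ⊆ W) :
    Balanced G K c W' U :=
  (deficit_mono (disjSum_mono hW hW) _ _).trans h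

lemma Balanced.nearRegular {K M : ℕ} {c : ℝ} {W U : Finset V} {v : V} (h : Balanced G K c W U)
    (hM : IsThreshold K c M) (hU : M ≤ #U) (hv : v ∈ W) : NearRegular G c U v := by
  have hc := hM.pos
  have hU' : (M : ℝ) ≤ #U := by exact_mod_cast hU
  have hU0 : (0 : ℝ) < #U := by
    have := hM.two_mul_le
    exact_mod_cast (by omega : 0 < #U)
  have key : ∀ i ∈ W.disjSum W,
      (1 / 2 - c) * (#U : ℝ) ≤ ∑ u ∈ U, adjIndicator G i u := by
    intro i hi
    have h1 := single_le_sum (f := fun i => max (1 / 2 - c / 2 -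
      (∑ u ∈ U, adjIndicator G i u) / #U) 0 ^ 4) (fun i _ => by positivity) hi
    have h2 : 5000 * (K : ℝ) ^ 4 / #U ≤ (c / 2) ^ 4 := by
      rw [div_le_iff₀ hU0]
      refine hM.deficit_le.trans ?_
      gcongr
    have h3 := le_of_pow_le_pow_left₀ four_ne_zero (by positivity) ((h1.trans h).trans h2)
    have h4 : 1 / 2 - c ≤ (∑ u ∈ U, adjIndicator G i u) / #U := by
      linarith [le_max_left (1 / 2 - c / 2 - (∑ u ∈ U, adjIndicator G i u) / #U) 0]
    rwa [le_div_iff₀ hU0] at h4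
  constructor
  · rw [← sum_adjIndicator_inl]
    exact key _ (inl_mem_disjSum.2 hv)
  · rw [← sum_adjIndicator_inr]
    exact key _ (inr_mem_disjSum.2 hv)

lemma balanced_of_nearRegular {K : ℕ} {c : ℝ} {W U : Finset V} (hU : U.Nonempty)
    (h : ∀ v ∈ W, NearRegular G (c / 2) U v) : Balanced G K c W U := by
  have hU0 : (0 : ℝ) < #U := by exact_mod_cast hU.card_pos
  refine le_trans (sum_nonpos fun i hi => ?_) (by positivity : (0 : ℝ) ≤ _)
  have : (1 / 2 - c / 2) * (#U : ℝ) ≤ ∑ u ∈ U, adjIndicator G i u := by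
    rcases i with v | v
    · rw [sum_adjIndicator_inl]
      exact (h v (inl_mem_disjSum.1 hi)).1
    · rw [sum_adjIndicator_inr]
      exact (h v (inr_mem_disjSum.1 hi)).2
  rw [← le_div_iff₀ hU0] at this
  rw [max_eq_right (by linarith)]
  norm_num

lemma Balanced.exists_sdiff {K : ℕ} {c : ℝ} {W U : Finset V} {Q : List V → Prop}
    (h : Balanced G K c W U) (hK : 1 ≤ K) (hW : #W ≤ 2 * #U) (hU : 2 * K ≤ #U)
    (hQ : ∀ l, Q l → l.Nodup ∧ l ≠ [] ∧ l.length ≤ K ∧ ∀ u ∈ l, u ∈ U)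
    (hex : ∀ g : V → ℝ, ∑ u ∈ U, g u ≤ 0 → ∃ l, Q l ∧ (l.map g).sum ≤ 0) :
    ∃ l, Q l ∧ Balanced G K c W (U \ l.toFinset) := by
  obtain ⟨_, -, -, -, ⟨l, hl, rfl⟩, hbal⟩ := exists_deficit_sdiff_le
    (P := fun T => ∃ l, Q l ∧ l.toFinset = T) adjIndicator_mem_Icc
    (by exact_mod_cast hK) (by
      rw [card_disjSum]
      exact_mod_cast (by omega : #W + #W ≤ 4 * #U)) (by exact_mod_cast hU) h (by
      intro g hg
      obtain ⟨l, hl, hsum⟩ := hex g hg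
      obtain ⟨hnd, hne, hlen, hmem⟩ := hQ l hl
      refine ⟨l.toFinset, fun u hu => hmem u (List.mem_toFinset.1 hu),
        List.toFinset_nonempty_iff _ |>.2 hne, ?_, ⟨l, hl, rfl⟩, ?_⟩
      · rw [List.toFinset_card_of_nodup hnd]
        exact_mod_cast hlen
      · rwa [List.sum_toFinset g hnd])
  exact ⟨l, hl, hbal⟩

lemma card_sdiff_toFinset {U : Finset V} {l : List V} (hl : l.Nodup) (h : ∀ u ∈ l, u ∈ U) :
    #(U \ l.toFinset) + l.length = #U := by
  rw [← List.toFinset_card_of_nodup hl]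
  exact card_sdiff_add_card_eq_card fun u hu => h u (List.mem_toFinset.1 hu)

/-- In a balanced graph there are connecting paths of any given length between any two vertices
whose removal leaves a balanced graph. -/
lemma Balanced.exists_connection (hG : IsOriented G) {K M : ℕ} {c : ℝ} (hK : 328 ≤ K)
    (hM : IsThreshold K c M) {r : ℕ} (hr : 164 ≤ r) {U : Finset V} {x y : V}
    (h : Balanced G K c (insert x (insert y U)) U) (hU : r + M ≤ #U) :
    ∃ q, IsPathIn G U r q ∧ (∀ u ∈ q.head?, G y u) ∧ (∀ u ∈ q.getLast?, G u x) ∧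
      Balanced G K c (U \ q.toFinset) (U \ q.toFinset) := by
  induction r using Nat.strong_induction_on generalizing U y with
  | _ r ih =>
    have hK2 := hM.two_mul_le
    have hne : U.Nonempty := by
      rw [← card_pos]
      omega
    have hreg : ∀ u ∈ insert x (insert y U), NearRegular G c U u := fun u hu =>
      h.nearRegular hM (by omega) hu
    have hstep : ∀ k, 164 ≤ k → k < 328 → ∃ q, (IsPathIn G U k q ∧ (∀ u ∈ q.head?, G y u) ∧
        (∀ u ∈ q.getLast?, G u x)) ∧
          Balanced G K c (insert x (insert y U)) (U \ q.toFinset) := by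
      intro k hk hk'
      refine h.exists_sdiff (by omega) ?_ (by omega) (fun l hl => ?_) fun g hg => ?_
      · have h1 := card_insert_le x (insert y U)
        have h2 := card_insert_le y U
        omega
      · have hlen := hl.1.length_eq
        refine ⟨hl.1.nodup, ?_, by omega, hl.1.mem⟩
        rintro rfl
        simp only [List.length_nil] at hlen
        omega
      · obtain ⟨q, hq, hhead, hlast, hsum⟩ := exists_connection_sum_nonpos hG hM.pos.le
          (fun u hu => hreg u (mem_insert_of_mem (mem_insert_of_mem hu)))
          (hreg x (mem_insert_self _ _)) (hreg y (mem_insert_of_mem (mem_insert_self _ _)))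
          (by exact_mod_cast hk) hne
          (hM.mul_pow_le_of_le (by omega : k ≤ K) (by omega) (by norm_num)) g hg
        exact ⟨q, ⟨hq, hhead, hlast⟩, hsum⟩
    rcases lt_or_ge r 328 with hr' | hr'
    · obtain ⟨q, ⟨hq, hhead, hlast⟩, hbal⟩ := hstep r hr hr'
      exact ⟨q, hq, hhead, hlast, hbal.mono
        (sdiff_subset.trans ((subset_insert _ _).trans (subset_insert _ _)))⟩
    · obtain ⟨q, ⟨hq, hhead, -⟩, hbal⟩ := hstep 164 le_rfl (by norm_num)
      have hqne : q ≠ [] := by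
        rintro rfl
        exact absurd hq.length_eq (by simp)
      have hcard := card_sdiff_toFinset hq.nodup hq.mem
      rw [hq.length_eq] at hcard
      have hz := hq.mem _ (List.getLast_mem hqne)
      obtain ⟨q', hq', hhead', hlast', hbal'⟩ := ih (r - 164) (by omega) (by omega)
        (U := U \ q.toFinset) (y := q.getLast hqne) (hbal.mono (insert_subset_insert _ (by
          refine insert_subset (mem_insert_of_mem hz) (sdiff_subset.trans (subset_insert _ _)))))
        (by omega)
      have hq'ne : q' ≠ [] := by
        rintro rfl
        have h0 := hq'.length_eq
        simp only [List.length_nil] at h0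
        omega
      have hmem' : ∀ u ∈ q', u ∈ U ∧ u ∉ q := fun u hu => by
        simpa using hq'.mem u hu
      refine ⟨q ++ q', ⟨?_, ?_, ?_, ?_⟩, ?_, ?_, ?_⟩
      · rw [List.length_append, hq.length_eq, hq'.length_eq]
        omega
      · refine List.nodup_append.2 ⟨hq.nodup, hq'.nodup, ?_⟩
        rintro a ha b hb rfl
        exact (hmem' a hb).2 ha
      · intro u hu
        rcases List.mem_append.1 hu with hu | hu
        · exact hq.mem u hu
        · exact (hmem' u hu).1
      · refine List.isChain_append.2 ⟨hq.chain, hq'.chain, fun a ha b hb => ?_⟩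
        rw [List.getLast?_eq_some_getLast hqne, Option.mem_def, Option.some.injEq] at ha
        exact ha ▸ hhead' b hb
      · rwa [List.head?_append_of_ne_nil _ hqne]
      · rwa [List.getLast?_append_of_ne_nil _ hq'ne]
      · rwa [List.toFinset_append, ← sup_eq_union, ← sdiff_sdiff_left]

lemma Balanced.exists_short_cycle (hG : IsOriented G) {K M : ℕ} {c : ℝ}
    (hM : IsThreshold K c M) {j : ℕ} (hj : 3 ≤ j) (hjK : j ≤ K) {U : Finset V}
    (h : Balanced G K c U U) (hU : M ≤ #U) :
    ∃ l, IsCycleIn G U j l ∧ Balanced G K c U (U \ l.toFinset) := by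
  have hK2 := hM.two_mul_le
  refine h.exists_sdiff (by omega) (by omega) (by omega) (fun l hl => ?_) fun g hg => ?_
  · have hlen := hl.length_eq
    refine ⟨hl.nodup, ?_, by omega, hl.mem⟩
    rintro rfl
    simp only [List.length_nil] at hlen
    omega
  · exact exists_cycle_sum_nonpos hG hM.pos.le (fun u hu => h.nearRegular hM hU hu) hj
      (card_pos.1 (by omega)) (hM.mul_pow_le_of_le hjK hU le_rfl) g hg

/-- A balanced graph contains a cycle of any prescribed length whose removal leaves a balanced
graph, as long as enough vertices remain. -/
lemma Balanced.exists_cycle (hG : IsOriented G) {K M : ℕ} {c : ℝ} (hK : 328 ≤ K)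
    (hM : IsThreshold K c M) {j : ℕ} (hj : 3 ≤ j) {U : Finset V} (h : Balanced G K c U U)
    (hU : j + M ≤ #U) :
    ∃ l, IsCycleIn G U j l ∧ Balanced G K c (U \ l.toFinset) (U \ l.toFinset) := by
  rcases lt_or_ge j 167 with hj' | hj'
  · obtain ⟨l, hl, hbal⟩ := h.exists_short_cycle hG hM hj (by omega) (by omega)
    exact ⟨l, hl, hbal.mono sdiff_subset⟩
  obtain ⟨t, ht, hbal⟩ := h.exists_short_cycle hG hM le_rfl (by omega) (by omega)
  have hcard := card_sdiff_toFinset ht.nodup ht.mem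
  rw [ht.length_eq] at hcard
  obtain ⟨x, z, y, rfl⟩ := List.length_eq_three.1 ht.length_eq
  obtain ⟨x', l', hl', hchain⟩ := ht.closed
  obtain ⟨rfl, rfl⟩ := List.cons.inj hl'
  simp only [List.cons_append, List.nil_append, List.isChain_cons_cons, List.isChain_singleton,
    and_true] at hchain
  obtain ⟨hxz, hzy, hyx⟩ := hchain
  obtain ⟨q, hq, hhead, hlast, hbal'⟩ := Balanced.exists_connection hG hK hM
    (r := j - 3) (by omega) (x := x) (y := y) (hbal.mono
      (insert_subset (ht.mem x (by simp)) (insert_subset (ht.mem y (by simp)) sdiff_subset)))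
    (by omega)
  have hmem : ∀ u ∈ q, u ∈ U ∧ u ∉ [x, z, y] := fun u hu => by
    have := hq.mem u hu
    rwa [mem_sdiff, List.mem_toFinset] at this
  refine ⟨[x, z, y] ++ q, ⟨?_, ?_, ?_, x, z :: y :: q, rfl, ?_⟩, ?_⟩
  · rw [List.length_append, hq.length_eq, ht.length_eq]
    omega
  · refine List.nodup_append.2 ⟨ht.nodup, hq.nodup, ?_⟩
    rintro a ha b hb rfl
    exact (hmem a hb).2 ha
  · intro u hu
    rcases List.mem_append.1 hu with hu | hu
    · exact ht.mem u hu
    · exact (hmem u hu).1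
  · refine List.isChain_cons_cons.2 ⟨hxz, List.isChain_cons_cons.2 ⟨hzy, ?_⟩⟩
    exact isChain_cons_append_singleton hq.chain hhead hlast fun _ => hyx
  · rwa [List.toFinset_append, ← sup_eq_union, ← sdiff_sdiff_left]

lemma Balanced.exists_disjoint_cycles (hG : IsOriented G) {K M : ℕ} {c : ℝ} (hK : 328 ≤ K)
    (hM : IsThreshold K c M) {ι : Type*} {L : ι → ℕ} (hL : ∀ i, 3 ≤ L i) (I : Finset ι)
    {U : Finset V} (h : Balanced G K c U U) (hU : ∑ i ∈ I, L i + M ≤ #U) :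
    ∃ f : ι → List V, (∀ i ∈ I, IsCycleIn G U (L i) (f i)) ∧
      ∀ i ∈ I, ∀ j ∈ I, i ≠ j → ∀ u ∈ f i, u ∉ f j := by
  induction I using Finset.induction_on generalizing U with
  | empty => exact ⟨fun _ => [], by simp, by simp⟩
  | insert i I hi ih =>
    rw [sum_insert hi] at hU
    obtain ⟨l, hl, hbal⟩ := h.exists_cycle hG hK hM (hL i) (by omega)
    have hcard := card_sdiff_toFinset hl.nodup hl.mem
    rw [hl.length_eq] at hcard
    obtain ⟨f, hf, hdisj⟩ := ih hbal (by omega)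
    have hne : ∀ j ∈ I, j ≠ i := fun j hj hji => hi (hji ▸ hj)
    have hfl : ∀ j ∈ I, ∀ u ∈ f j, u ∉ l := fun j hj u hu hul => by
      have := (hf j hj).mem u hu
      rw [mem_sdiff, List.mem_toFinset] at this
      exact this.2 hul
    refine ⟨Function.update f i l, fun j hj => ?_, fun j hj k hk hjk u hu => ?_⟩
    · rcases mem_insert.1 hj with rfl | hj
      · rwa [Function.update_self]
      · rw [Function.update_of_ne (hne j hj)]
        exact (hf j hj).mono sdiff_subset
    · rcases mem_insert.1 hj with rfl | hjI <;> rcases mem_insert.1 hk with rfl | hkI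
      · exact absurd rfl hjk
      · rw [Function.update_self] at hu
        rw [Function.update_of_ne (hne k hkI)]
        exact fun hu' => hfl k hkI u hu' hu
      · rw [Function.update_of_ne (hne j hjI)] at hu
        rw [Function.update_self]
        exact hfl j hjI u hu
      · rw [Function.update_of_ne (hne j hjI)] at hu
        rw [Function.update_of_ne (hne k hkI)]
        exact hdisj j hjI k hkI hjk u hu

/-- Reading a cycle off cyclically. -/
lemma IsCycleIn.exists_zmod {U : Finset V} {j : ℕ} {l : List V} (h : IsCycleIn G U j l) :
    ∃ g : ZMod j → V, Function.Injective g ∧ (∀ a, g a ∈ l) ∧ ∀ a, G (g a) (g (a + 1)) := by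
  obtain ⟨x, l', rfl, hchain⟩ := h.closed
  obtain rfl := h.length_eq
  refine ⟨fun a => (x :: l')[a.val]'(ZMod.val_lt a), fun a b hab => ?_,
    fun a => List.getElem_mem _, fun a => ?_⟩
  · exact ZMod.val_injective _ ((h.nodup.getElem_inj_iff).1 hab)
  · have ha := ZMod.val_lt a
    rw [← List.cons_append, List.isChain_iff_getElem] at hchain
    have h1 := hchain a.val (by simpa using ha)
    rw [List.getElem_append_left ha] at h1
    have hval : (a + 1).val = (a.val + 1) % (x :: l').length := by
      rw [ZMod.val_add, ZMod.val_one_eq_one_mod, Nat.add_mod_mod]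
    rcases Nat.lt_or_ge (a.val + 1) (x :: l').length with hlt | hge
    · rw [List.getElem_append_left hlt] at h1
      simpa only [hval, Nat.mod_eq_of_lt hlt] using h1
    · have heq : a.val + 1 = (x :: l').length := by omega
      rw [List.getElem_append_right hge] at h1
      simpa only [hval, heq, Nat.mod_self, List.getElem_cons_zero, List.getElem_singleton] using h1

end Balanced

end OrientedGraph

/-- Keevash–Sudakov: there exist positive constants c, C and an integer n₀ such that every
oriented graph on n ≥ n₀ vertices with minimum semidegree at least (1/2 − c)n contains,
for any integers n₁, …, n_t ≥ 3 with n₁ + ⋯ + n_t ≤ n − C, pairwise vertex-disjoint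
directed cycles of lengths n₁, …, n_t. -/
theorem vertex_disjoint_prescribed_cycles :
    ∃ (c C : ℝ) (n₀ : ℕ), 0 < c ∧ 0 < C ∧
      ∀ (V : Type) [Fintype V] (G : V → V → Prop),
        IsOriented G →
        n₀ ≤ Fintype.card V →
        (∀ x : V, (1 / 2 - c) * (Fintype.card V : ℝ) ≤ (outDeg G x : ℝ) ∧
          (1 / 2 - c) * (Fintype.card V : ℝ) ≤ (inDeg G x : ℝ)) →
        ∀ (t : ℕ) (L : Fin t → ℕ), (∀ i, 3 ≤ L i) →
          ((∑ i, L i : ℕ) : ℝ) ≤ (Fintype.card V : ℝ) - C →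
          ∃ g : (i : Fin t) → ZMod (L i) → V,
            (∀ i, Function.Injective (g i)) ∧
            (∀ i j : Fin t, i ≠ j → ∀ a b, g i a ≠ g j b) ∧
            ∀ i, ∀ a, G (g i a) (g i (a + 1)) := by
  classical
  obtain ⟨c, M, hM⟩ := OrientedGraph.exists_isThreshold 328
  have hM2 := hM.two_mul_le
  refine ⟨c / 2, M, M, by linarith [hM.pos], by exact_mod_cast (by omega : 0 < M), ?_⟩
  intro V _ G hG hn hdeg t L hL hsum
  have hcard : ∀ (F : V → V → Prop) (v : V),
      Nat.card {u : V // F v u} = (OrientedGraph.nbr F Finset.univ v).card := by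
    intro F v
    rw [Nat.card_eq_fintype_card, Fintype.card_subtype, OrientedGraph.nbr]
  have hbal : OrientedGraph.Balanced G 328 c Finset.univ Finset.univ := by
    refine OrientedGraph.balanced_of_nearRegular
      (Finset.card_pos.1 (by rw [Finset.card_univ]; omega)) fun v _ => ?_
    obtain ⟨hout, hin⟩ := hdeg v
    constructor
    · rwa [Finset.card_univ, ← hcard]
    · rwa [Finset.card_univ, ← hcard]
  obtain ⟨f, hf, hdisj⟩ := hbal.exists_disjoint_cycles hG le_rfl hM hL Finset.univ (by
    rw [Finset.card_univ]
    exact_mod_cast (by linarith : ((∑ i, L i : ℕ) : ℝ) + M ≤ Fintype.card V))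
  choose g hinj hmem hadj using fun i => (hf i (Finset.mem_univ i)).exists_zmod
  refine ⟨g, hinj, fun i j hij a b hab => ?_, hadj⟩
  exact hdisj i (Finset.mem_univ i) j (Finset.mem_univ j) hij _ (hmem i a) (hab ▸ hmem j b)
end
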